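/- arXiv:2205.07498 — 2 statements merged into one kernel-verified Lean document; each statement's English description precedes it below -/
import Mathlib

section
/- Every flow-critical ℤ₃-bordered graph (G, β) satisfies |E(G)| ≤ 4|V(G)| − 7. -/
/-!
The theorem holds because a flow-critical `ℤ₃`-bordered graph has no connected subgraph on two or
more vertices in which every boundary of total zero is realized by a nowhere-zero flow: contracting
the vertex set `A` of such a subgraph leaves a graph with a nowhere-zero flow, and the boundary still
missing on `A` can be supplied by the edges inside `A`. As the nonzero elements of `ℤ₃` are `1` and
`-1`, a nowhere-zero flow is the same as an orientation whose net outflow is prescribed modulo `3`.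
It therefore suffices to find a subgraph in which all boundaries are realized by orientations
whenever there are at least `4n - 6` edges.

A vertex set `A` with `|A| ≥ 2` that is minimal subject to spanning at least `4|A| - 6` edges induces
a multigraph in the class `Dense`: at least `4|W| - 6` edges in total, and at most `4|B| - 4` edges
inside each proper nonempty vertex set `B`. `Dense.sol` shows by induction on the number of vertices
that all boundaries are realized in this class. If some proper set of at least two vertices spans at
least `4|B| - 6` edges, take one maximizing `e(B) - 4|B|`; both it and the quotient by it are in the
class again (`Dense.contract`). Otherwise, a vertex of degree five and boundary zero is removed by
orienting three of its edges outwards and lifting the other two (`Dense.five`). If there is no such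
vertex either, each vertex set satisfies the degree condition `d(A) ≥ 4 + |τ(A)|` of Lovász,
Thomassen, Wu and Zhang, whose theorem provides the orientation.

That theorem (`extension`) is proved here in its stronger form, with a special vertex of small degree
whose edges are oriented in advance, by induction on the size of the graph. A vertex set for which the
degree condition is nearly tight is contracted, the quotient is oriented, and the result is extended
to the inside of the set with the complement as the special vertex. If no set of two or more vertices
is nearly tight, only the conditions at single vertices matter: vertices of degree four and boundary
zero are lifted (`Ext.four`), and an edge is deleted whenever both of its ends allow it (`Ext.del`).
In the remaining case every vertex has `τ` of the same sign, and then the arcs at the special vertex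
are removed or traded for reversed ones until there is none left (`Ext.pos`); an arbitrary vertex can
then be made special (`Ext.final`).

Multigraphs are multisets of edges in `Sym2 α` together with a finite vertex set `W`; contraction
maps the edges along the vertex map that sends a set to one of its elements. The special vertex is
not an element of `α`: the heads and the tails of its arcs are recorded in multisets `P` and `Q`.
-/

open scoped Classical

section FlowDefs

variable {V : Type} [Fintype V] [DecidableEq V] {A : Type} [AddCommGroup A]

/-- `β` is an `A`-boundary for `G`: its values sum to zero on every connected component. -/
def IsBoundary (G : SimpleGraph V) (β : V → A) : Prop :=
  ∀ x : V, ∑ v ∈ Finset.univ.filter (fun v => G.Reachable v x), β v = 0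

/-- `(G, β)` has a nowhere-zero flow: an antisymmetric function on ordered adjacent pairs,
never zero on edges, whose out-sum at each vertex `u` is `β u`. -/
def HasNZFlow (G : SimpleGraph V) (β : V → A) : Prop :=
  ∃ f : V → V → A,
    (∀ u v, G.Adj u v → f u v = - f v u) ∧
    (∀ u v, G.Adj u v → f u v ≠ 0) ∧
    (∀ u : V, ∑ v ∈ Finset.univ.filter (fun v => G.Adj u v), f u v = β u)

/-- `(G, β)/P` has a nowhere-zero flow, where the partition `P` of `V(G)` is given as a setoid:
an antisymmetric, nowhere-zero function on the ordered adjacent pairs lying in distinct parts,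
such that for every part, the sum of the values leaving the part is the sum of `β` on it. -/
def HasNZFlowQuot (G : SimpleGraph V) (β : V → A) (P : Setoid V) : Prop :=
  ∃ f : V → V → A,
    (∀ u v, G.Adj u v → ¬ P.r u v → f u v = - f v u) ∧
    (∀ u v, G.Adj u v → ¬ P.r u v → f u v ≠ 0) ∧
    (∀ x : V,
      ∑ u ∈ Finset.univ.filter (fun u => P.r u x),
        ∑ v ∈ Finset.univ.filter (fun v => G.Adj u v ∧ ¬ P.r u v), f u v
      = ∑ v ∈ Finset.univ.filter (fun v => P.r v x), β v)

/-- The partition `P` is `G`-connected: every part induces a connected subgraph of `G`. -/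
def PartsConnected (G : SimpleGraph V) (P : Setoid V) : Prop :=
  ∀ x : V, (G.induce {v | P.r v x}).Connected

/-- `(G, β)` is a flow-critical `A`-bordered graph: `β` is an `A`-boundary, `G` is connected,
`(G, β)` has no nowhere-zero flow, but `(G, β)/P` has one for every `G`-connected partition `P`
with at least one part of size at least two. -/
def FlowCritical (G : SimpleGraph V) (β : V → A) : Prop :=
  IsBoundary G β ∧ G.Connected ∧ ¬ HasNZFlow G β ∧
  ∀ P : Setoid V, PartsConnected G P → (∃ x y : V, x ≠ y ∧ P.r x y) →
    HasNZFlowQuot G β P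

end FlowDefs

/-! ### Orientations with prescribed boundary -/

set_option linter.unusedSectionVars false

namespace Z3Flow

section Orientations

variable {α : Type} [Fintype α]

/-- The characteristic vector of a vertex, with values in `ℤ₃`. -/
noncomputable def dl (x : α) : α → ZMod 3 := Pi.single x 1

/-- Net outflow at each vertex of a multiset of arcs, modulo `3`. -/
noncomputable def bd (D : Multiset (α × α)) : α → ZMod 3 :=
  (D.map fun p => dl p.1 - dl p.2).sum

/-- The multigraph with edge multiset `E` (parallel edges and loops allowed) has an orientation
whose net outflow is congruent to `γ` modulo `3` at every vertex. -/
def Sol (E : Multiset (Sym2 α)) (γ : α → ZMod 3) : Prop :=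
  ∃ D : Multiset (α × α), D.map (fun p => s(p.1, p.2)) = E ∧ bd D = γ

/-- `cr A e` is `1` if exactly one end of `e` lies in `A`, and `0` otherwise. -/
noncomputable def cr (A : Finset α) : Sym2 α → ℕ :=
  Sym2.lift ⟨fun u v => if (u ∈ A ↔ v ∈ A) then 0 else 1, by
    intro u v; simp only [Iff.comm]⟩

/-- `ins A e` is `1` if both ends of `e` lie in `A`, and `0` otherwise. -/
noncomputable def ins (A : Finset α) : Sym2 α → ℕ :=
  Sym2.lift ⟨fun u v => if (u ∈ A ∧ v ∈ A) then 1 else 0, by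
    intro u v; simp only [And.comm]⟩

/-- Number of edges leaving `A`. -/
noncomputable def cut (A : Finset α) (E : Multiset (Sym2 α)) : ℕ := (E.map (cr A)).sum

/-- Number of edges inside `A`. -/
noncomputable def inn (A : Finset α) (E : Multiset (Sym2 α)) : ℕ := (E.map (ins A)).sum

/-- Number of members of the multiset `P` lying in `A`. -/
noncomputable def cnt (A : Finset α) (P : Multiset α) : ℕ :=
  (P.map fun x => if x ∈ A then 1 else 0).sum

@[simp] lemma cr_mk (A : Finset α) (u v : α) :
    cr A s(u, v) = if (u ∈ A ↔ v ∈ A) then 0 else 1 := rfl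

@[simp] lemma ins_mk (A : Finset α) (u v : α) :
    ins A s(u, v) = if (u ∈ A ∧ v ∈ A) then 1 else 0 := rfl

@[simp] lemma cut_zero (A : Finset α) : cut A 0 = 0 := by simp [cut]
@[simp] lemma cut_cons (A : Finset α) (e) (E) : cut A (e ::ₘ E) = cr A e + cut A E := by
  simp [cut]
@[simp] lemma cut_add (A : Finset α) (E F) : cut A (E + F) = cut A E + cut A F := by
  simp [cut]
@[simp] lemma inn_zero (A : Finset α) : inn A 0 = 0 := by simp [inn]
@[simp] lemma inn_cons (A : Finset α) (e) (E) : inn A (e ::ₘ E) = ins A e + inn A E := by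
  simp [inn]
@[simp] lemma inn_add (A : Finset α) (E F) : inn A (E + F) = inn A E + inn A F := by
  simp [inn]
@[simp] lemma cnt_zero (A : Finset α) : cnt A 0 = 0 := by simp [cnt]
@[simp] lemma cnt_cons (A : Finset α) (x) (P) :
    cnt A (x ::ₘ P) = (if x ∈ A then 1 else 0) + cnt A P := by
  simp [cnt]
@[simp] lemma cnt_add (A : Finset α) (P Q) : cnt A (P + Q) = cnt A P + cnt A Q := by
  simp [cnt]

lemma sum_dl (A : Finset α) (x : α) : ∑ y ∈ A, dl x y = if x ∈ A then 1 else 0 := by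
  unfold dl
  exact Finset.sum_pi_single' x 1 A

lemma dl_self (x : α) : dl x x = 1 := by simp [dl]

lemma dl_ne {x y : α} (h : y ≠ x) : dl x y = 0 := by simp [dl, h]

@[simp] lemma bd_zero : bd (0 : Multiset (α × α)) = 0 := by simp [bd]
@[simp] lemma bd_cons (p : α × α) (D) : bd (p ::ₘ D) = dl p.1 - dl p.2 + bd D := by simp [bd]
@[simp] lemma bd_add (D D' : Multiset (α × α)) : bd (D + D') = bd D + bd D' := by simp [bd]

lemma sol_zero : Sol (0 : Multiset (Sym2 α)) 0 := ⟨0, by simp, by simp⟩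

lemma sol_zero_inv {γ : α → ZMod 3} (h : Sol 0 γ) : γ = 0 := by
  obtain ⟨D, h1, h2⟩ := h
  rw [Multiset.map_eq_zero] at h1
  subst h1
  simpa using h2.symm

lemma sol_cons {u v : α} {E} {γ : α → ZMod 3} (h : Sol E (γ - dl u + dl v)) :
    Sol (s(u, v) ::ₘ E) γ := by
  obtain ⟨D, h1, h2⟩ := h
  refine ⟨(u, v) ::ₘ D, by simp [h1], ?_⟩
  simp [h2]

lemma sol_cons_inv {e : Sym2 α} {E} {γ : α → ZMod 3} (h : Sol (e ::ₘ E) γ) :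
    ∃ u v, e = s(u, v) ∧ Sol E (γ - dl u + dl v) := by
  obtain ⟨D, h1, h2⟩ := h
  have : e ∈ D.map (fun p => s(p.1, p.2)) := by rw [h1]; simp
  obtain ⟨⟨u, v⟩, hp, rfl⟩ := Multiset.mem_map.1 this
  obtain ⟨D', rfl⟩ := Multiset.exists_cons_of_mem hp
  refine ⟨u, v, rfl, D', ?_, ?_⟩
  · simpa using h1
  · rw [← h2]; simp; abel

lemma sol_add {E F : Multiset (Sym2 α)} {γ γ' : α → ZMod 3} (h : Sol E γ) (h' : Sol F γ') :
    Sol (E + F) (γ + γ') := by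
  obtain ⟨D, h1, h2⟩ := h
  obtain ⟨D', h1', h2'⟩ := h'
  exact ⟨D + D', by simp [h1, h1'], by simp [h2, h2']⟩

lemma sol_add_inv {E F : Multiset (Sym2 α)} {γ : α → ZMod 3} (h : Sol (E + F) γ) :
    ∃ γ1 γ2, Sol E γ1 ∧ Sol F γ2 ∧ γ = γ1 + γ2 := by
  induction E using Multiset.induction_on generalizing γ with
  | empty => exact ⟨0, γ, sol_zero, by simpa using h, by simp⟩
  | cons e E ih =>
    rw [Multiset.cons_add] at h
    obtain ⟨u, v, rfl, h'⟩ := sol_cons_inv h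
    obtain ⟨γ1, γ2, h1, h2, h3⟩ := ih h'
    refine ⟨γ1 + dl u - dl v, γ2, sol_cons ?_, h2, ?_⟩
    · convert h1 using 1; abel
    · have : γ = (γ - dl u + dl v) + dl u - dl v := by abel
      rw [this, h3]; abel

lemma sol_neg {E : Multiset (Sym2 α)} {γ : α → ZMod 3} (h : Sol E γ) : Sol E (-γ) := by
  induction E using Multiset.induction_on generalizing γ with
  | empty => rw [sol_zero_inv h]; simpa using sol_zero
  | cons e E ih =>
    obtain ⟨u, v, rfl, h'⟩ := sol_cons_inv h
    rw [Sym2.eq_swap]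
    apply sol_cons
    convert ih h' using 1
    abel

lemma sol_exists (E : Multiset (Sym2 α)) : ∃ γ, Sol E γ := by
  induction E using Multiset.induction_on with
  | empty => exact ⟨0, sol_zero⟩
  | cons e E ih =>
    obtain ⟨γ, h⟩ := ih
    induction e using Sym2.ind with
    | _ u v =>
      refine ⟨γ + dl u - dl v, sol_cons ?_⟩
      convert h using 1; abel

/-- The net outflow of a set without leaving edges is zero. -/
lemma sol_sum_zero {E : Multiset (Sym2 α)} {γ : α → ZMod 3} (h : Sol E γ) (A : Finset α)
    (hA : cut A E = 0) : ∑ x ∈ A, γ x = 0 := by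
  induction E using Multiset.induction_on generalizing γ with
  | empty => rw [sol_zero_inv h]; simp
  | cons e E ih =>
    obtain ⟨u, v, rfl, h'⟩ := sol_cons_inv h
    simp only [cut_cons, Nat.add_eq_zero_iff, cr_mk] at hA
    have := ih h' hA.2
    simp only [Pi.add_apply, Pi.sub_apply, Finset.sum_add_distrib, Finset.sum_sub_distrib,
      sum_dl] at this
    by_cases hu : u ∈ A <;> by_cases hv : v ∈ A <;> simp_all

lemma cut_eq_zero {E : Multiset (Sym2 α)} {A : Finset α} (h : ∀ e ∈ E, cr A e = 0) :
    cut A E = 0 := by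
  unfold cut
  apply Multiset.sum_eq_zero
  intro x hx
  obtain ⟨e, he, rfl⟩ := Multiset.mem_map.1 hx
  exact h e he

lemma cr_eq_zero_of_notMem {A : Finset α} {e : Sym2 α} (h : ∀ x ∈ e, x ∉ A) : cr A e = 0 := by
  induction e using Sym2.ind with
  | _ u v => simp at h; simp [h]

lemma cr_eq_zero_of_mem {A : Finset α} {e : Sym2 α} (h : ∀ x ∈ e, x ∈ A) : cr A e = 0 := by
  induction e using Sym2.ind with
  | _ u v => simp at h; simp [h]

lemma sol_supp {E : Multiset (Sym2 α)} {γ : α → ZMod 3} (h : Sol E γ) {x : α}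
    (hx : ∀ e ∈ E, x ∉ e) : γ x = 0 := by
  have := sol_sum_zero h {x} (cut_eq_zero fun e he => cr_eq_zero_of_notMem ?_)
  · simpa using this
  · intro y hy hyx
    rw [Finset.mem_singleton] at hyx
    subst hyx
    exact hx e he hy

/-- The boundary induced on the image of a vertex map: values are summed over fibres. -/
noncomputable def push (φ : α → α) (γ : α → ZMod 3) : α → ZMod 3 :=
  fun y => ∑ x ∈ Finset.univ.filter (fun x => φ x = y), γ x

lemma push_add (φ : α → α) (γ γ' : α → ZMod 3) : push φ (γ + γ') = push φ γ + push φ γ' := by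
  ext y; simp [push, Finset.sum_add_distrib]

lemma push_sub (φ : α → α) (γ γ' : α → ZMod 3) : push φ (γ - γ') = push φ γ - push φ γ' := by
  ext y; simp [push, Finset.sum_sub_distrib]

lemma push_dl (φ : α → α) (x : α) : push φ (dl x) = dl (φ x) := by
  ext y
  by_cases h : y = φ x
  · subst h; simp [push, sum_dl, dl_self]
  · simp [push, sum_dl, dl_ne h, Ne.symm h]

/-- Any orientation of a contracted graph comes from an orientation of the graph itself. -/
lemma sol_map {E : Multiset (Sym2 α)} {γ : α → ZMod 3} (φ : α → α)
    (h : Sol (E.map (Sym2.map φ)) γ) : ∃ γ0, Sol E γ0 ∧ push φ γ0 = γ := by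
  induction E using Multiset.induction_on generalizing γ with
  | empty =>
    refine ⟨0, sol_zero, ?_⟩
    have h0 : γ = 0 := sol_zero_inv (by simpa using h)
    rw [h0]; ext; simp [push]
  | cons e E ih =>
    rw [Multiset.map_cons] at h
    obtain ⟨u, v, he, h⟩ := sol_cons_inv h
    obtain ⟨γ0, h1, h2⟩ := ih h
    obtain ⟨p, q, rfl, rfl, rfl⟩ : ∃ p q, e = s(p, q) ∧ φ p = u ∧ φ q = v := by
      induction e using Sym2.ind with
      | _ p q =>
        rw [Sym2.map_mk, Sym2.eq_iff] at he
        rcases he with ⟨rfl, rfl⟩ | ⟨rfl, rfl⟩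
        · exact ⟨p, q, rfl, rfl, rfl⟩
        · exact ⟨q, p, Sym2.eq_swap, rfl, rfl⟩
    refine ⟨γ0 + dl p - dl q, sol_cons ?_, ?_⟩
    · convert h1 using 1; abel
    · rw [push_sub, push_add, push_dl, push_dl, h2]; abel

/-- Undoing the lifting of a pair of edges at `v`. -/
lemma sol_unlift {E : Multiset (Sym2 α)} {γ : α → ZMod 3} {x y : α} (v : α)
    (h : Sol (s(x, y) ::ₘ E) γ) : Sol (s(v, x) ::ₘ s(v, y) ::ₘ E) γ := by
  obtain ⟨p, q, he, h⟩ := sol_cons_inv h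
  rw [Sym2.eq_iff] at he
  rcases he with ⟨rfl, rfl⟩ | ⟨rfl, rfl⟩
  · rw [Sym2.eq_swap]
    apply sol_cons; apply sol_cons
    convert h using 1; abel
  · apply sol_cons; rw [Sym2.eq_swap]; apply sol_cons
    convert h using 1; abel

/-- Two parallel edges can carry any value from one end to the other. -/
lemma sol_digon {E : Multiset (Sym2 α)} {γ : α → ZMod 3} {x y : α} (t : ZMod 3)
    (h : Sol E (γ + fun z => t * (dl x z - dl y z))) :
    Sol (s(x, y) ::ₘ s(x, y) ::ₘ E) γ := by
  have h3 : (3 : ZMod 3) = 0 := rfl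
  have ht : t = 0 ∨ t = 1 ∨ t = 2 := by clear h; revert t; decide
  rcases ht with rfl | rfl | rfl
  · apply sol_cons; rw [Sym2.eq_swap]; apply sol_cons
    convert h using 1; ext z; simp
  · apply sol_cons; apply sol_cons
    convert h using 1; ext z; simp
    linear_combination (-dl x z + dl y z) * h3
  · rw [Sym2.eq_swap]; apply sol_cons; apply sol_cons
    convert h using 1; ext z; simp
    ring

/-- Each arc of an orientation of edges leaving `A` becomes an arc between a vertex of `A` and an
outer vertex: `P` collects the heads of arcs entering `A`, `Q` the tails of arcs leaving `A`. -/
lemma sol_cross {E : Multiset (Sym2 α)} {γ : α → ZMod 3} {A : Finset α}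
    (hE : ∀ e ∈ E, cr A e = 1) (h : Sol E γ) :
    ∃ P Q : Multiset α, (∀ x ∈ P, x ∈ A) ∧ (∀ x ∈ Q, x ∈ A) ∧
      (∀ B ⊆ A, cut B E = cnt B P + cnt B Q) ∧
      (∀ B ⊆ A, ∑ x ∈ B, γ x = (cnt B Q : ZMod 3) - cnt B P) := by
  induction E using Multiset.induction_on generalizing γ with
  | empty => rw [sol_zero_inv h]; exact ⟨0, 0, by simp, by simp, by simp, by simp⟩
  | cons e E ih =>
    obtain ⟨u, v, rfl, h'⟩ := sol_cons_inv h
    obtain ⟨P, Q, h1, h2, h3, h4⟩ := ih (fun e he => hE e (Multiset.mem_cons_of_mem he)) h'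
    have h5 := hE _ (Multiset.mem_cons_self _ _)
    simp only [Pi.add_apply, Pi.sub_apply, Finset.sum_add_distrib, Finset.sum_sub_distrib,
      sum_dl] at h4
    by_cases hu : u ∈ A
    · have hv : v ∉ A := by intro hv; simp [hu, hv] at h5
      refine ⟨P, u ::ₘ Q, h1, ?_, ?_, ?_⟩
      · intro x hx; rcases Multiset.mem_cons.1 hx with rfl | hx
        exacts [hu, h2 x hx]
      · intro B hB
        have : v ∉ B := fun h => hv (hB h)
        by_cases huB : u ∈ B <;> simp [h3 B hB, this, huB]
        ring
      · intro B hB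
        have : v ∉ B := fun h => hv (hB h)
        have h6 := h4 B hB
        by_cases huB : u ∈ B <;> simp [this, huB] at h6 ⊢ <;> linear_combination h6
    · have hv : v ∈ A := by by_contra hv; simp [hu, hv] at h5
      refine ⟨v ::ₘ P, Q, ?_, h2, ?_, ?_⟩
      · intro x hx; rcases Multiset.mem_cons.1 hx with rfl | hx
        exacts [hv, h1 x hx]
      · intro B hB
        have : u ∉ B := fun h => hu (hB h)
        by_cases hvB : v ∈ B <;> simp [h3 B hB, this, hvB]
        ring
      · intro B hB
        have : u ∉ B := fun h => hu (hB h)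
        have h6 := h4 B hB
        by_cases hvB : v ∈ B <;> simp [this, hvB] at h6 ⊢ <;> linear_combination h6

end Orientations


/-! ### Degree conditions -/

/-- The degree condition `d ≥ 4 + |τ|` of Lovász, Thomassen, Wu and Zhang, for a vertex set with
`d` leaving edges and boundary `b`; here `τ ∈ {0, ±1, ±2, ±3}` is determined by `τ ≡ d (mod 2)`
and `τ ≡ b (mod 3)`. -/
def ok (d : ℕ) (b : ZMod 3) : Prop := 4 ≤ d ∧ (b = 0 → d ≠ 5) ∧ (b ≠ 0 → d ≠ 4)

/-- The strict version `d ≥ 6 + |τ|` of `ok`. -/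
def slk (d : ℕ) (b : ZMod 3) : Prop := 6 ≤ d ∧ (b = 0 → d ≠ 7) ∧ (b ≠ 0 → d ≠ 6)

/-- The condition `d ≤ 4 + |τ|`, under which the edges leaving a vertex set may be oriented in
advance. -/
def small (d : ℕ) (b : ZMod 3) : Prop := d ≤ 7 ∧ (b = 0 → d ≠ 6) ∧ (b ≠ 0 → d ≠ 7)

lemma z3_cases (b : ZMod 3) : b = 0 ∨ b = 1 ∨ b = 2 := by revert b; decide

lemma small_of_not_slk {d : ℕ} {b : ZMod 3} (h : ¬ slk d b) : small d b := by
  unfold slk at h; unfold small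
  by_cases hb : b = 0 <;> simp [hb] at h ⊢ <;> omega

lemma small_neg {d : ℕ} {b : ZMod 3} (h : small d b) : small d (-b) := by
  simpa [small] using h

lemma ok_neg {d : ℕ} {b : ZMod 3} (h : ok d b) : ok d (-b) := by
  simpa [ok] using h

lemma slk_neg {d : ℕ} {b : ZMod 3} (h : slk d b) : slk d (-b) := by
  simpa [slk] using h

lemma ok_of_six {d : ℕ} (b : ZMod 3) (h : 6 ≤ d) : ok d b := by
  unfold ok; omega

lemma ok_of_slk {d : ℕ} {b : ZMod 3} (h : slk d b) : ok d b := ok_of_six b h.1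

lemma ok_of_slk_two {d : ℕ} {b : ZMod 3} (h : slk (d + 2) b) : ok d b := by
  unfold slk at h; unfold ok
  by_cases hb : b = 0 <;> simp [hb] at h ⊢ <;> omega

lemma ok_of_slk_add {d : ℕ} {b : ZMod 3} (h : slk (d + 1) b) : ok d (b + 1) := by
  unfold slk at h; unfold ok
  obtain rfl | rfl | rfl := z3_cases b <;> simp +decide at h ⊢ <;> omega

lemma ok_of_slk_sub {d : ℕ} {b : ZMod 3} (h : slk (d + 1) b) : ok d (b - 1) := by
  unfold slk at h; unfold ok
  obtain rfl | rfl | rfl := z3_cases b <;> simp +decide at h ⊢ <;> omega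

lemma small_dec {d : ℕ} {b : ZMod 3} (h : small (d + 1) b) : small d (b + 1) := by
  unfold small at *
  obtain rfl | rfl | rfl := z3_cases b <;> simp +decide at h ⊢ <;> omega

/-- A vertex that is not of type `(4, 0)` can lose an outgoing or an incoming edge. -/
lemma ok_or {d : ℕ} {b : ZMod 3} (h : ok d b) (h' : ¬ (d = 4 ∧ b = 0)) :
    ok (d - 1) (b - 1) ∨ ok (d - 1) (b + 1) := by
  unfold ok at *
  obtain rfl | rfl | rfl := z3_cases b <;> simp +decide at h h' ⊢ <;> omega

/-- A vertex that can lose an outgoing but not an incoming edge has `τ = 1` or `τ = 2`. -/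
lemma plus_cases {d : ℕ} {b : ZMod 3} (h : ok d b) (h1 : ok (d - 1) (b - 1))
    (h2 : ¬ ok (d - 1) (b + 1)) : (d = 5 ∧ b = 1) ∨ (d = 6 ∧ b = 2) := by
  unfold ok at *
  obtain rfl | rfl | rfl := z3_cases b <;> simp +decide at h h1 h2 ⊢ <;> omega

section Data

variable {α : Type} [Fintype α]

/-- Degree of the set `A` in the graph with edges `R`, together with arcs from the special vertex
`z` to the members of `P` and from the members of `Q` to `z`. -/
noncomputable def dg (A : Finset α) (R : Multiset (Sym2 α)) (P Q : Multiset α) : ℕ :=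
  cut A R + cnt A P + cnt A Q

/-- Total boundary of the set `A`, when `γ` is the part of the boundary that has to be supplied by
the edges not incident with the special vertex. -/
noncomputable def bb (A : Finset α) (γ : α → ZMod 3) (P Q : Multiset α) : ZMod 3 :=
  ∑ x ∈ A, γ x + cnt A Q - cnt A P

/-- Hypotheses of the Lovász–Thomassen–Wu–Zhang extension theorem. The special vertex `z` does not
belong to `W`; its edges are already oriented, as arcs from `z` to the members of `P` and from the
members of `Q` to `z`. The edges `R` of the graph on `W` remain to be oriented, with boundary `γ`. -/
structure Ext (W : Finset α) (R : Multiset (Sym2 α)) (P Q : Multiset α) (γ : α → ZMod 3) :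
    Prop where
  hR : ∀ e ∈ R, ∀ x ∈ e, x ∈ W
  hP : ∀ x ∈ P, x ∈ W
  hQ : ∀ x ∈ Q, x ∈ W
  hγ : ∀ x ∉ W, γ x = 0
  hs : ∑ x ∈ W, γ x = 0
  hz : small (P.card + Q.card) ((P.card : ZMod 3) - Q.card)
  hA : ∀ A ⊆ W, A.Nonempty → A ≠ W → ok (dg A R P Q) (bb A γ P Q)

/-- Size of an instance, on which the proof of the extension theorem inducts. The special vertex
has degree at most `7`, so losing a vertex outweighs any change of its degree. -/
def meas (W : Finset α) (R : Multiset (Sym2 α)) (P Q : Multiset α) : ℕ :=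
  8 * W.card + 2 * R.card + P.card + Q.card

/-- The extension theorem for all instances of size less than `m`. -/
def IH (α : Type) [Fintype α] (m : ℕ) : Prop :=
  ∀ (W : Finset α) (R : Multiset (Sym2 α)) (P Q : Multiset α) (γ : α → ZMod 3),
    Ext W R P Q γ → 2 ≤ W.card → meas W R P Q < m → Sol R γ

lemma cnt_eq_card {A : Finset α} {P : Multiset α} (h : ∀ x ∈ P, x ∈ A) : cnt A P = P.card := by
  induction P using Multiset.induction_on with
  | empty => simp
  | cons x P ih =>
    rw [cnt_cons, ih fun y hy => h y (Multiset.mem_cons_of_mem hy),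
      if_pos (h x (Multiset.mem_cons_self _ _)), Multiset.card_cons, add_comm]

lemma cnt_eq_zero {A : Finset α} {P : Multiset α} (h : ∀ x ∈ P, x ∉ A) : cnt A P = 0 := by
  induction P using Multiset.induction_on with
  | empty => simp
  | cons x P ih =>
    rw [cnt_cons, ih fun y hy => h y (Multiset.mem_cons_of_mem hy),
      if_neg (h x (Multiset.mem_cons_self _ _))]

lemma cnt_compl {W : Finset α} (A : Finset α) {P : Multiset α} (h : ∀ x ∈ P, x ∈ W) :
    cnt (W \ A) P + cnt A P = P.card := by
  induction P using Multiset.induction_on with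
  | empty => simp
  | cons x P ih =>
    have h1 := ih fun y hy => h y (Multiset.mem_cons_of_mem hy)
    have h2 := h x (Multiset.mem_cons_self _ _)
    by_cases hx : x ∈ A <;> simp [h2, hx] <;> omega

lemma cut_compl {W A : Finset α} {R : Multiset (Sym2 α)}
    (h : ∀ e ∈ R, ∀ x ∈ e, x ∈ W) : cut (W \ A) R = cut A R := by
  unfold cut
  congr 1
  apply Multiset.map_congr rfl
  intro e he
  have := h e he
  induction e using Sym2.ind with
  | _ u v =>
    simp at this
    by_cases hu : u ∈ A <;> by_cases hv : v ∈ A <;> simp [this, hu, hv]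

lemma sum_compl {W A : Finset α} (hA : A ⊆ W) {γ : α → ZMod 3} (h : ∑ x ∈ W, γ x = 0) :
    ∑ x ∈ W \ A, γ x = - ∑ x ∈ A, γ x := by
  rw [← Finset.sum_sdiff hA] at h
  exact eq_neg_of_add_eq_zero_left h

variable {W : Finset α} {R : Multiset (Sym2 α)} {P Q : Multiset α} {γ : α → ZMod 3}

lemma Ext.dg_compl (h : Ext W R P Q γ) (A : Finset α) :
    dg (W \ A) R P Q + dg A R P Q = 2 * cut A R + (P.card + Q.card) := by
  have h1 := cnt_compl A h.hP
  have h2 := cnt_compl A h.hQ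
  have h3 := cut_compl (A := A) h.hR
  unfold dg; omega

lemma Ext.bb_compl (h : Ext W R P Q γ) {A : Finset α} (hA : A ⊆ W) :
    bb (W \ A) γ P Q + bb A γ P Q = - ((P.card : ZMod 3) - Q.card) := by
  have h1 := cnt_compl A h.hP
  have h2 := cnt_compl A h.hQ
  have h3 := sum_compl hA h.hs
  unfold bb
  rw [h3, ← h1, ← h2]; push_cast; ring

/-- Reversing all arcs. -/
lemma Ext.neg (h : Ext W R P Q γ) : Ext W R Q P (-γ) where
  hR := h.hR
  hP := h.hQ
  hQ := h.hP
  hγ x hx := by simp [h.hγ x hx]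
  hs := by simp [h.hs]
  hz := by
    have := small_neg h.hz
    rwa [neg_sub, add_comm] at this
  hA A h1 h2 h3 := by
    have := ok_neg (h.hA A h1 h2 h3)
    convert this using 1
    · unfold dg; ring
    · unfold bb; simp; ring

/-- `W` is connected by the edges in `R`. -/
lemma Ext.cut_pos (h : Ext W R P Q γ) {A : Finset α} (hA : A ⊆ W) (h0 : A.Nonempty) (h1 : A ≠ W) :
    cut A R ≠ 0 := by
  intro h2
  have h3 := h.dg_compl A
  have h4 := (h.hA A hA h0 h1).1
  have h5 := (h.hA (W \ A) Finset.sdiff_subset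
    (Finset.sdiff_nonempty.2 fun h => h1 (hA.antisymm h)) (by
      intro h
      obtain ⟨x, hx⟩ := h0
      have := hA hx
      rw [← h] at this
      exact (Finset.mem_sdiff.1 this).2 hx)).1
  have h6 := h.hz.1
  omega

/-- On two vertices joined by at least two edges every boundary is achieved. -/
lemma two_sol {x y : α} (hxy : x ≠ y) (hR : ∀ e ∈ R, ∀ z ∈ e, z ∈ ({x, y} : Finset α))
    (hk : 2 ≤ cut {x} R) (hγ : ∀ z ∉ ({x, y} : Finset α), γ z = 0)
    (hs : ∑ z ∈ ({x, y} : Finset α), γ z = 0) : Sol R γ := by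
  have key : ∀ R : Multiset (Sym2 α), (∀ e ∈ R, ∀ z ∈ e, z ∈ ({x, y} : Finset α)) →
      1 ≤ cut {x} R → ∃ R', R = s(x, y) ::ₘ R' := by
    intro R hR hc
    by_contra hn
    have : cut {x} R = 0 := by
      apply cut_eq_zero
      intro e he
      have h1 := hR e he
      have h2 : e ≠ s(x, y) := by
        rintro rfl
        exact hn (Multiset.exists_cons_of_mem he)
      induction e using Sym2.ind with
      | _ u v =>
        simp at h1 h2 ⊢
        rcases h1 with ⟨rfl | rfl, rfl | rfl⟩ <;> simp_all
    omega
  obtain ⟨R1, rfl⟩ := key R hR (by omega)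
  have hR1 := fun e he => hR e (Multiset.mem_cons_of_mem he)
  simp [hxy.symm] at hk
  obtain ⟨R2, rfl⟩ := key R1 hR1 (by omega)
  obtain ⟨γ', hγ'⟩ := sol_exists R2
  have hR2 := fun e he => hR1 e (Multiset.mem_cons_of_mem he)
  have hs' : ∑ z ∈ ({x, y} : Finset α), γ' z = 0 :=
    sol_sum_zero hγ' _ (cut_eq_zero fun e he => cr_eq_zero_of_mem (hR2 e he))
  apply sol_digon (γ' x - γ x)
  convert hγ' using 1
  ext z
  rw [Finset.sum_pair hxy] at hs hs'
  by_cases hzx : z = x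
  · subst hzx; simp [dl_self, dl_ne hxy]
  · by_cases hzy : z = y
    · subst hzy; simp [dl_self, dl_ne hxy.symm]; linear_combination hs - hs'
    · have hzW : z ∉ ({x, y} : Finset α) := by simp [hzx, hzy]
      simp [dl_ne hzx, dl_ne hzy]
      rw [hγ z hzW, sol_supp hγ' (x := z)]
      intro e he hz
      exact hzW (hR2 e he z hz)

/-- The extension theorem when `W` has two vertices. -/
lemma Ext.base (h : Ext W R P Q γ) (hW : W.card = 2) : Sol R γ := by
  obtain ⟨x, y, hxy, rfl⟩ := Finset.card_eq_two.1 hW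
  have hxW : ({x} : Finset α) ⊆ {x, y} := by simp
  have hx := h.hA {x} hxW (by simp) (by
    intro h; have : y ∈ ({x} : Finset α) := h ▸ (by simp); simp at this; exact hxy this.symm)
  have hy := h.hA {y} (by simp) (by simp) (by
    intro h; have : x ∈ ({y} : Finset α) := h ▸ (by simp); simp at this; exact hxy this)
  have hc : ({x, y} : Finset α) \ {x} = {y} := by
    ext z; simp; constructor
    · rintro ⟨rfl | h, h'⟩ <;> simp_all
    · rintro rfl; simp [hxy.symm]
  have h1 := h.dg_compl {x}
  have h2 := h.bb_compl hxW
  rw [hc] at h1 h2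
  have h3 := h.hz
  have hk : 2 ≤ cut {x} R := by
    generalize dg {x} R P Q = d1 at *
    generalize dg {y} R P Q = d2 at *
    generalize bb {x} γ P Q = b1 at *
    generalize bb {y} γ P Q = b2 at *
    generalize P.card + Q.card = n at *
    generalize (P.card : ZMod 3) - Q.card = z at *
    obtain rfl : z = -(b2 + b1) := by rw [h2]; ring
    unfold ok at hx hy
    unfold small at h3
    obtain rfl | rfl | rfl := z3_cases b1 <;> obtain rfl | rfl | rfl := z3_cases b2 <;>
      simp +decide at hx hy h3 <;> omega
  exact two_sol hxy h.hR hk h.hγ h.hs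

end Data

/-! ### Contraction and extension -/

section Steps

variable {α : Type} [Fintype α]

/-- Edges inside `A`. -/
noncomputable def inner (A : Finset α) (R : Multiset (Sym2 α)) : Multiset (Sym2 α) :=
  R.filter fun e => ∀ x ∈ e, x ∈ A

/-- Edges not inside `A`. -/
noncomputable def outer (A : Finset α) (R : Multiset (Sym2 α)) : Multiset (Sym2 α) :=
  R.filter fun e => ¬ ∀ x ∈ e, x ∈ A

lemma inner_add_outer (A : Finset α) (R : Multiset (Sym2 α)) : inner A R + outer A R = R :=
  Multiset.filter_add_not _ _

lemma cnt_filter {A B : Finset α} (hB : B ⊆ A) (P : Multiset α) :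
    cnt B (P.filter (· ∈ A)) = cnt B P := by
  induction P using Multiset.induction_on with
  | empty => simp
  | cons x P ih =>
    by_cases hx : x ∈ A
    · simp [hx, ih]
    · have : x ∉ B := fun h => hx (hB h)
      simp [hx, ih, this]

lemma sum_push (φ : α → α) (γ : α → ZMod 3) (B : Finset α) :
    ∑ y ∈ B, push φ γ y = ∑ x ∈ Finset.univ.filter (fun x => φ x ∈ B), γ x := by
  rw [← Finset.sum_fiberwise_of_maps_to (s := Finset.univ.filter (fun x => φ x ∈ B)) (t := B)
    (g := φ) (by simp) γ]
  apply Finset.sum_congr rfl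
  intro y hy
  unfold push
  apply Finset.sum_congr _ (fun _ _ => rfl)
  ext x
  simp only [Finset.mem_filter, Finset.mem_univ, true_and]
  constructor
  · rintro rfl; exact ⟨hy, rfl⟩
  · exact fun h => h.2

lemma cut_map (φ : α → α) {W B : Finset α} {R : Multiset (Sym2 α)}
    (hR : ∀ e ∈ R, ∀ x ∈ e, x ∈ W) :
    cut B (R.map (Sym2.map φ)) = cut (W.filter fun x => φ x ∈ B) R := by
  unfold cut
  rw [Multiset.map_map]
  congr 1
  apply Multiset.map_congr rfl
  intro e he
  have := hR e he
  induction e using Sym2.ind with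
  | _ u v => simp at this; simp [this]

lemma cnt_map (φ : α → α) {W B : Finset α} {P : Multiset α} (hP : ∀ x ∈ P, x ∈ W) :
    cnt B (P.map φ) = cnt (W.filter fun x => φ x ∈ B) P := by
  unfold cnt
  rw [Multiset.map_map]
  congr 1
  apply Multiset.map_congr rfl
  intro x hx
  simp [hP x hx]

variable {W : Finset α} {R : Multiset (Sym2 α)} {P Q : Multiset α} {γ : α → ZMod 3}

lemma sum_push_of_supp (φ : α → α) (hγ : ∀ x ∉ W, γ x = 0) (B : Finset α) :
    ∑ y ∈ B, push φ γ y = ∑ x ∈ W.filter (fun x => φ x ∈ B), γ x := by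
  rw [sum_push]
  symm
  apply Finset.sum_subset
  · intro x; simp
  · intro x hx hx'
    apply hγ
    intro h
    simp at hx hx'
    exact hx' h hx

/-- Identifying vertices preserves the hypotheses, since every vertex set of the quotient is
represented by a vertex set of the graph. -/
lemma Ext.map (h : Ext W R P Q γ) (φ : α → α) :
    Ext (W.image φ) (R.map (Sym2.map φ)) (P.map φ) (Q.map φ) (push φ γ) where
  hR e he y hy := by
    obtain ⟨e, he', rfl⟩ := Multiset.mem_map.1 he
    obtain ⟨x, hx, rfl⟩ := Sym2.mem_map.1 hy
    exact Finset.mem_image_of_mem _ (h.hR e he' x hx)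
  hP y hy := by
    obtain ⟨x, hx, rfl⟩ := Multiset.mem_map.1 hy
    exact Finset.mem_image_of_mem _ (h.hP x hx)
  hQ y hy := by
    obtain ⟨x, hx, rfl⟩ := Multiset.mem_map.1 hy
    exact Finset.mem_image_of_mem _ (h.hQ x hx)
  hγ y hy := by
    apply Finset.sum_eq_zero
    intro x hx
    apply h.hγ
    intro hxW
    apply hy
    rw [← (Finset.mem_filter.1 hx).2]
    exact Finset.mem_image_of_mem _ hxW
  hs := by
    rw [sum_push_of_supp φ h.hγ, Finset.filter_true_of_mem, h.hs]
    intro x hx; exact Finset.mem_image_of_mem _ hx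
  hz := by simpa using h.hz
  hA B hB h0 hne := by
    have := h.hA (W.filter fun x => φ x ∈ B) (Finset.filter_subset _ _) (by
      obtain ⟨y, hy⟩ := h0
      obtain ⟨x, hx, rfl⟩ := Finset.mem_image.1 (hB hy)
      exact ⟨x, by simp [hx, hy]⟩) (by
      intro heq
      apply hne
      apply hB.antisymm
      intro y hy
      obtain ⟨x, hx, rfl⟩ := Finset.mem_image.1 hy
      rw [← heq] at hx
      exact (Finset.mem_filter.1 hx).2)
    unfold dg bb at *
    rwa [cut_map φ h.hR, cnt_map φ h.hP, cnt_map φ h.hQ, sum_push_of_supp φ h.hγ]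

/-- The map contracting `A` to the vertex `a`. -/
noncomputable def ctr (A : Finset α) (a : α) : α → α := fun x => if x ∈ A then a else x

lemma push_ctr {A : Finset α} {a : α} (ha : a ∈ A) {γ γ' : α → ZMod 3}
    (h : push (ctr A a) γ = push (ctr A a) γ') :
    (∀ x ∉ A, γ x = γ' x) ∧ ∑ x ∈ A, γ x = ∑ x ∈ A, γ' x := by
  constructor
  · intro x hx
    have h1 := congrFun h x
    have h2 : (Finset.univ.filter fun y => ctr A a y = x) = {x} := by
      ext y
      simp only [Finset.mem_filter, Finset.mem_univ, true_and, Finset.mem_singleton]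
      by_cases hy : y ∈ A
      · have h3 : a ≠ x := by rintro rfl; exact hx ha
        have h4 : y ≠ x := by rintro rfl; exact hx hy
        simp [ctr, hy, h3, h4]
      · simp [ctr, hy]
    simpa [push, h2] using h1
  · have h1 := congrFun h a
    have h2 : (Finset.univ.filter fun y => ctr A a y = a) = A := by
      ext y
      simp only [Finset.mem_filter, Finset.mem_univ, true_and]
      by_cases hy : y ∈ A
      · simp [ctr, hy]
      · have h4 : y ≠ a := by rintro rfl; exact hy ha
        simp [ctr, hy, h4]
    simpa [push, h2] using h1

lemma card_image_ctr {A : Finset α} {a : α} (ha : a ∈ A) (hA : A ⊆ W) :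
    (W.image (ctr A a)).card + A.card = W.card + 1 := by
  have : W.image (ctr A a) = insert a (W \ A) := by
    ext y
    simp only [Finset.mem_image, Finset.mem_insert, Finset.mem_sdiff]
    constructor
    · rintro ⟨x, hx, rfl⟩
      by_cases hxA : x ∈ A <;> simp [ctr, hxA, hx]
    · rintro (rfl | ⟨h1, h2⟩)
      · exact ⟨y, hA ha, by simp [ctr, ha]⟩
      · exact ⟨y, h1, by simp [ctr, h2]⟩
  rw [this, Finset.card_insert_of_notMem (by simp [ha]), Finset.card_sdiff_of_subset hA]
  have := Finset.card_le_card hA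
  omega

/-- If the edges not inside `A` have been oriented, then `A` becomes an instance of its own, with
all vertices outside of `A` merged into its special vertex. -/
lemma Ext.extend (h : Ext W R P Q γ) (ih : IH α (meas W R P Q)) {A : Finset α} (hA : A ⊆ W)
    (h2 : 2 ≤ A.card) (hne : A ≠ W) (hsm : small (dg A R P Q) (bb A γ P Q)) {γ0 : α → ZMod 3}
    (h0 : Sol (outer A R) γ0) (hoff : ∀ x ∉ A, γ0 x = γ x)
    (hsum : ∑ x ∈ A, γ0 x = ∑ x ∈ A, γ x) : Sol R γ := by
  set Rc := (outer A R).filter (fun e => cr A e = 1) with hRc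
  set Rf := (outer A R).filter (fun e => ¬ cr A e = 1) with hRf
  have hcf : Rc + Rf = outer A R := Multiset.filter_add_not _ _
  obtain ⟨γ1, γ2, hγ1, hγ2, hγ12⟩ := sol_add_inv (hcf.symm ▸ h0)
  obtain ⟨P1, Q1, hP1, hQ1, hcut, hbd⟩ := sol_cross
    (fun e he => (Multiset.mem_filter.1 he).2) hγ1
  have hfar : ∀ e ∈ Rf, ∀ x ∈ e, x ∉ A := by
    intro e he x hx hxA
    obtain ⟨he1, he2⟩ := Multiset.mem_filter.1 he
    obtain ⟨he3, he4⟩ := Multiset.mem_filter.1 he1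
    induction e using Sym2.ind with
    | _ u v =>
      simp at he4 he2 hx
      rcases hx with rfl | rfl <;> simp_all
  have hγ2A : ∀ x ∈ A, γ2 x = 0 := fun x hx => sol_supp hγ2 fun e he hxe => hfar e he x hxe hx
  have hcutR : ∀ B ⊆ A, cut B R = cut B (inner A R) + (cnt B P1 + cnt B Q1) := by
    intro B hB
    conv_lhs => rw [← inner_add_outer A R, ← hcf]
    rw [cut_add, cut_add, hcut B hB, cut_eq_zero (E := Rf)]
    · rfl
    · exact fun e he => cr_eq_zero_of_notMem fun x hx hxB => hfar e he x hx (hB hxB)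
  have hsumB : ∀ B ⊆ A, ∑ x ∈ B, γ0 x = (cnt B Q1 : ZMod 3) - cnt B P1 := by
    intro B hB
    rw [← hbd B hB]
    apply Finset.sum_congr rfl
    intro x hx
    rw [hγ12, Pi.add_apply, hγ2A x (hB hx), add_zero]
  set P2 := P1 + P.filter (· ∈ A) with hP2
  set Q2 := Q1 + Q.filter (· ∈ A) with hQ2
  set γA : α → ZMod 3 := fun x => if x ∈ A then γ x - γ0 x else 0 with hγA
  have hsumA : ∀ B ⊆ A, ∑ x ∈ B, γA x = ∑ x ∈ B, γ x - ∑ x ∈ B, γ0 x := by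
    intro B hB
    rw [← Finset.sum_sub_distrib]
    apply Finset.sum_congr rfl
    intro x hx
    simp [hγA, hB hx]
  have hdg : ∀ B ⊆ A, dg B (inner A R) P2 Q2 = dg B R P Q := by
    intro B hB
    unfold dg
    rw [hcutR B hB, cnt_add, cnt_add, cnt_filter hB, cnt_filter hB]
    ring
  have hbb : ∀ B ⊆ A, bb B γA P2 Q2 = bb B γ P Q := by
    intro B hB
    unfold bb
    rw [hsumA B hB, hsumB B hB, cnt_add, cnt_add, cnt_filter hB, cnt_filter hB]
    push_cast; ring
  have hP2A : ∀ x ∈ P2, x ∈ A := by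
    intro x hx
    rcases Multiset.mem_add.1 hx with hx | hx
    exacts [hP1 x hx, (Multiset.mem_filter.1 hx).2]
  have hQ2A : ∀ x ∈ Q2, x ∈ A := by
    intro x hx
    rcases Multiset.mem_add.1 hx with hx | hx
    exacts [hQ1 x hx, (Multiset.mem_filter.1 hx).2]
  have hin : ∀ e ∈ inner A R, ∀ x ∈ e, x ∈ A := fun e he => (Multiset.mem_filter.1 he).2
  have hsA : ∑ x ∈ A, γA x = 0 := by rw [hsumA A subset_rfl, hsum, sub_self]
  have hz : small (P2.card + Q2.card) ((P2.card : ZMod 3) - Q2.card) := by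
    have h3 := hdg A subset_rfl
    have h4 := hbb A subset_rfl
    unfold dg at h3; unfold bb at h4
    rw [cut_eq_zero fun e he => cr_eq_zero_of_mem (hin e he), cnt_eq_card hP2A,
      cnt_eq_card hQ2A, zero_add] at h3
    rw [hsA, cnt_eq_card hP2A, cnt_eq_card hQ2A, zero_add] at h4
    have := small_neg hsm
    unfold dg bb at this
    rwa [← h3, ← h4, neg_sub] at this
  have hE : Ext A (inner A R) P2 Q2 γA :=
    { hR := hin
      hP := hP2A
      hQ := hQ2A
      hγ := fun x hx => by simp [hγA, hx]
      hs := hsA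
      hz := hz
      hA := fun B hB h0 hBA => by
        rw [hdg B hB, hbb B hB]
        exact h.hA B (hB.trans hA) h0 fun hBW => hBA (hB.antisymm (hBW ▸ hA)) }
  have hm : meas A (inner A R) P2 Q2 < meas W R P Q := by
    have h5 := Finset.card_lt_card (hA.ssubset_of_ne hne)
    have h6 : (inner A R).card ≤ R.card := Multiset.card_le_card (Multiset.filter_le _ _)
    have h7 := hz.1
    unfold meas; omega
  have := sol_add (ih _ _ _ _ _ hE h2 hm) h0
  rw [inner_add_outer] at this
  convert this using 1
  ext x
  by_cases hx : x ∈ A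
  · simp [hγA, hx]
  · simp [hγA, hx, hoff x hx]

lemma sol_outer {A : Finset α} {a : α} (ha : a ∈ A) {γ' : α → ZMod 3} (h : Sol R γ')
    (h' : push (ctr A a) γ' = push (ctr A a) γ) :
    ∃ γ0, Sol (outer A R) γ0 ∧ (∀ x ∉ A, γ0 x = γ x) ∧ ∑ x ∈ A, γ0 x = ∑ x ∈ A, γ x := by
  obtain ⟨γi, γo, hi, ho, rfl⟩ := sol_add_inv ((inner_add_outer A R).symm ▸ h)
  obtain ⟨h1, h2⟩ := push_ctr ha h'
  have hin : ∀ e ∈ inner A R, ∀ x ∈ e, x ∈ A := fun e he => (Multiset.mem_filter.1 he).2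
  refine ⟨γo, ho, fun x hx => ?_, ?_⟩
  · rw [← h1 x hx, Pi.add_apply, sol_supp hi fun e he hxe => hx (hin e he x hxe), zero_add]
  · rw [← h2]
    simp only [Pi.add_apply, Finset.sum_add_distrib]
    rw [sol_sum_zero hi A (cut_eq_zero fun e he => cr_eq_zero_of_mem (hin e he)), zero_add]

/-- Reduction at a tight set: orient first the graph with `A` contracted, then `A`. -/
lemma Ext.tight (h : Ext W R P Q γ) (ih : IH α (meas W R P Q)) {A : Finset α} (hA : A ⊆ W)
    (h2 : 2 ≤ A.card) (hne : A ≠ W) (ht : ¬ slk (dg A R P Q) (bb A γ P Q)) : Sol R γ := by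
  obtain ⟨a, ha⟩ : A.Nonempty := Finset.card_pos.1 (by omega)
  have hc := card_image_ctr ha hA
  have hlt := Finset.card_lt_card (hA.ssubset_of_ne hne)
  have h3 := ih _ _ _ _ _ (h.map (ctr A a)) (by omega) (by
    simp only [meas, Multiset.card_map]; omega)
  obtain ⟨γ', h4, h5⟩ := sol_map _ h3
  obtain ⟨γ0, h6, h7, h8⟩ := sol_outer ha h4 h5
  exact h.extend ih hA h2 hne (small_of_not_slk ht) h6 h7 h8

end Steps

/-! ### Reductions for the extension theorem -/

section Reductions

variable {α : Type} [Fintype α] {W : Finset α} {R : Multiset (Sym2 α)} {P Q : Multiset α}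
  {γ : α → ZMod 3}

/-- Every proper set of at least two vertices satisfies the strict degree condition. -/
def Slack (W : Finset α) (R : Multiset (Sym2 α)) (P Q : Multiset α) (γ : α → ZMod 3) : Prop :=
  ∀ A ⊆ W, 2 ≤ A.card → A ≠ W → slk (dg A R P Q) (bb A γ P Q)

lemma Slack.neg (hS : Slack W R P Q γ) : Slack W R Q P (-γ) := by
  intro A h1 h2 h3
  have := slk_neg (hS A h1 h2 h3)
  convert this using 1
  · unfold dg; ring
  · unfold bb; simp; ring

lemma sum_shift (γ : α → ZMod 3) (x y : α) (A : Finset α) :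
    ∑ z ∈ A, (γ - dl x + dl y) z =
      ∑ z ∈ A, γ z - (if x ∈ A then 1 else 0) + (if y ∈ A then 1 else 0) := by
  simp [Finset.sum_add_distrib, Finset.sum_sub_distrib, sum_dl]

lemma bb_shift (γ : α → ZMod 3) (x y : α) (A : Finset α) (P Q : Multiset α) :
    bb A (γ - dl x + dl y) P Q =
      bb A γ P Q - (if x ∈ A then 1 else 0) + (if y ∈ A then 1 else 0) := by
  unfold bb; rw [sum_shift]; ring

lemma shift_off {x y z : α} (hx : x ∈ W) (hy : y ∈ W) (hz : z ∉ W) (h : γ z = 0) :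
    (γ - dl x + dl y) z = 0 := by
  have h1 : z ≠ x := by rintro rfl; exact hz hx
  have h2 : z ≠ y := by rintro rfl; exact hz hy
  simp [h, dl_ne h1, dl_ne h2]

lemma sum_shift_W {x y : α} (hx : x ∈ W) (hy : y ∈ W) (h : ∑ z ∈ W, γ z = 0) :
    ∑ z ∈ W, (γ - dl x + dl y) z = 0 := by
  rw [sum_shift, h]; simp [hx, hy]

lemma dg_cons (A : Finset α) (e : Sym2 α) (R : Multiset (Sym2 α)) (P Q : Multiset α) :
    dg A (e ::ₘ R) P Q = cr A e + dg A R P Q := by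
  unfold dg; rw [cut_cons]; ring

/-- A nonempty set is a singleton or has two elements. -/
lemma single_or {A : Finset α} (h : A.Nonempty) : (∃ a, A = {a}) ∨ 2 ≤ A.card := by
  have := Finset.card_pos.2 h
  by_cases h1 : A.card = 1
  · exact Or.inl (Finset.card_eq_one.1 h1)
  · right; omega

/-- Deleting an edge oriented from `x` to `y`. -/
lemma Ext.del {x y : α} (h : Ext W (s(x, y) ::ₘ R) P Q γ) (hS : Slack W (s(x, y) ::ₘ R) P Q γ)
    (hxy : x ≠ y)
    (hx : ok (dg {x} (s(x, y) ::ₘ R) P Q - 1) (bb {x} γ P Q - 1))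
    (hy : ok (dg {y} (s(x, y) ::ₘ R) P Q - 1) (bb {y} γ P Q + 1)) :
    Ext W R P Q (γ - dl x + dl y) := by
  have hxW : x ∈ W := h.hR _ (Multiset.mem_cons_self _ _) x (by simp)
  have hyW : y ∈ W := h.hR _ (Multiset.mem_cons_self _ _) y (by simp)
  refine { hR := fun e he => h.hR e (Multiset.mem_cons_of_mem he), hP := h.hP, hQ := h.hQ
           hγ := fun z hz => shift_off hxW hyW hz (h.hγ z hz)
           hs := sum_shift_W hxW hyW h.hs, hz := h.hz, hA := ?_ }
  intro A hA h0 hne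
  have h1 := h.hA A hA h0 hne
  rw [bb_shift]
  rw [dg_cons] at h1 hx hy
  have hS' := hS A hA
  rw [dg_cons] at hS'
  rcases single_or h0 with ⟨a, rfl⟩ | h2
  · by_cases hax : a = x
    · subst hax; simpa [hxy, hxy.symm] using hx
    · by_cases hay : a = y
      · subst hay; simpa [hxy, hxy.symm] using hy
      · simpa [Ne.symm hax, Ne.symm hay] using h1
  · have h3 := hS' h2 hne
    by_cases hxA : x ∈ A <;> by_cases hyA : y ∈ A <;>
      simp only [cr_mk, hxA, hyA, if_true, if_false, iff_true, iff_false, not_true,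
        zero_add, sub_zero, add_zero, sub_add_cancel] at h1 h3 ⊢
    · exact h1
    · rw [add_comm] at h3; exact ok_of_slk_sub h3
    · rw [add_comm] at h3; exact ok_of_slk_add h3
    · exact h1

/-- The edges at a vertex that carries no loop. -/
lemma star (R : Multiset (Sym2 α)) (v : α) (hl : s(v, v) ∉ R) :
    ∃ (X : Multiset α) (R0 : Multiset (Sym2 α)), R = X.map (fun x => s(v, x)) + R0 ∧
      (∀ x ∈ X, x ≠ v) ∧ (∀ e ∈ R0, v ∉ e) ∧ X.card = cut {v} R := by
  induction R using Multiset.induction_on with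
  | empty => exact ⟨0, 0, by simp⟩
  | cons e R ih =>
    obtain ⟨X, R0, h1, h2, h3, h4⟩ := ih fun h => hl (Multiset.mem_cons_of_mem h)
    by_cases hv : v ∈ e
    · obtain ⟨x, rfl⟩ := hv
      have hx : x ≠ v := by rintro rfl; exact hl (Multiset.mem_cons_self _ _)
      refine ⟨x ::ₘ X, R0, by simp [h1], ?_, h3, ?_⟩
      · intro y hy
        rcases Multiset.mem_cons.1 hy with rfl | hy
        exacts [hx, h2 y hy]
      · simp [h4, hx, add_comm]
    · refine ⟨X, e ::ₘ R0, by simp [h1], h2, ?_, ?_⟩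
      · intro f hf
        rcases Multiset.mem_cons.1 hf with rfl | hf
        exacts [hv, h3 f hf]
      · rw [cut_cons, h4, cr_eq_zero_of_notMem, zero_add]
        intro y hy hyv
        rw [Finset.mem_singleton] at hyv
        exact hv (hyv ▸ hy)

lemma cut_insert {v : α} {R : Multiset (Sym2 α)} (h : ∀ e ∈ R, v ∉ e) (A : Finset α) :
    cut (insert v A) R = cut A R := by
  unfold cut
  congr 1
  apply Multiset.map_congr rfl
  intro e he
  have := h e he
  induction e using Sym2.ind with
  | _ x y =>
    simp at this
    simp [Ne.symm this.1, Ne.symm this.2]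

lemma cnt_insert {v : α} {P : Multiset α} (h : v ∉ P) (A : Finset α) :
    cnt (insert v A) P = cnt A P := by
  unfold cnt
  congr 1
  apply Multiset.map_congr rfl
  intro x hx
  have : x ≠ v := by rintro rfl; exact h hx
  simp [this]

lemma insert_ne {v : α} {A : Finset α} (hA : A ⊆ W.erase v) (hne : A ≠ W.erase v) :
    insert v A ≠ W := by
  rintro rfl
  apply hne
  rw [Finset.erase_insert]
  exact fun h => by simpa using hA h

lemma insert_card {v : α} {A : Finset α} (hA : A ⊆ W.erase v) (h0 : A.Nonempty) :
    2 ≤ (insert v A).card := by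
  rw [Finset.card_insert_of_notMem fun h => by simpa using hA h]
  have := Finset.card_pos.2 h0
  omega

/-- Lifting the four edges at a vertex of degree four and boundary zero in pairs. -/
lemma Ext.lift4 {v x1 x2 x3 x4 : α}
    (h : Ext W (s(v, x1) ::ₘ s(v, x2) ::ₘ s(v, x3) ::ₘ s(v, x4) ::ₘ R) P Q γ)
    (hS : Slack W (s(v, x1) ::ₘ s(v, x2) ::ₘ s(v, x3) ::ₘ s(v, x4) ::ₘ R) P Q γ)
    (hv : v ∈ W) (hγ : γ v = 0) (hP : v ∉ P) (hQ : v ∉ Q)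
    (h1 : x1 ≠ v) (h2 : x2 ≠ v) (h3 : x3 ≠ v) (h4 : x4 ≠ v) (hR : ∀ e ∈ R, v ∉ e) :
    Ext (W.erase v) (s(x1, x2) ::ₘ s(x3, x4) ::ₘ R) P Q γ := by
  refine { hR := ?_, hP := ?_, hQ := ?_, hγ := ?_, hs := ?_, hz := h.hz, hA := ?_ }
  · have := h.hR
    simp only [Multiset.mem_cons, forall_eq_or_imp, Sym2.mem_iff, forall_eq] at this ⊢
    simp only [Finset.mem_erase]
    refine ⟨⟨⟨h1, this.1.2⟩, h2, this.2.1.2⟩, ⟨⟨h3, this.2.2.1.2⟩, h4, this.2.2.2.1.2⟩, ?_⟩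
    intro e he x hx
    exact ⟨by rintro rfl; exact hR e he hx, this.2.2.2.2 e he x hx⟩
  · exact fun x hx => Finset.mem_erase.2 ⟨by rintro rfl; exact hP hx, h.hP x hx⟩
  · exact fun x hx => Finset.mem_erase.2 ⟨by rintro rfl; exact hQ hx, h.hQ x hx⟩
  · intro x hx
    by_cases hxv : x = v
    · rw [hxv, hγ]
    · exact h.hγ x fun hxW => hx (Finset.mem_erase.2 ⟨hxv, hxW⟩)
  · have := Finset.add_sum_erase W γ hv
    rw [hγ, zero_add, h.hs] at this
    exact this
  · intro A hA h0 hne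
    have hvA : v ∉ A := fun h => by simpa using hA h
    have k1 := h.hA A (hA.trans (Finset.erase_subset _ _)) h0
      (by rintro rfl; exact hvA hv)
    have k2 := hS (insert v A) (Finset.insert_subset hv (hA.trans (Finset.erase_subset _ _)))
      (insert_card hA h0) (insert_ne hA hne)
    unfold bb dg at *
    simp only [cut_cons, cut_insert hR, cnt_insert hP, cnt_insert hQ,
      Finset.sum_insert hvA, hγ, zero_add] at k1 k2 ⊢
    generalize ∑ x ∈ A, γ x + (cnt A Q : ZMod 3) - cnt A P = b at *
    by_cases m1 : x1 ∈ A <;> by_cases m2 : x2 ∈ A <;> by_cases m3 : x3 ∈ A <;>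
      by_cases m4 : x4 ∈ A <;>
      simp only [cr_mk, Finset.mem_insert, hvA, m1, m2, m3, m4, h1, h2, h3, h4, or_true,
        or_false, if_true, if_false, iff_true, iff_false, not_true,
        zero_add] at k1 k2 ⊢ <;>
      by_cases hb : b = 0 <;> simp only [ok, slk, hb, ne_eq, not_true, not_false_iff,
        true_imp_iff, false_imp_iff, true_and, and_true] at k1 k2 ⊢ <;> omega

/-- Lifting at a vertex of degree four and boundary zero that is the head of an arc from the
special vertex: the arc is lifted together with one of the other edges. -/
lemma Ext.lift3 {v x1 x2 x3 : α}
    (h : Ext W (s(v, x1) ::ₘ s(v, x2) ::ₘ s(v, x3) ::ₘ R) (v ::ₘ P) Q γ)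
    (hS : Slack W (s(v, x1) ::ₘ s(v, x2) ::ₘ s(v, x3) ::ₘ R) (v ::ₘ P) Q γ)
    (hv : v ∈ W) (hγ : γ v = 1) (hP : v ∉ P) (hQ : v ∉ Q)
    (h1 : x1 ≠ v) (h2 : x2 ≠ v) (h3 : x3 ≠ v) (hR : ∀ e ∈ R, v ∉ e) :
    Ext (W.erase v) (s(x1, x2) ::ₘ R) (x3 ::ₘ P) Q (γ - dl v + dl x3) := by
  have hR' := h.hR
  simp only [Multiset.mem_cons, forall_eq_or_imp, Sym2.mem_iff, forall_eq] at hR'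
  refine { hR := ?_, hP := ?_, hQ := ?_, hγ := ?_, hs := ?_, hz := by simpa using h.hz, hA := ?_ }
  · simp only [Multiset.mem_cons, forall_eq_or_imp, Sym2.mem_iff, forall_eq]
    simp only [Finset.mem_erase]
    refine ⟨⟨⟨h1, hR'.1.2⟩, h2, hR'.2.1.2⟩, ?_⟩
    intro e he x hx
    exact ⟨by rintro rfl; exact hR e he hx, hR'.2.2.2 e he x hx⟩
  · intro x hx
    rcases Multiset.mem_cons.1 hx with rfl | hx
    · exact Finset.mem_erase.2 ⟨h3, hR'.2.2.1.2⟩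
    · exact Finset.mem_erase.2 ⟨by rintro rfl; exact hP hx, h.hP x (Multiset.mem_cons_of_mem hx)⟩
  · exact fun x hx => Finset.mem_erase.2 ⟨by rintro rfl; exact hQ hx, h.hQ x hx⟩
  · intro x hx
    by_cases hxv : x = v
    · subst hxv; simp [hγ, dl_self, dl_ne h3.symm]
    · have hxW : x ∉ W := fun hxW => hx (Finset.mem_erase.2 ⟨hxv, hxW⟩)
      exact shift_off hv hR'.2.2.1.2 hxW (h.hγ x hxW)
  · have := Finset.add_sum_erase W γ hv
    rw [hγ, h.hs] at this
    rw [sum_shift]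
    simp [h3, hR'.2.2.1.2]
    linear_combination this
  · intro A hA h0 hne
    have hvA : v ∉ A := fun h => by simpa using hA h
    have k1 := h.hA A (hA.trans (Finset.erase_subset _ _)) h0
      (by rintro rfl; exact hvA hv)
    have k2 := hS (insert v A) (Finset.insert_subset hv (hA.trans (Finset.erase_subset _ _)))
      (insert_card hA h0) (insert_ne hA hne)
    rw [bb_shift]
    have e1 : bb A γ (v ::ₘ P) Q = bb A γ P Q := by unfold bb; simp [hvA]
    have e2 : bb (insert v A) γ (v ::ₘ P) Q = bb A γ P Q := by
      unfold bb; simp [hvA, hγ, cnt_insert hP, cnt_insert hQ]; ring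
    have e3 : bb A γ (x3 ::ₘ P) Q - (if v ∈ A then 1 else 0) + (if x3 ∈ A then 1 else 0)
        = bb A γ P Q := by
      unfold bb; by_cases h : x3 ∈ A <;> simp [hvA, h]; ring
    rw [e1] at k1
    rw [e2] at k2
    rw [e3]
    generalize bb A γ P Q = b at *
    unfold dg at *
    simp only [cut_cons, cut_insert hR, cnt_insert hP, cnt_insert hQ, cnt_cons,
      Finset.mem_insert_self, if_true] at k1 k2 ⊢
    by_cases m1 : x1 ∈ A <;> by_cases m2 : x2 ∈ A <;> by_cases m3 : x3 ∈ A <;>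
      simp only [cr_mk, Finset.mem_insert, hvA, m1, m2, m3, h1, h2, h3, or_true,
        or_false, if_true, if_false, iff_true, iff_false, not_true,
        zero_add] at k1 k2 ⊢ <;>
      by_cases hb : b = 0 <;> simp only [ok, slk, hb, ne_eq, not_true, not_false_iff,
        true_imp_iff, false_imp_iff, true_and, and_true] at k1 k2 ⊢ <;> omega

end Reductions

/-! ### The extension theorem -/

section Extension

variable {α : Type} [Fintype α] {W : Finset α} {R : Multiset (Sym2 α)} {P Q : Multiset α}
  {γ : α → ZMod 3}

lemma cnt_single_pos {v : α} {P : Multiset α} (h : v ∈ P) : 1 ≤ cnt {v} P := by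
  obtain ⟨P', rfl⟩ := Multiset.exists_cons_of_mem h
  simp

lemma cut_star_self {v : α} {X : Multiset α} (h : ∀ x ∈ X, x ≠ v) :
    cut {v} (X.map fun x => s(v, x)) = X.card := by
  induction X using Multiset.induction_on with
  | empty => simp
  | cons x X ih =>
    have h1 := h x (Multiset.mem_cons_self _ _)
    simp [ih fun y hy => h y (Multiset.mem_cons_of_mem hy), h1, add_comm]

lemma erase_card {v : α} (hv : v ∈ W) (hW : 3 ≤ W.card) : 2 ≤ (W.erase v).card := by
  rw [Finset.card_erase_of_mem hv]; omega

lemma single_ne {v : α} (hW : 3 ≤ W.card) : ({v} : Finset α) ≠ W := by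
  rintro rfl; simp at hW

/-- A vertex of degree four and boundary zero has at most one arc to or from the special vertex,
since otherwise its complement would not satisfy the strict degree condition. -/
lemma Ext.four_arcs {v : α} (h : Ext W R P Q γ) (hS : Slack W R P Q γ) (hW : 3 ≤ W.card)
    (hv : v ∈ W) (hd : dg {v} R P Q = 4) (hb : bb {v} γ P Q = 0) :
    cnt {v} P + cnt {v} Q ≤ 1 := by
  have hvW : ({v} : Finset α) ⊆ W := by simpa using hv
  have k1 := h.dg_compl {v}
  have k2 := h.bb_compl hvW
  have k3 := hS (W \ {v}) Finset.sdiff_subset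
    (by rw [Finset.sdiff_singleton_eq_erase]; exact erase_card hv hW) (by
      intro he; rw [← he] at hv; simp at hv)
  have k4 := h.hz
  rw [hb, add_zero] at k2
  rw [k2] at k3
  have k5 : dg {v} R P Q = cut {v} R + cnt {v} P + cnt {v} Q := rfl
  generalize P.card + Q.card = n at *
  generalize (P.card : ZMod 3) - Q.card = z at *
  generalize dg (W \ {v}) R P Q = d at *
  by_cases hz : z = 0 <;> simp [slk, small, hz] at k3 k4 <;> omega

/-- Reduction at a vertex of degree four and boundary zero with an arc from the special vertex. -/
lemma Ext.four_arc {v : α} (h : Ext W R P Q γ) (hS : Slack W R P Q γ)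
    (ih : IH α (meas W R P Q)) (hW : 3 ≤ W.card) (hl : s(v, v) ∉ R)
    (hv : v ∈ W) (hd : dg {v} R P Q = 4) (hb : bb {v} γ P Q = 0) (hvP : v ∈ P) : Sol R γ := by
  have k := h.four_arcs hS hW hv hd hb
  have k1 := cnt_single_pos hvP
  obtain ⟨P, rfl⟩ := Multiset.exists_cons_of_mem hvP
  have hP : v ∉ P := by
    intro hP
    have := cnt_single_pos hP
    simp at k; omega
  have hQ : v ∉ Q := by
    intro hQ
    have := cnt_single_pos hQ
    omega
  have hP0 : cnt {v} P = 0 := cnt_eq_zero fun x hx hxv => hP (Finset.mem_singleton.1 hxv ▸ hx)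
  have hQ0 : cnt {v} Q = 0 := cnt_eq_zero fun x hx hxv => hQ (Finset.mem_singleton.1 hxv ▸ hx)
  obtain ⟨X, R0, rfl, hX, hR0, hXc⟩ := star R v hl
  have hγ : γ v = 1 := by
    unfold bb at hb
    simp [hP0, hQ0] at hb
    linear_combination hb
  have hX3 : X.card = 3 := by
    unfold dg at hd
    simp [hP0, hQ0] at hd hXc
    omega
  obtain ⟨x1, x2, x3, rfl⟩ := Multiset.card_eq_three.1 hX3
  simp only [Multiset.insert_eq_cons, Multiset.mem_cons, Multiset.mem_singleton, forall_eq_or_imp,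
    forall_eq] at hX
  have e : (({x1, x2, x3} : Multiset α).map fun x => s(v, x)) + R0 =
      s(v, x1) ::ₘ s(v, x2) ::ₘ s(v, x3) ::ₘ R0 := by
    simp [Multiset.insert_eq_cons]
  rw [e] at h hS ih ⊢
  have h1 := ih _ _ _ _ _ (h.lift3 hS hv hγ hP hQ hX.1 hX.2.1 hX.2.2 hR0) (erase_card hv hW) (by
    unfold meas
    have := Finset.card_erase_lt_of_mem hv
    simp; omega)
  have h2 := sol_unlift v h1
  have h3 := sol_cons h2
  convert h3 using 1
  rw [Multiset.cons_swap (s(v, x2)) (s(v, x3)), Multiset.cons_swap (s(v, x1)) (s(v, x3))]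

/-- Reduction at a vertex of degree four and boundary zero. -/
lemma Ext.four {v : α} (h : Ext W R P Q γ) (hS : Slack W R P Q γ)
    (ih : IH α (meas W R P Q)) (hW : 3 ≤ W.card) (hl : s(v, v) ∉ R)
    (hv : v ∈ W) (hd : dg {v} R P Q = 4) (hb : bb {v} γ P Q = 0) : Sol R γ := by
  by_cases hP : v ∈ P
  · exact h.four_arc hS ih hW hl hv hd hb hP
  by_cases hQ : v ∈ Q
  · have hm : meas W R Q P = meas W R P Q := by unfold meas; ring
    have := sol_neg (h.neg.four_arc hS.neg (hm ▸ ih) hW hl hv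
      (by rw [← hd]; unfold dg; ring)
      (by
        have : bb {v} (-γ) Q P = - bb {v} γ P Q := by unfold bb; simp; ring
        rw [this, hb, neg_zero]) hQ)
    rwa [neg_neg] at this
  have hP0 : cnt {v} P = 0 := cnt_eq_zero fun x hx hxv => hP (Finset.mem_singleton.1 hxv ▸ hx)
  have hQ0 : cnt {v} Q = 0 := cnt_eq_zero fun x hx hxv => hQ (Finset.mem_singleton.1 hxv ▸ hx)
  obtain ⟨X, R0, rfl, hX, hR0, hXc⟩ := star R v hl
  have hγ : γ v = 0 := by
    unfold bb at hb
    simpa [hP0, hQ0] using hb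
  have hX4 : X.card = 4 := by
    unfold dg at hd
    rw [hP0, hQ0] at hd
    omega
  obtain ⟨x1, x2, x3, x4, rfl⟩ := Multiset.card_eq_four.1 hX4
  simp only [Multiset.insert_eq_cons, Multiset.mem_cons, Multiset.mem_singleton, forall_eq_or_imp,
    forall_eq] at hX
  have e : (({x1, x2, x3, x4} : Multiset α).map fun x => s(v, x)) + R0 =
      s(v, x1) ::ₘ s(v, x2) ::ₘ s(v, x3) ::ₘ s(v, x4) ::ₘ R0 := by
    simp [Multiset.insert_eq_cons]
  rw [e] at h hS ih ⊢
  have h1 := ih _ _ _ _ _ (h.lift4 hS hv hγ hP hQ hX.1 hX.2.1 hX.2.2.1 hX.2.2.2 hR0)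
    (erase_card hv hW) (by
      unfold meas
      have := Finset.card_erase_lt_of_mem hv
      simp; omega)
  rw [Multiset.cons_swap] at h1
  have h2 := sol_unlift v h1
  rw [Multiset.cons_swap (s(v, x4)), Multiset.cons_swap (s(v, x3))] at h2
  have h3 := sol_unlift v h2
  exact h3

/-- Removing an arc from `v` to the special vertex when `v` can lose an outgoing arc. -/
lemma Ext.drop {v : α} (h : Ext W R P (v ::ₘ Q) γ) (hS : Slack W R P (v ::ₘ Q) γ)
    (hv : ok (dg {v} R P (v ::ₘ Q) - 1) (bb {v} γ P (v ::ₘ Q) - 1)) :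
    Ext W R P Q γ := by
  refine { hR := h.hR, hP := h.hP, hQ := fun x hx => h.hQ x (Multiset.mem_cons_of_mem hx)
           hγ := h.hγ, hs := h.hs, hz := ?_, hA := ?_ }
  · have := h.hz
    rw [Multiset.card_cons, ← add_assoc] at this
    convert small_dec this using 1
    push_cast; ring
  · intro A hA h0 hne
    have e1 : ∀ A, dg A R P (v ::ₘ Q) = dg A R P Q + if v ∈ A then 1 else 0 := by
      intro A; unfold dg; simp; ring
    have e2 : ∀ A, bb A γ P (v ::ₘ Q) = bb A γ P Q + if v ∈ A then 1 else 0 := by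
      intro A; unfold bb; simp; ring
    have k1 := h.hA A hA h0 hne
    have k2 := hS A hA
    rw [e1, e2] at k1 k2 hv
    rcases single_or h0 with ⟨a, rfl⟩ | h2
    · by_cases hav : v = a
      · subst hav; simpa using hv
      · simpa [hav] using k1
    · have k3 := k2 h2 hne
      by_cases hvA : v ∈ A
      · simp only [hvA, if_true] at k3
        simpa using ok_of_slk_sub k3
      · simpa [hvA] using k1

/-- Trading an arc from the special vertex to `v` for two arcs in the opposite direction, which
does not change the boundary modulo `3`. The increase of the degree at `v` pays for deleting an
edge oriented from `w` to `v`. -/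
lemma Ext.trade {v w : α} (h : Ext W (s(w, v) ::ₘ R) (v ::ₘ P) 0 γ)
    (hS : Slack W (s(w, v) ::ₘ R) (v ::ₘ P) 0 γ) (hvw : w ≠ v)
    (hv : ok (dg {v} (s(w, v) ::ₘ R) (v ::ₘ P) 0) (bb {v} γ (v ::ₘ P) 0 + 1))
    (hw : ok (dg {w} (s(w, v) ::ₘ R) (v ::ₘ P) 0 - 1) (bb {w} γ (v ::ₘ P) 0 - 1)) :
    Ext W R P {v, v} (γ - dl w + dl v) := by
  have hwW : w ∈ W := h.hR _ (Multiset.mem_cons_self _ _) w (by simp)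
  have hvW : v ∈ W := h.hR _ (Multiset.mem_cons_self _ _) v (by simp)
  refine { hR := fun e he => h.hR e (Multiset.mem_cons_of_mem he)
           hP := fun x hx => h.hP x (Multiset.mem_cons_of_mem hx)
           hQ := fun x hx => by
             rw [Multiset.insert_eq_cons, Multiset.mem_cons, Multiset.mem_singleton, or_self] at hx
             rwa [hx]
           hγ := fun z hz => shift_off hwW hvW hz (h.hγ z hz)
           hs := sum_shift_W hwW hvW h.hs, hz := ?_, hA := ?_ }
  · have := h.hz
    simp only [Multiset.card_cons, Multiset.card_zero, add_zero, Nat.cast_zero, sub_zero] at this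
    have hp : P.card ≤ 6 := by have := this.1; omega
    simp only [Multiset.insert_eq_cons, Multiset.card_cons, Multiset.card_singleton]
    generalize P.card = p at *
    unfold small at *
    interval_cases p <;> revert this <;> decide
  · intro A hA h0 hne
    have e1 : ∀ A : Finset α, dg A (s(w, v) ::ₘ R) (v ::ₘ P) 0 + (if v ∈ A then 1 else 0) =
        dg A R P {v, v} + cr A s(w, v) := by
      intro A; unfold dg
      by_cases hvA : v ∈ A <;> simp [Multiset.insert_eq_cons, hvA, ← Multiset.cons_zero] <;> omega
    have h3 : (3 : ZMod 3) = 0 := rfl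
    have e2 : ∀ A : Finset α, bb A γ P {v, v} = bb A γ (v ::ₘ P) 0 := by
      intro A; unfold bb
      by_cases hvA : v ∈ A <;> simp [Multiset.insert_eq_cons, hvA, ← Multiset.cons_zero]
      linear_combination h3
    have k1 := h.hA A hA h0 hne
    have k2 := hS A hA
    have k3 := e1 A
    rw [bb_shift, e2]
    rcases single_or h0 with ⟨a, rfl⟩ | h2
    · by_cases hav : a = v
      · subst hav
        simp [hvw] at k3
        rw [show dg {a} R P {a, a} = _ from k3.symm]
        simpa [hvw] using hv
      · by_cases haw : a = w
        · subst haw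
          simp [hvw.symm] at k3
          rw [k3] at hw
          simpa [hvw.symm] using hw
        · simp [Ne.symm hav, Ne.symm haw] at k3 ⊢
          rwa [← k3]
    · have k4 := k2 h2 hne
      have k5 := k4.1
      by_cases hvA : v ∈ A <;> by_cases hwA : w ∈ A <;> simp [hvA, hwA] at k3 ⊢
      · apply ok_of_six; omega
      · apply ok_of_six; omega
      · rw [k3] at k4; exact ok_of_slk_sub k4
      · rwa [← k3]

/-- Two edges at `v` suffice to achieve any boundary value at `v`. -/
lemma star_sol {v : α} {X : Multiset α} (hX : ∀ x ∈ X, x ≠ v) (hc : 2 ≤ X.card) (t : ZMod 3) :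
    ∃ γ0 : α → ZMod 3, Sol (X.map fun x => s(v, x)) γ0 ∧ γ0 v = t := by
  obtain ⟨x, hx⟩ := Multiset.card_pos_iff_exists_mem.1 (show 0 < X.card by omega)
  obtain ⟨X, rfl⟩ := Multiset.exists_cons_of_mem hx
  rw [Multiset.card_cons] at hc
  obtain ⟨y, hy⟩ := Multiset.card_pos_iff_exists_mem.1 (show 0 < X.card by omega)
  obtain ⟨X, rfl⟩ := Multiset.exists_cons_of_mem hy
  have hxv : v ≠ x := (hX x (by simp)).symm
  have hyv : v ≠ y := (hX y (by simp)).symm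
  obtain ⟨γ1, h1⟩ := sol_exists (X.map fun x => s(v, x))
  have h3 : (3 : ZMod 3) = 0 := rfl
  simp only [Multiset.map_cons]
  obtain h | h | h := z3_cases (t - γ1 v)
  · refine ⟨γ1 + dl x - dl y, ?_, ?_⟩
    · rw [Sym2.eq_swap]; apply sol_cons; apply sol_cons
      convert h1 using 1; abel
    · simp [dl_ne hxv, dl_ne hyv]; linear_combination -h
  · refine ⟨γ1 + dl x + dl y - dl v - dl v, ?_, ?_⟩
    · rw [Sym2.eq_swap]; apply sol_cons; rw [Sym2.eq_swap]; apply sol_cons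
      convert h1 using 1; abel
    · simp [dl_ne hxv, dl_ne hyv, dl_self]; linear_combination -h - h3
  · refine ⟨γ1 - dl x - dl y + dl v + dl v, ?_, ?_⟩
    · apply sol_cons; apply sol_cons
      convert h1 using 1; abel
    · simp [dl_ne hxv, dl_ne hyv, dl_self]; linear_combination -h

/-- Without a special vertex, a vertex of small degree can take over its role. -/
lemma Ext.final {v : α} (h : Ext W R 0 0 γ) (ih : IH α (meas W R 0 0)) (hW : 3 ≤ W.card)
    (hl : s(v, v) ∉ R) (hv : v ∈ W) (hsm : small (dg {v} R 0 0) (bb {v} γ 0 0)) : Sol R γ := by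
  have hvW : ({v} : Finset α) ⊆ W := by simpa using hv
  obtain ⟨X, R0, hR, hX, hR0, hXc⟩ := star R v hl
  have hd := (h.hA {v} hvW (by simp) (single_ne hW)).1
  have e1 : dg {v} R 0 0 = cut {v} R := by unfold dg; simp
  obtain ⟨γ0, h1, h2⟩ := star_sol hX (by omega) (γ v)
  have k1 := h.dg_compl {v}
  have k2 := h.bb_compl hvW
  simp at k1 k2
  have hout : outer (W.erase v) R = X.map fun x => s(v, x) := by
    unfold outer
    rw [hR, Multiset.filter_add, Multiset.filter_eq_self.2, Multiset.filter_eq_nil.2, add_zero]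
    · intro e he
      rw [not_not]
      intro x hx
      refine Finset.mem_erase.2 ⟨?_, h.hR e (by rw [hR]; exact Multiset.mem_add.2 (Or.inr he)) x hx⟩
      rintro rfl; exact hR0 e he hx
    · intro e he
      obtain ⟨x, hx, rfl⟩ := Multiset.mem_map.1 he
      simp
  have hin : ∀ e ∈ (X.map fun x => s(v, x)), ∀ x ∈ e, x ∈ W := by
    intro e he
    exact h.hR e (by rw [hR]; exact Multiset.mem_add.2 (Or.inl he))
  have hsW : ∑ x ∈ W, γ0 x = 0 :=
    sol_sum_zero h1 W (cut_eq_zero fun e he => cr_eq_zero_of_mem (hin e he))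
  apply h.extend ih (A := W.erase v) (Finset.erase_subset _ _) (erase_card hv hW)
    (fun he => by rw [← he] at hv; simp at hv) (γ0 := γ0)
  · rw [Finset.erase_eq]
    have k3 := small_neg hsm
    rw [show dg (W \ {v}) R 0 0 = dg {v} R 0 0 by omega,
      show bb (W \ {v}) γ 0 0 = - bb {v} γ 0 0 by linear_combination k2]
    exact k3
  · rw [hout]; exact h1
  · intro x hx
    by_cases hxv : x = v
    · rw [hxv, h2]
    · have hxW : x ∉ W := fun hxW => hx (Finset.mem_erase.2 ⟨hxv, hxW⟩)
      rw [h.hγ x hxW]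
      exact sol_supp h1 fun e he hxe => hxW (hin e he x hxe)
  · have k3 := Finset.add_sum_erase W γ hv
    have k4 := Finset.add_sum_erase W γ0 hv
    rw [h.hs] at k3
    rw [hsW, h2] at k4
    linear_combination k4 - k3

end Extension

section ExtensionMain

variable {α : Type} [Fintype α] {W : Finset α} {R : Multiset (Sym2 α)} {P Q : Multiset α}
  {γ : α → ZMod 3}

lemma dg_swap (A : Finset α) (R : Multiset (Sym2 α)) (P Q : Multiset α) :
    dg A R Q P = dg A R P Q := by unfold dg; ring

lemma bb_swap (A : Finset α) (γ : α → ZMod 3) (P Q : Multiset α) :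
    bb A (-γ) Q P = - bb A γ P Q := by unfold bb; simp; ring

lemma Ext.unloop {x : α} (h : Ext W (s(x, x) ::ₘ R) P Q γ) : Ext W R P Q γ where
  hR e he := h.hR e (Multiset.mem_cons_of_mem he)
  hP := h.hP
  hQ := h.hQ
  hγ := h.hγ
  hs := h.hs
  hz := h.hz
  hA A h1 h2 h3 := by simpa [dg_cons] using h.hA A h1 h2 h3

/-- The extension theorem when every vertex can lose an outgoing edge and no edge can be deleted:
then every vertex has `τ ∈ {1, 2}`, and the special vertex can be disposed of. -/
lemma Ext.pos (h : Ext W R P Q γ) (hS : Slack W R P Q γ)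
    (ih : IH α (meas W R P Q)) (hW : 3 ≤ W.card) (hl : ∀ v, s(v, v) ∉ R)
    (hplus : ∀ v ∈ W, ok (dg {v} R P Q - 1) (bb {v} γ P Q - 1))
    (hno : ∀ x y, s(x, y) ∈ R → ¬ ok (dg {y} R P Q - 1) (bb {y} γ P Q + 1)) : Sol R γ := by
  have hedge : ∀ v ∈ W, ∃ w ∈ W, w ≠ v ∧ s(w, v) ∈ R := by
    intro v hv
    have h1 := h.cut_pos (A := {v}) (by simpa using hv) (by simp) (single_ne hW)
    obtain ⟨X, R0, hR, hX, -, hXc⟩ := star R v (hl v)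
    obtain ⟨w, hw⟩ := Multiset.card_pos_iff_exists_mem.1 (show 0 < X.card by omega)
    have h2 : s(w, v) ∈ R := by
      rw [Sym2.eq_swap, hR, Multiset.mem_add]
      exact Or.inl (Multiset.mem_map.2 ⟨w, hw, rfl⟩)
    exact ⟨w, h.hR _ h2 w (by simp), hX w hw, h2⟩
  have htype : ∀ v ∈ W, (dg {v} R P Q = 5 ∧ bb {v} γ P Q = 1) ∨
      (dg {v} R P Q = 6 ∧ bb {v} γ P Q = 2) := by
    intro v hv
    obtain ⟨w, -, -, hwv⟩ := hedge v hv
    exact plus_cases (h.hA {v} (by simpa using hv) (by simp) (single_ne hW)) (hplus v hv)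
      (hno w v hwv)
  induction Q using Multiset.induction_on with
  | cons v Q _ =>
    have hvW := h.hQ v (Multiset.mem_cons_self _ _)
    exact ih _ _ _ _ _ (h.drop hS (hplus v hvW)) (by omega) (by simp [meas])
  | empty =>
    induction P using Multiset.induction_on with
    | cons v P _ =>
      have hvW := h.hP v (Multiset.mem_cons_self _ _)
      obtain ⟨w, hw, hwv, he⟩ := hedge v hvW
      obtain ⟨R', rfl⟩ := Multiset.exists_cons_of_mem he
      apply sol_cons
      apply ih _ _ _ _ _ (h.trade hS hwv ?_ (hplus w hw)) (by omega)
      · simp [meas, Multiset.insert_eq_cons]; omega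
      · rcases htype v hvW with ⟨h1, h2⟩ | ⟨h1, h2⟩ <;> rw [h1, h2] <;> unfold ok <;> decide
    | empty =>
      obtain ⟨v, hv⟩ := Finset.card_pos.1 (show 0 < W.card by omega)
      apply h.final ih hW (hl v) hv
      rcases htype v hv with ⟨h1, h2⟩ | ⟨h1, h2⟩ <;> rw [h1, h2] <;> unfold small <;> decide

/-- The inductive step of the extension theorem: contract a set that is not slack, lift at a vertex
of degree four and boundary zero, or delete an edge. If none applies, then by connectivity all
vertices have `τ` positive or all have `τ` negative, and reversing orientations swaps the cases. -/
lemma Ext.step (h : Ext W R P Q γ) (hW2 : 2 ≤ W.card) (ih : IH α (meas W R P Q)) : Sol R γ := by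
  by_cases hW : W.card = 2
  · exact h.base hW
  replace hW : 3 ≤ W.card := by omega
  by_cases hS : Slack W R P Q γ
  swap
  · unfold Slack at hS
    push Not at hS
    -- Contract `A`, orient the quotient, then extend inside `A` with the complement contracted.
    obtain ⟨A, h1, h2, h3, h4⟩ := hS
    exact h.tight ih h1 h2 h3 h4
  by_cases hl : ∀ v, s(v, v) ∉ R
  swap
  · push Not at hl
    obtain ⟨v, hv⟩ := hl
    obtain ⟨R', rfl⟩ := Multiset.exists_cons_of_mem hv
    apply sol_cons
    rw [sub_add_cancel]
    exact ih _ _ _ _ _ h.unloop hW2 (by simp [meas])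
  by_cases h4 : ∃ v ∈ W, dg {v} R P Q = 4 ∧ bb {v} γ P Q = 0
  · obtain ⟨v, hv, hd, hb⟩ := h4
    exact h.four hS ih hW (hl v) hv hd hb
  by_cases h5 : ∃ x y, s(x, y) ∈ R ∧ ok (dg {x} R P Q - 1) (bb {x} γ P Q - 1) ∧
      ok (dg {y} R P Q - 1) (bb {y} γ P Q + 1)
  · obtain ⟨x, y, he, hx, hy⟩ := h5
    obtain ⟨R', rfl⟩ := Multiset.exists_cons_of_mem he
    apply sol_cons
    refine ih _ _ _ _ _ (h.del hS ?_ hx hy) hW2 (by simp [meas])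
    rintro rfl; exact hl x he
  push Not at h4 h5
  have hor : ∀ v ∈ W, ok (dg {v} R P Q - 1) (bb {v} γ P Q - 1) ∨
      ok (dg {v} R P Q - 1) (bb {v} γ P Q + 1) := by
    intro v hv
    exact ok_or (h.hA {v} (by simpa using hv) (by simp) (single_ne hW))
      fun hh => h4 v hv hh.1 hh.2
  set A := W.filter fun v => ok (dg {v} R P Q - 1) (bb {v} γ P Q - 1) with hA
  -- No edge joins a vertex that can lose an outgoing edge to one that can lose an incoming edge.
  have hcut : cut A R = 0 := by
    apply cut_eq_zero
    intro e he
    have hW' := h.hR e he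
    induction e using Sym2.ind with
    | _ u v =>
      have hu := hW' u (by simp)
      have hv := hW' v (by simp)
      rw [cr_mk, if_pos]
      simp only [hA, Finset.mem_filter, hu, hv, true_and]
      constructor
      · intro hp
        exact (hor v hv).resolve_right (h5 u v he hp)
      · intro hp
        exact (hor u hu).resolve_right (h5 v u (Sym2.eq_swap ▸ he) hp)
  rcases A.eq_empty_or_nonempty with h0 | h0
  · have hminus : ∀ v ∈ W, ok (dg {v} R P Q - 1) (bb {v} γ P Q + 1) := by
      intro v hv
      refine (hor v hv).resolve_left fun hp => ?_
      have : v ∈ A := Finset.mem_filter.2 ⟨hv, hp⟩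
      rw [h0] at this
      simp at this
    have hm : meas W R Q P = meas W R P Q := by unfold meas; ring
    have := h.neg.pos hS.neg (hm ▸ ih) hW hl (by
      intro v hv
      rw [dg_swap, bb_swap]
      convert ok_neg (hminus v hv) using 1
      ring) (by
      intro x y he hp
      have hx := h.hR _ he x (by simp)
      rw [dg_swap, bb_swap] at hp
      apply h5 y x (Sym2.eq_swap ▸ he) _ (hminus x hx)
      convert ok_neg hp using 1
      ring)
    simpa using sol_neg this
  · have hAW : A = W := by
      by_contra hne
      exact h.cut_pos (Finset.filter_subset _ _) h0 hne hcut
    have hplus : ∀ v ∈ W, ok (dg {v} R P Q - 1) (bb {v} γ P Q - 1) := by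
      intro v hv
      rw [← hAW] at hv
      exact (Finset.mem_filter.1 hv).2
    exact h.pos hS ih hW hl hplus fun x y he => h5 x y he (hplus x (h.hR _ he x (by simp)))

/-- The extension theorem of Lovász, Thomassen, Wu and Zhang: if the degree condition holds for
every proper nonempty vertex set, then a prescribed orientation of the edges at a vertex of small
degree extends to an orientation with the prescribed boundary modulo `3`. -/
theorem extension (h : Ext W R P Q γ) (hW : 2 ≤ W.card) : Sol R γ := by
  have : ∀ m, IH α m := by
    intro m
    induction m with
    | zero => intro W R P Q γ _ _ h; omega
    | succ m ih =>
      intro W R P Q γ h h2 hm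
      exact h.step h2 fun W' R' P' Q' γ' h' h2' hm' => ih _ _ _ _ _ h' h2' (by omega)
  exact this _ _ _ _ _ _ h hW (Nat.lt_succ_self _)

end ExtensionMain

/-! ### Dense multigraphs -/

section Dense

variable {α : Type} [Fintype α] {W : Finset α} {R : Multiset (Sym2 α)} {γ : α → ZMod 3}

/-- The class of multigraphs on `W` with at least `4|W| - 6` edges in which every proper nonempty
vertex set `B` spans at most `4|B| - 4` edges. -/
structure Dense (W : Finset α) (R : Multiset (Sym2 α)) : Prop where
  hR : ∀ e ∈ R, ∀ x ∈ e, x ∈ W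
  hW : 2 ≤ W.card
  hc : 4 * W.card ≤ R.card + 6
  hB : ∀ B ⊆ W, B.Nonempty → B ≠ W → inn B R + 4 ≤ 4 * B.card

lemma inn_map (φ : α → α) {B : Finset α} (hR : ∀ e ∈ R, ∀ x ∈ e, x ∈ W) :
    inn B (R.map (Sym2.map φ)) = inn (W.filter fun x => φ x ∈ B) R := by
  unfold inn
  rw [Multiset.map_map]
  congr 1
  apply Multiset.map_congr rfl
  intro e he
  have := hR e he
  induction e using Sym2.ind with
  | _ u v => simp at this; simp [this]

lemma inn_eq_card {A : Finset α} (h : ∀ e ∈ R, ∀ x ∈ e, x ∈ A) : inn A R = R.card := by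
  induction R using Multiset.induction_on with
  | empty => simp
  | cons e R ih =>
    have h1 := h e (Multiset.mem_cons_self _ _)
    rw [inn_cons, ih fun f hf => h f (Multiset.mem_cons_of_mem hf), Multiset.card_cons, add_comm]
    congr 1
    induction e using Sym2.ind with
    | _ u v => simp at h1; simp [h1]

lemma inn_inner {A B : Finset α} (hB : B ⊆ A) : inn B (inner A R) = inn B R := by
  unfold inner
  induction R using Multiset.induction_on with
  | empty => simp
  | cons e R ih =>
    by_cases h : ∀ x ∈ e, x ∈ A
    · rw [Multiset.filter_cons_of_pos (p := fun e : Sym2 α => ∀ x ∈ e, x ∈ A) _ h, inn_cons,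
        inn_cons, ih]
    · rw [Multiset.filter_cons_of_neg (p := fun e : Sym2 α => ∀ x ∈ e, x ∈ A) _ h, inn_cons, ih]
      induction e using Sym2.ind with
      | _ u v =>
        have : ¬ (u ∈ B ∧ v ∈ B) := fun hh => h (by simp [hB hh.1, hB hh.2])
        rw [ins_mk, if_neg this, zero_add]

lemma inner_mem {A : Finset α} : ∀ e ∈ inner A R, ∀ x ∈ e, x ∈ A :=
  fun _ he => (Multiset.mem_filter.1 he).2

lemma inner_card (A : Finset α) : (inner A R).card = inn A R := by
  rw [← inn_eq_card inner_mem, inn_inner subset_rfl]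

lemma inn_outer {A B : Finset α} (h : A ⊆ B) : inn B (outer A R) + inn A R = inn B R := by
  conv_rhs => rw [← inner_add_outer A R]
  rw [inn_add, inn_eq_card fun e he x hx => h (inner_mem e he x hx), inner_card, add_comm]

lemma inn_outer_le (A B : Finset α) : inn B (outer A R) ≤ inn B R := by
  conv_rhs => rw [← inner_add_outer A R]
  rw [inn_add]; omega

/-- Every edge is inside `A`, inside the complement of `A`, or leaves `A`. -/
lemma inn_split {A : Finset α} (h : ∀ e ∈ R, ∀ x ∈ e, x ∈ W) :
    inn A R + inn (W \ A) R + cut A R = R.card := by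
  induction R using Multiset.induction_on with
  | empty => simp
  | cons e R ih =>
    have h1 := h e (Multiset.mem_cons_self _ _)
    have h2 := ih fun f hf => h f (Multiset.mem_cons_of_mem hf)
    rw [inn_cons, inn_cons, cut_cons, Multiset.card_cons, ← h2]
    induction e using Sym2.ind with
    | _ u v =>
      simp at h1
      by_cases hu : u ∈ A <;> by_cases hv : v ∈ A <;> simp [h1, hu, hv] <;> omega

lemma Dense.no_loop (h : Dense W R) {v : α} (hv : v ∈ W) : s(v, v) ∉ R := by
  intro hl
  have h1 := h.hB {v} (by simpa using hv) (by simp) (by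
    intro he
    have := h.hW
    rw [← he] at this; simp at this)
  obtain ⟨R', rfl⟩ := Multiset.exists_cons_of_mem hl
  simp at h1

/-- All boundaries are achieved by the dense multigraphs on fewer than `m` vertices. -/
def DIH (α : Type) [Fintype α] (m : ℕ) : Prop :=
  ∀ (W : Finset α) (R : Multiset (Sym2 α)) (γ : α → ZMod 3), Dense W R → W.card < m →
    (∀ x ∉ W, γ x = 0) → ∑ x ∈ W, γ x = 0 → Sol R γ

/-- A proper dense set can be contracted. It is chosen to maximize `e(A) - 4|A|`, so that the
quotient is in the class again. -/
lemma Dense.contract (h : Dense W R) (ih : DIH α W.card) (hγ : ∀ x ∉ W, γ x = 0)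
    (hs : ∑ x ∈ W, γ x = 0)
    (hA : ∃ A ⊆ W, 2 ≤ A.card ∧ A ≠ W ∧ 4 * A.card ≤ inn A R + 6) : Sol R γ := by
  obtain ⟨A0, hA0, h20, hne0, hd0⟩ := hA
  obtain ⟨A, hAm, hmax⟩ := Finset.exists_max_image
    (W.powerset.filter fun A => 2 ≤ A.card ∧ A ≠ W ∧ 4 * A.card ≤ inn A R + 6)
    (fun A => (inn A R : ℤ) - 4 * A.card) ⟨A0, by simp [hA0, h20, hne0, hd0]⟩
  simp only [Finset.mem_filter, Finset.mem_powerset] at hAm hmax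
  obtain ⟨hA, h2, hne, hd⟩ := hAm
  have hmax' : ∀ B ⊆ W, 2 ≤ B.card → B ≠ W →
      (inn B R : ℤ) - 4 * B.card ≤ inn A R - 4 * A.card := by
    intro B hB hB2 hBne
    by_cases hBd : 4 * B.card ≤ inn B R + 6
    · exact hmax B ⟨hB, hB2, hBne, hBd⟩
    · omega
  have hlt := Finset.card_lt_card (hA.ssubset_of_ne hne)
  have h4 := h.hB A hA (Finset.card_pos.1 (by omega)) hne
  obtain ⟨a, ha⟩ : A.Nonempty := Finset.card_pos.1 (by omega)
  have hc := card_image_ctr ha hA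
  have hDA : Dense A (inner A R) :=
    { hR := inner_mem
      hW := h2
      hc := by rw [inner_card]; exact hd
      hB := fun B hB h0 hBA => by
        rw [inn_inner hB]
        exact h.hB B (hB.trans hA) h0 fun hBW => hBA (hB.antisymm (hBW ▸ hA)) }
  have hout : ∀ e ∈ outer A R, ∀ x ∈ e, x ∈ W :=
    fun e he => h.hR e (Multiset.mem_filter.1 he).1
  have hcard : (inner A R).card + (outer A R).card = R.card := by
    rw [← Multiset.card_add, inner_add_outer]
  rw [inner_card] at hcard
  have hDW : Dense (W.image (ctr A a)) ((outer A R).map (Sym2.map (ctr A a))) := by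
    refine { hR := ?_, hW := by omega, hc := ?_, hB := ?_ }
    · intro e he y hy
      obtain ⟨e, he', rfl⟩ := Multiset.mem_map.1 he
      obtain ⟨x, hx, rfl⟩ := Sym2.mem_map.1 hy
      exact Finset.mem_image_of_mem _ (hout e he' x hx)
    · rw [Multiset.card_map]
      have := h.hc
      omega
    · intro B' hB' h0 hne'
      rw [inn_map _ hout]
      set B := W.filter fun x => ctr A a x ∈ B' with hB
      have hBW : B ⊆ W := Finset.filter_subset _ _
      have hB0 : B.Nonempty := by
        obtain ⟨y, hy⟩ := h0
        obtain ⟨x, hx, rfl⟩ := Finset.mem_image.1 (hB' hy)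
        exact ⟨x, by simp [hB, hx, hy]⟩
      have hBne : B ≠ W := by
        intro heq
        apply hne'
        apply hB'.antisymm
        intro y hy
        obtain ⟨x, hx, rfl⟩ := Finset.mem_image.1 hy
        rw [← heq] at hx
        exact (Finset.mem_filter.1 hx).2
      have hk := h.hB B hBW hB0 hBne
      by_cases haB : a ∈ B'
      · have hAB : A ⊆ B := fun x hx =>
          Finset.mem_filter.2 ⟨hA hx, by simp [ctr, hx, haB]⟩
        have h5 := card_image_ctr ha hAB
        have h6 : (B.image (ctr A a)).card ≤ B'.card := by
          apply Finset.card_le_card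
          intro y hy
          obtain ⟨x, hx, rfl⟩ := Finset.mem_image.1 hy
          exact (Finset.mem_filter.1 hx).2
        have h7 := hmax' B hBW (h2.trans (Finset.card_le_card hAB)) hBne
        have h8 := inn_outer (R := R) hAB
        omega
      · have h5 : B.card ≤ B'.card := by
          apply Finset.card_le_card
          intro x hx
          have hx' := (Finset.mem_filter.1 hx).2
          by_cases hxA : x ∈ A
          · simp [ctr, hxA] at hx'; exact absurd hx' haB
          · simpa [ctr, hxA] using hx'
        have h6 := inn_outer_le (R := R) A B
        omega
  have h5 := ih _ _ (push (ctr A a) γ) hDW (by omega) (by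
    intro y hy
    apply Finset.sum_eq_zero
    intro x hx
    apply hγ
    intro hxW
    apply hy
    rw [← (Finset.mem_filter.1 hx).2]
    exact Finset.mem_image_of_mem _ hxW) (by
    rw [sum_push_of_supp _ hγ, Finset.filter_true_of_mem, hs]
    intro x hx; exact Finset.mem_image_of_mem _ hx)
  obtain ⟨γ0, h6, h7⟩ := sol_map _ h5
  obtain ⟨h8, h9⟩ := push_ctr ha h7
  have h10 := ih A (inner A R) (γ - γ0) hDA hlt
    (fun x hx => by rw [Pi.sub_apply, h8 x hx, sub_self])
    (by simp only [Pi.sub_apply, Finset.sum_sub_distrib]; rw [h9, sub_self])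
  have := sol_add h10 h6
  rwa [inner_add_outer, sub_add_cancel] at this

/-- At a vertex of degree five and boundary zero, three edges are oriented away from the vertex,
contributing `3 = 0`, and the other two are lifted. -/
lemma Dense.five (h : Dense W R) (ih : DIH α W.card) (hW : 3 ≤ W.card) (hγ : ∀ x ∉ W, γ x = 0)
    (hs : ∑ x ∈ W, γ x = 0)
    (hA : ∀ A ⊆ W, 2 ≤ A.card → A ≠ W → inn A R + 7 ≤ 4 * A.card) {v : α} (hv : v ∈ W)
    (h5 : cut {v} R = 5) (hγv : γ v = 0) : Sol R γ := by
  obtain ⟨X, R0, rfl, hX, hR0, hXc⟩ := star R v (h.no_loop hv)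
  rw [h5] at hXc
  obtain ⟨x1, hx1⟩ := Multiset.card_pos_iff_exists_mem.1 (show 0 < X.card by omega)
  obtain ⟨X, rfl⟩ := Multiset.exists_cons_of_mem hx1
  rw [Multiset.card_cons] at hXc
  obtain ⟨x2, x3, x4, x5, rfl⟩ := Multiset.card_eq_four.1 (show X.card = 4 by omega)
  simp only [Multiset.insert_eq_cons, Multiset.mem_cons, Multiset.mem_singleton, forall_eq_or_imp,
    forall_eq] at hX
  obtain ⟨n1, n2, n3, n4, n5⟩ := hX
  have e : ((x1 ::ₘ {x2, x3, x4, x5} : Multiset α).map fun x => s(v, x)) + R0 =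
      s(v, x1) ::ₘ s(v, x2) ::ₘ s(v, x3) ::ₘ s(v, x4) ::ₘ s(v, x5) ::ₘ R0 := by
    simp [Multiset.insert_eq_cons]
  rw [e] at h hA ⊢
  have hR' := h.hR
  simp only [Multiset.mem_cons, forall_eq_or_imp, Sym2.mem_iff, forall_eq] at hR'
  obtain ⟨⟨-, w1⟩, ⟨-, w2⟩, ⟨-, w3⟩, ⟨-, w4⟩, ⟨-, w5⟩, hR'⟩ := hR'
  have h12 : x1 ≠ x2 := by
    rintro rfl
    have k := hA {v, x1} (by simp [Finset.insert_subset_iff, hv, w1])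
      (by rw [Finset.card_pair n1.symm]) (by
        rintro rfl; rw [Finset.card_pair n1.symm] at hW; omega)
    rw [Finset.card_pair n1.symm] at k
    simp at k
  have hD : Dense (W.erase v) (s(x1, x2) ::ₘ R0) := by
    refine { hR := ?_, hW := erase_card hv hW, hc := ?_, hB := ?_ }
    · simp only [Multiset.mem_cons, forall_eq_or_imp, Sym2.mem_iff, forall_eq]
      simp only [Finset.mem_erase]
      refine ⟨⟨⟨n1, w1⟩, n2, w2⟩, ?_⟩
      intro f hf x hx
      exact ⟨by rintro rfl; exact hR0 f hf hx, hR' f hf x hx⟩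
    · have := h.hc
      rw [Finset.card_erase_of_mem hv]
      simp at this ⊢
      omega
    · intro B hB h0 hne
      have hvB : v ∉ B := fun h => by simpa using hB h
      have hBW := hB.trans (Finset.erase_subset _ _)
      have hBne : B ≠ W := by rintro rfl; exact hvB hv
      have k1 := h.hB B hBW h0 hBne
      have k2 := hA B hBW
      simp only [inn_cons, ins_mk, hvB, false_and, if_false, zero_add] at k1 k2 ⊢
      rcases single_or h0 with ⟨a, rfl⟩ | h2
      · rw [if_neg, zero_add]
        · exact k1
        · simp only [Finset.mem_singleton]
          rintro ⟨rfl, rfl⟩; exact h12 rfl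
      · have := k2 h2 hBne
        split_ifs <;> omega
  have h3 : (3 : ZMod 3) = 0 := rfl
  have key := ih _ _ (γ + dl x3 + dl x4 + dl x5) hD (Finset.card_erase_lt_of_mem hv) (by
    intro x hx
    by_cases hxv : x = v
    · subst hxv; simp [hγv, dl_ne n3.symm, dl_ne n4.symm, dl_ne n5.symm]
    · have hxW : x ∉ W := fun hxW => hx (Finset.mem_erase.2 ⟨hxv, hxW⟩)
      have m3 : x ≠ x3 := by rintro rfl; exact hxW w3
      have m4 : x ≠ x4 := by rintro rfl; exact hxW w4
      have m5 : x ≠ x5 := by rintro rfl; exact hxW w5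
      simp [hγ x hxW, dl_ne m3, dl_ne m4, dl_ne m5]) (by
    have := Finset.add_sum_erase W γ hv
    rw [hγv, zero_add, hs] at this
    simp only [Pi.add_apply, Finset.sum_add_distrib, sum_dl, Finset.mem_erase, n3, n4, n5, w3, w4,
      w5, ne_eq, not_false_iff, true_and, if_true]
    linear_combination this + h3)
  have k := sol_unlift v key
  have e2 : s(v, x1) ::ₘ s(v, x2) ::ₘ s(v, x3) ::ₘ s(v, x4) ::ₘ s(v, x5) ::ₘ R0 =
      s(v, x3) ::ₘ s(v, x4) ::ₘ s(v, x5) ::ₘ s(v, x1) ::ₘ s(v, x2) ::ₘ R0 := by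
    simp only [← Multiset.singleton_add]; abel
  rw [e2]
  apply sol_cons; apply sol_cons; apply sol_cons
  convert k using 1
  ext x
  simp
  linear_combination -(dl v x) * h3

/-- In a dense multigraph every boundary is achieved by some orientation. -/
lemma Dense.step (h : Dense W R) (ih : DIH α W.card) (hγ : ∀ x ∉ W, γ x = 0)
    (hs : ∑ x ∈ W, γ x = 0) : Sol R γ := by
  by_cases hW2 : W.card = 2
  · obtain ⟨x, y, hxy, rfl⟩ := Finset.card_eq_two.1 hW2
    have hd : ({x, y} : Finset α) \ {x} = {y} := by
      ext z; simp; constructor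
      · rintro ⟨rfl | h, h'⟩ <;> simp_all
      · rintro rfl; simp [hxy.symm]
    have h1 := inn_split (A := {x}) h.hR
    have h2 := h.hB {x} (by simp) (by simp) (by intro he; rw [← he] at hW2; simp at hW2)
    have h3 := h.hB {y} (by simp) (by simp) (by intro he; rw [← he] at hW2; simp at hW2)
    have h4 := h.hc
    rw [hd] at h1
    simp at h2 h3
    exact two_sol hxy h.hR (by omega) hγ hs
  have hW := h.hW
  replace hW : 3 ≤ W.card := by omega
  by_cases hA : ∃ A ⊆ W, 2 ≤ A.card ∧ A ≠ W ∧ 4 * A.card ≤ inn A R + 6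
  · exact h.contract ih hγ hs hA
  push Not at hA
  replace hA : ∀ A ⊆ W, 2 ≤ A.card → A ≠ W → inn A R + 7 ≤ 4 * A.card := by
    intro A h1 h2 h3
    have := hA A h1 h2 h3
    omega
  by_cases h5 : ∃ v ∈ W, cut {v} R = 5 ∧ γ v = 0
  · obtain ⟨v, hv, h5, h0⟩ := h5
    exact h.five ih hW hγ hs hA hv h5 h0
  push Not at h5
  -- From here on the degree condition holds without a special vertex. The bound for `W \ {v}` gives
  -- degree at least `5` at `v`, and degree `5` with boundary zero has been excluded.
  have hone : ∀ v ∈ W, ok (cut {v} R) (γ v) := by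
    intro v hv
    have h1 := inn_split (A := {v}) h.hR
    have h2 := h.hB {v} (by simpa using hv) (by simp) (single_ne hW)
    have h3 := hA (W \ {v}) Finset.sdiff_subset
      (by rw [Finset.sdiff_singleton_eq_erase]; exact erase_card hv hW) (by
        intro he; rw [← he] at hv; simp at hv)
    have h4 := h.hc
    rw [Finset.sdiff_singleton_eq_erase, Finset.card_erase_of_mem hv,
      ← Finset.sdiff_singleton_eq_erase] at h3
    simp at h2
    have h6 : 5 ≤ cut {v} R := by omega
    exact ⟨by omega, fun h0 h7 => h5 v hv h7 h0, fun _ => by omega⟩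
  refine extension (P := 0) (Q := 0) { hR := h.hR, hP := by simp, hQ := by simp, hγ := hγ, hs := hs
                                       hz := by unfold small; simp, hA := ?_ } h.hW
  intro A hAW h0 hne
  have e1 : dg A R 0 0 = cut A R := by unfold dg; simp
  have e2 : bb A γ 0 0 = ∑ x ∈ A, γ x := by unfold bb; simp
  rw [e1, e2]
  have hne0 : (W \ A).Nonempty := Finset.sdiff_nonempty.2 fun h => hne (hAW.antisymm h)
  rcases single_or h0 with ⟨a, rfl⟩ | hA2
  · simpa using hone a (hAW (by simp))
  rcases single_or hne0 with ⟨a, ha⟩ | hA2'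
  · have ha' : a ∈ W := Finset.sdiff_subset (ha ▸ Finset.mem_singleton_self a)
    have k1 := cut_compl (A := A) h.hR
    have k2 := sum_compl hAW hs
    rw [ha] at k1 k2
    simp at k2
    have := ok_neg (hone a ha')
    rwa [k2, neg_neg, k1] at this
  · -- Both sides span at most `4|A| - 7` edges, so at least `4|W| - 6 - (4|W| - 14) = 8` edges cross.
    apply ok_of_six
    have h1 := inn_split (A := A) h.hR
    have h2 := hA A hAW hA2 hne
    have h3 := hA (W \ A) Finset.sdiff_subset hA2' (by
      intro he
      obtain ⟨x, hx⟩ := h0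
      have := hAW hx
      rw [← he] at this
      exact (Finset.mem_sdiff.1 this).2 hx)
    have h4 := h.hc
    have h6 := Finset.card_sdiff_add_card_eq_card hAW
    omega

/-- A dense multigraph is `ℤ₃`-connected. -/
lemma Dense.sol (h : Dense W R) (hγ : ∀ x ∉ W, γ x = 0) (hs : ∑ x ∈ W, γ x = 0) : Sol R γ := by
  have : ∀ m, DIH α m := by
    intro m
    induction m with
    | zero => intro W R γ _ h; omega
    | succ m ih =>
      intro W R γ h hm h1 h2
      exact h.step (fun W' R' γ' h' hm' => ih W' R' γ' h' (by omega)) h1 h2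
  exact this _ _ _ _ h (Nat.lt_succ_self _) hγ hs

end Dense

/-! ### Flow-critical graphs -/

section Critical

variable {α : Type} [Fintype α]

/-- A loopless multigraph with at least `4n - 6` edges has a subgraph in the dense class, namely
one induced by a minimal vertex set violating the density bound. -/
lemma exists_dense (R : Multiset (Sym2 α)) (hl : ∀ v, s(v, v) ∉ R) (h2 : 2 ≤ Fintype.card α)
    (hc : 4 * Fintype.card α ≤ R.card + 6) : ∃ A, Dense A (inner A R) := by
  have huniv : inn Finset.univ R = R.card := inn_eq_card fun e _ x _ => Finset.mem_univ x
  obtain ⟨A, hAm, hmin⟩ := Finset.exists_min_image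
    (Finset.univ.filter fun A : Finset α => 2 ≤ A.card ∧ 4 * A.card ≤ inn A R + 6)
    (fun A => A.card) ⟨Finset.univ, by simp [huniv, h2, hc]⟩
  simp only [Finset.mem_filter, Finset.mem_univ, true_and] at hAm hmin
  refine ⟨A, { hR := inner_mem, hW := hAm.1, hc := by rw [inner_card]; exact hAm.2, hB := ?_ }⟩
  intro B hB h0 hne
  rw [inn_inner hB]
  rcases single_or h0 with ⟨a, rfl⟩ | hB2
  · have : inn {a} R = 0 := by
      unfold inn
      apply Multiset.sum_eq_zero
      intro n hn
      obtain ⟨e, he, rfl⟩ := Multiset.mem_map.1 hn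
      induction e using Sym2.ind with
      | _ u v =>
        rw [ins_mk, if_neg]
        simp only [Finset.mem_singleton]
        rintro ⟨rfl, rfl⟩
        exact hl _ he
    simp [this]
  · by_contra hlt
    have h3 := hmin B ⟨hB2, by omega⟩
    have h4 := Finset.card_lt_card (hB.ssubset_of_ne hne)
    omega

/-- A dense multigraph is connected. -/
lemma Dense.cut_pos {W : Finset α} {R : Multiset (Sym2 α)} (h : Dense W R) {A : Finset α}
    (hA : A ⊆ W) (h0 : A.Nonempty) (hne : A ≠ W) : cut A R ≠ 0 := by
  have h1 := inn_split (A := A) h.hR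
  have h2 := h.hB A hA h0 hne
  have h3 := h.hB (W \ A) Finset.sdiff_subset
    (Finset.sdiff_nonempty.2 fun h => hne (hA.antisymm h)) (by
      intro he
      obtain ⟨x, hx⟩ := h0
      have := hA hx
      rw [← he] at this
      exact (Finset.mem_sdiff.1 this).2 hx)
  have h4 := h.hc
  have h5 := Finset.card_sdiff_add_card_eq_card hA
  omega

/-- An orientation of a simple graph with prescribed boundary modulo `3` is a flow with values
`1` and `-1`. -/
lemma flow_of_sol {E : Multiset (Sym2 α)} {γ : α → ZMod 3} (hE : E.Nodup) (hl : ∀ v, s(v, v) ∉ E)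
    (h : Sol E γ) : ∃ g : α → α → ZMod 3, (∀ u v, g u v = - g v u) ∧
      (∀ u v, s(u, v) ∈ E → g u v ≠ 0) ∧ (∀ u v, s(u, v) ∉ E → g u v = 0) ∧
      ∀ u, ∑ v, g u v = γ u := by
  induction E using Multiset.induction_on generalizing γ with
  | empty =>
    rw [sol_zero_inv h]
    exact ⟨0, by simp⟩
  | cons e E ih =>
    obtain ⟨p, q, rfl, h'⟩ := sol_cons_inv h
    rw [Multiset.nodup_cons] at hE
    have hpq : p ≠ q := by rintro rfl; exact hl p (Multiset.mem_cons_self _ _)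
    obtain ⟨g, h1, h2, h3, h4⟩ := ih hE.2 (fun v hv => hl v (Multiset.mem_cons_of_mem hv)) h'
    have hdl : ∀ a x y b : α, ¬ (x = a ∧ y = b) → dl a x * dl b y = 0 := by
      intro a x y b hn
      by_cases hx : x = a
      · rw [dl_ne (x := b) fun hy => hn ⟨hx, hy⟩, mul_zero]
      · rw [dl_ne hx, zero_mul]
    have hne : ∀ u v, s(u, v) ≠ s(p, q) → dl p u * dl q v - dl q u * dl p v = 0 := by
      intro u v hn
      rw [hdl p u v q, hdl q u v p, sub_zero]
      · rintro ⟨rfl, rfl⟩; exact hn Sym2.eq_swap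
      · rintro ⟨rfl, rfl⟩; exact hn rfl
    refine ⟨fun u v => g u v + (dl p u * dl q v - dl q u * dl p v), ?_, ?_, ?_, ?_⟩
    · intro u v
      linear_combination h1 u v
    · intro u v huv
      by_cases he : s(u, v) = s(p, q)
      · have h5 : g u v = 0 := h3 u v (he ▸ hE.1)
        rw [Sym2.eq_iff] at he
        rcases he with ⟨rfl, rfl⟩ | ⟨rfl, rfl⟩
        · simp [h5, dl_self, dl_ne hpq]
        · simp [h5, dl_self, dl_ne hpq]
      · rcases Multiset.mem_cons.1 huv with h5 | h5
        · exact absurd h5 he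
        · simp only [hne u v he, add_zero]
          exact h2 u v h5
    · intro u v huv
      rw [Multiset.mem_cons, not_or] at huv
      simp only [hne u v huv.1, h3 u v huv.2, add_zero]
    · intro u
      have h5 : ∀ x : α, ∑ v, dl x v = 1 := by intro x; simp [sum_dl]
      rw [Finset.sum_add_distrib, Finset.sum_sub_distrib, ← Finset.mul_sum, ← Finset.mul_sum, h4,
        h5, h5]
      simp

/-- The partition with `A` as its only part of more than one vertex. -/
def part (A : Finset α) : Setoid α where
  r u v := u = v ∨ (u ∈ A ∧ v ∈ A)
  iseqv :=
    { refl := fun _ => Or.inl rfl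
      symm := by rintro x y (rfl | h); exacts [Or.inl rfl, Or.inr h.symm]
      trans := by
        rintro x y z (rfl | h) (rfl | h')
        exacts [Or.inl rfl, Or.inr h', Or.inr h, Or.inr ⟨h.1, h'.2⟩] }

lemma part_r {A : Finset α} {u v : α} : (part A).r u v ↔ u = v ∨ (u ∈ A ∧ v ∈ A) := Iff.rfl

lemma part_r_of_mem {A : Finset α} {u v : α} (hv : v ∈ A) : (part A).r u v ↔ u ∈ A := by
  rw [part_r]
  constructor
  · rintro (rfl | h)
    exacts [hv, h.1]
  · exact fun h => Or.inr ⟨h, hv⟩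

lemma part_r_of_notMem {A : Finset α} {u v : α} (hv : v ∉ A) : (part A).r u v ↔ u = v := by
  rw [part_r]; simp [hv]

/-- A component of the graph induced on a dense set `A` is all of `A`, as no edge leaves it. -/
lemma part_connected {G : SimpleGraph α} {A : Finset α}
    (hD : Dense A (inner A G.edgeFinset.val)) : PartsConnected G (part A) := by
  intro x
  have : Nonempty ↑{v | (part A).r v x} := ⟨⟨x, (part A).iseqv.refl x⟩⟩
  rw [SimpleGraph.connected_iff]
  refine ⟨?_, this⟩
  by_cases hx : x ∈ A
  · have hmem : ∀ v, v ∈ {v | (part A).r v x} ↔ v ∈ A := fun v => part_r_of_mem hx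
    intro u w
    set B := A.filter fun v => ∃ h : v ∈ {v | (part A).r v x},
      (G.induce {v | (part A).r v x}).Reachable u ⟨v, h⟩ with hB
    by_contra hw
    -- No edge inside `A` leaves the set `B` of vertices reachable from `u`.
    have huA := (hmem u).1 u.2
    have hwA := (hmem w).1 w.2
    have huB : (u : α) ∈ B := Finset.mem_filter.2 ⟨huA, u.2, SimpleGraph.Reachable.refl _⟩
    have hwB : (w : α) ∉ B := fun h => hw (Finset.mem_filter.1 h).2.2
    refine hD.cut_pos (Finset.filter_subset _ _) ⟨_, huB⟩ (fun he => hwB (by rw [hB, he]; exact hwA))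
      (cut_eq_zero fun e he => ?_)
    obtain ⟨he1, he2⟩ := Multiset.mem_filter.1 he
    induction e using Sym2.ind with
    | _ p q =>
      have hpA := he2 p (by simp)
      have hqA := he2 q (by simp)
      have hadj : G.Adj p q := by simpa using he1
      have key : ∀ p q, p ∈ A → q ∈ A → G.Adj p q → p ∈ B → q ∈ B := by
        intro p q _ hq hadj hpB
        obtain ⟨-, h1, h2⟩ := Finset.mem_filter.1 hpB
        refine Finset.mem_filter.2 ⟨hq, (hmem q).2 hq, h2.trans (SimpleGraph.Adj.reachable ?_)⟩
        simpa using hadj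
      rw [cr_mk, if_pos]
      exact ⟨key p q hpA hqA hadj, key q p hqA hpA hadj.symm⟩
  · intro u w
    have h1 : (u : α) = x := (part_r_of_notMem hx).1 u.2
    have h2 : (w : α) = x := (part_r_of_notMem hx).1 w.2
    rw [Subtype.ext (h1.trans h2.symm)]

/-- A flow of the graph with a dense set contracted extends to a flow of the whole graph. -/
lemma flow_extends {G : SimpleGraph α} {β : α → ZMod 3} {A : Finset α}
    (hD : Dense A (inner A G.edgeFinset.val))
    (hq : HasNZFlowQuot G β (part A)) : HasNZFlow G β := by
  obtain ⟨f, f1, f2, f3⟩ := hq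
  have hmem : ∀ u v, s(u, v) ∈ inner A G.edgeFinset.val ↔ G.Adj u v ∧ u ∈ A ∧ v ∈ A := by
    intro u v
    unfold inner
    rw [Multiset.mem_filter]
    simp
  -- The boundary that the edges inside `A` have to supply.
  set γ : α → ZMod 3 := fun x => if x ∈ A then
    β x - ∑ v ∈ Finset.univ.filter (fun v => G.Adj x v ∧ ¬ (part A).r x v), f x v else 0 with hγ
  have hs : ∑ x ∈ A, γ x = 0 := by
    obtain ⟨a, ha⟩ := Finset.card_pos.1 (show 0 < A.card by have := hD.hW; omega)
    have h1 := f3 a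
    have h2 : Finset.univ.filter (fun u => (part A).r u a) = A := by
      ext u; simpa using part_r_of_mem ha
    rw [h2] at h1
    have h3 : ∑ x ∈ A, γ x = ∑ x ∈ A, (β x -
        ∑ v ∈ Finset.univ.filter (fun v => G.Adj x v ∧ ¬ (part A).r x v), f x v) :=
      Finset.sum_congr rfl fun x hx => by simp only [hγ, hx, if_true]
    rw [h3, Finset.sum_sub_distrib, h1, sub_self]
  obtain ⟨g, g1, g2, g3, g4⟩ := flow_of_sol
    (Multiset.Nodup.filter _ G.edgeFinset.nodup) (fun v hv => ((hmem v v).1 hv).1.ne rfl)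
    (hD.sol (γ := γ) (fun x hx => by simp only [hγ, hx, if_false]) hs)
  have hsymm : ∀ u v, (part A).r u v ↔ (part A).r v u :=
    fun u v => ⟨(part A).iseqv.symm, (part A).iseqv.symm⟩
  have hin : ∀ u v, G.Adj u v → (part A).r u v → s(u, v) ∈ inner A G.edgeFinset.val := by
    intro u v hadj hr
    rcases part_r.1 hr with rfl | h
    · exact absurd rfl hadj.ne
    · exact (hmem u v).2 ⟨hadj, h⟩
  refine ⟨fun u v => if (part A).r u v then g u v else f u v, ?_, ?_, ?_⟩
  · intro u v hadj
    by_cases hr : (part A).r u v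
    · simp only [hr, (hsymm u v).1 hr, if_true]; exact g1 u v
    · have hr' : ¬ (part A).r v u := fun h => hr ((hsymm u v).2 h)
      simp only [hr, hr', if_false]; exact f1 u v hadj hr
  · intro u v hadj
    by_cases hr : (part A).r u v
    · simp only [hr, if_true]; exact g2 u v (hin u v hadj hr)
    · simp only [hr, if_false]; exact f2 u v hadj hr
  · intro u
    rw [Finset.sum_ite, Finset.filter_filter, Finset.filter_filter]
    have h1 : ∑ v ∈ Finset.univ.filter (fun v => G.Adj u v ∧ (part A).r u v), g u v = γ u := by
      rw [← g4 u]
      apply Finset.sum_subset (Finset.subset_univ _)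
      intro v _ hv
      apply g3
      intro he
      have := (hmem u v).1 he
      exact hv (Finset.mem_filter.2 ⟨Finset.mem_univ _, this.1, Or.inr this.2⟩)
    rw [h1]
    by_cases hu : u ∈ A
    · simp only [hγ, hu, if_true, sub_add_cancel]
    · simp only [hγ, hu, if_false, zero_add]
      have h2 := f3 u
      have h3 : Finset.univ.filter (fun v => (part A).r v u) = {u} := by
        ext v; simpa using part_r_of_notMem hu
      rw [h3] at h2
      simpa using h2

/-- The density bound: otherwise contracting a dense set gives a quotient flow which extends to a
nowhere-zero flow. -/
lemma density {G : SimpleGraph α} {β : α → ZMod 3} (hcrit : FlowCritical G β) :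
    4 * Fintype.card α ≥ G.edgeFinset.card + 7 := by
  obtain ⟨hβ, hconn, hno, hpart⟩ := hcrit
  have : Nonempty α := hconn.nonempty
  by_cases h2 : 2 ≤ Fintype.card α
  · by_contra hlt
    obtain ⟨A, hD⟩ := exists_dense G.edgeFinset.val (fun v hv => by simp at hv) h2
      (by rw [Finset.card_val]; omega)
    obtain ⟨x, hx, y, hy, hxy⟩ := Finset.one_lt_card.1 (show 1 < A.card from hD.hW)
    exact hno (flow_extends hD (hpart _ (part_connected hD) ⟨x, y, hxy, Or.inr ⟨hx, hy⟩⟩))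
  · -- On one vertex the boundary is zero and the empty flow is nowhere-zero.
    have hsub : Subsingleton α := Fintype.card_le_one_iff_subsingleton.1 (by omega)
    have hadj : ∀ u v, ¬ G.Adj u v := fun u v h => h.ne (Subsingleton.elim u v)
    refine absurd ⟨0, fun u v h => absurd h (hadj u v), fun u v h => absurd h (hadj u v),
      fun u => ?_⟩ hno
    have h1 := hβ u
    have h3 : Finset.univ.filter (fun v => G.Reachable v u) = {u} := by
      ext v
      simp [Subsingleton.elim v u]
    rw [h3, Finset.sum_singleton] at h1
    simp [h1]

end Critical

end Z3Flow

/-- Every flow-critical `ℤ₃`-bordered graph `(G, β)` satisfies `|E(G)| ≤ 4|V(G)| − 7`. -/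
theorem flow_critical_bordered_density (V : Type) [Fintype V] [DecidableEq V]
    (G : SimpleGraph V) (β : V → ZMod 3) (hcrit : FlowCritical G β) :
    (Nat.card G.edgeSet : ℤ) ≤ 4 * Fintype.card V - 7 := by
  -- The lemmas are stated for the classical decidability instance.
  obtain rfl : ‹DecidableEq V› = fun a b => Classical.propDecidable (a = b) :=
    Subsingleton.elim _ _
  have h := Z3Flow.density hcrit
  rw [Nat.card_eq_fintype_card, ← SimpleGraph.edgeFinset_card]
  omega
end

section
/- Let A be the Klein four-group ℤ₂ × ℤ₂ or the cyclic group ℤ₄. Then every flow-critical A-bordered graph (G, β) with G not isomorphic to K₂ satisfies |E(G)| ≤ 2|V(G)| − 4. -/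
/-!
A connected graph `G` on `n ≥ 3` vertices with at least `2n - 3` edges contains a Laman graph `L` on
a set `Y` of at least three vertices, found in a smallest vertex set that is still that dense
(`exists_laman`). For `A` of order four, every supergraph of `L` on `Y` has a nowhere-zero flow for
every zero-sum boundary (`Laman.exists_nz_flow`). Hence a nowhere-zero flow of the contraction of
`Y`, which exists by criticality, extends to `G` (`hasNZFlow_of_contract`), a contradiction. On one
vertex the empty flow is nowhere-zero, and on two vertices `G` is `K₂`.

The flow on `Y` is built from a homomorphism `π` of `A` onto `ℤ₂` with nontrivial kernel. It
suffices to find a connected spanning subgraph `J` of `L` whose odd-degree vertices are those with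
`π (b u) = 1` (`Spans.exists_nz_flow`): values outside `ker π` are placed on `J`, nonzero values of
`ker π` elsewhere, and the error in the boundary is corrected by a `ker π`-flow in `J`.

That `J` exists is Catlin's collapsibility of Laman graphs. By the reverse Henneberg construction,
`L` decomposes into a connected spanning graph `T₁` and a graph `T₂` that avoids one vertex `v` and
connects all the others (`Laman.exists_packing`). The complement of `J` is chosen in `T₁`. If it
does not contain every edge at `v`, then `T₂` and a missing edge at `v` make `J` connected.
Otherwise each vertex `x ≠ v` reaches in `T₁ - v` some neighbour `φ x` of `v`, where `φ` fixes the
neighbours of `v`. Some edge `pq` of a spanning tree of `T₂` separates `φ p`, on the side of `p`,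
from `φ q`, on the side of `q` (`exists_separating_edge`). Changing `J` along the cycle formed by
`v`, the path from `φ p` to `p`, the edge `pq` and the path from `q` to `φ q` puts the edges
`v φ p` and `v φ q` into `J`, which reconnects the two sides of the tree
(`Packing.exists_connected_join`).
-/

open scoped Classical

/-! ### Connectivity by a set of edges -/

section Connectivity

variable {V : Type}

/-- `Linked T x y`: the vertices `x` and `y` lie in the same component of the graph on `V` whose
edge set is `T`. -/
def Linked (T : Finset (Sym2 V)) : V → V → Prop := Relation.EqvGen (fun a b => s(a, b) ∈ T)

/-- All vertices of `X` lie in one component of the graph with edge set `T`. -/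
def Spans (T : Finset (Sym2 V)) (X : Finset V) : Prop := ∀ x ∈ X, ∀ y ∈ X, Linked T x y

lemma Linked.refl (T : Finset (Sym2 V)) (x : V) : Linked T x x := Relation.EqvGen.refl x

lemma Linked.symm {T : Finset (Sym2 V)} {x y : V} (h : Linked T x y) : Linked T y x :=
  Relation.EqvGen.symm _ _ h

lemma Linked.trans {T : Finset (Sym2 V)} {x y z : V} (h : Linked T x y) (h' : Linked T y z) :
    Linked T x z := Relation.EqvGen.trans _ _ _ h h'

lemma Linked.edge {T : Finset (Sym2 V)} {x y : V} (h : s(x, y) ∈ T) : Linked T x y :=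
  Relation.EqvGen.rel _ _ h

/-- A vertex property that is passed on along the edges of `T` holds on whole components. -/
lemma Linked.closed {T : Finset (Sym2 V)} {x y : V} (h : Linked T x y) (P : V → Prop)
    (hP : ∀ a b, s(a, b) ∈ T → P a → P b) (hx : P x) : P y := by
  have key : P x ↔ P y := by
    clear hx
    induction h with
    | rel a b hab => exact ⟨hP a b hab, hP b a (by rwa [Sym2.eq_swap])⟩
    | refl => rfl
    | symm a b _ ih => exact ih.symm
    | trans a b c _ _ ih1 ih2 => exact ih1.trans ih2
  exact key.1 hx

lemma Linked.of_edges {T T' : Finset (Sym2 V)} {x y : V} (h : Linked T x y)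
    (hT : ∀ a b, s(a, b) ∈ T → Linked T' a b) : Linked T' x y :=
  h.closed (fun z => Linked T' x z) (fun a b hab hxa => hxa.trans (hT a b hab)) (.refl _ _)

lemma Linked.mono {T T' : Finset (Sym2 V)} {x y : V} (h : Linked T x y) (hT : T ⊆ T') :
    Linked T' x y := h.of_edges fun _ _ hab => .edge (hT hab)

lemma Spans.of_center {T : Finset (Sym2 V)} {X : Finset V} {c : V}
    (h : ∀ x ∈ X, Linked T x c) : Spans T X := fun x hx y hy => (h x hx).trans (h y hy).symm

variable [DecidableEq V]

/-- Deleting an edge `pq` from a connected graph leaves at most two components, those of `p` and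
of `q`. -/
lemma Linked.erase_or {T : Finset (Sym2 V)} {p q z : V} (h : Linked T p z) :
    Linked (T.erase s(p, q)) p z ∨ Linked (T.erase s(p, q)) q z := by
  refine h.closed (fun z => Linked (T.erase s(p, q)) p z ∨ Linked (T.erase s(p, q)) q z) ?_
    (Or.inl (.refl _ _))
  intro a b hab ha
  by_cases he : s(a, b) = s(p, q)
  · rcases Sym2.eq_iff.1 he with ⟨rfl, rfl⟩ | ⟨rfl, rfl⟩
    · exact Or.inr (.refl _ _)
    · exact Or.inl (.refl _ _)
  · have : Linked (T.erase s(p, q)) a b := .edge (Finset.mem_erase.2 ⟨he, hab⟩)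
    exact ha.imp (·.trans this) (·.trans this)

/-- In an edge-minimal connected graph `T` every edge is a bridge. -/
lemma exists_minimal_spans {T : Finset (Sym2 V)} {X : Finset V} (hT : Spans T X) :
    ∃ T' ⊆ T, Spans T' X ∧ ∀ p q, s(p, q) ∈ T' → ¬ Linked (T'.erase s(p, q)) p q := by
  induction hn : T.card using Nat.strong_induction_on generalizing T with
  | _ n ih =>
    by_cases hb : ∀ p q, s(p, q) ∈ T → ¬ Linked (T.erase s(p, q)) p q
    · exact ⟨T, subset_rfl, hT, hb⟩
    · push Not at hb
      obtain ⟨p, q, hpq, hJ⟩ := hb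
      obtain ⟨T', h1, h2, h3⟩ := ih _ (by rw [← hn]; exact Finset.card_erase_lt_of_mem hpq)
        (T := T.erase s(p, q)) (fun x hx y hy => (hT x hx y hy).of_edges (fun a b hab => by
          by_cases he : s(a, b) = s(p, q)
          · rcases Sym2.eq_iff.1 he with ⟨rfl, rfl⟩ | ⟨rfl, rfl⟩
            · exact hJ
            · exact hJ.symm
          · exact .edge (Finset.mem_erase.2 ⟨he, hab⟩))) rfl
      exact ⟨T', h1.trans (Finset.erase_subset _ _), h2, h3⟩

/-- The first edge `q q'` of the path from `q` to `w` in a forest. -/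
lemma exists_first_edge {T : Finset (Sym2 V)}
    (hb : ∀ p q, s(p, q) ∈ T → ¬ Linked (T.erase s(p, q)) p q) {q w : V} (h : Linked T q w)
    (hne : q ≠ w) : ∃ q', s(q, q') ∈ T ∧ ¬ Linked (T.erase s(q, q')) q w := by
  have := h.closed (fun z => z = q ∨ ∃ q', s(q, q') ∈ T ∧ ¬ Linked (T.erase s(q, q')) q z) ?_
    (Or.inl rfl)
  · exact this.resolve_left (Ne.symm hne)
  · rintro a b hab (rfl | ⟨q', hq', ha⟩)
    · exact Or.inr ⟨b, hab, hb _ _ hab⟩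
    · by_cases he : s(a, b) = s(q, q')
      · rcases Sym2.eq_iff.1 he with ⟨rfl, rfl⟩ | ⟨rfl, rfl⟩
        · exact absurd (.refl _ _) ha
        · exact Or.inl rfl
      · refine Or.inr ⟨q', hq', fun hqb => ha (hqb.trans (Linked.symm ?_))⟩
        exact .edge (Finset.mem_erase.2 ⟨he, hab⟩)

/-- A self-map `φ` of a tree with two fixed points `w ≠ w'` has an edge `pq` whose deletion
separates `φ p`, on the side of `p`, from `φ q`, on the side of `q`. Otherwise, following the path
from `w` to `w'`, the image of each vertex would lie behind the next edge of the path, which fails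
at `w'`. -/
lemma exists_separating_edge [Fintype V] {T : Finset (Sym2 V)} {X : Finset V} (hT : Spans T X)
    (hTX : ∀ a b, s(a, b) ∈ T → a ∈ X ∧ b ∈ X)
    (hb : ∀ p q, s(p, q) ∈ T → ¬ Linked (T.erase s(p, q)) p q) (φ : V → V)
    (hφ : ∀ x ∈ X, φ x ∈ X) {w w' : V} (hw : w ∈ X) (hw' : w' ∈ X) (hne : w ≠ w')
    (hfw : φ w = w) (hfw' : φ w' = w') :
    ∃ p q, s(p, q) ∈ T ∧ Linked (T.erase s(p, q)) p (φ p) ∧ Linked (T.erase s(p, q)) q (φ q) := by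
  -- `D p q` is the side of `p` after deleting `pq`; an edge with `φ p` but not `w'` on this side
  -- is chosen with the side as large as possible.
  let D : V × V → Finset V := fun e => Finset.univ.filter (Linked (T.erase s(e.1, e.2)) e.1)
  let C : Finset (V × V) := Finset.univ.filter
    fun e => s(e.1, e.2) ∈ T ∧ φ e.1 ∈ D e ∧ w' ∉ D e
  have hC : C.Nonempty := by
    obtain ⟨u, hu, hnu⟩ := exists_first_edge hb (hT w hw w' hw') hne
    exact ⟨(w, u), by simp [C, D, hu, hnu, hfw, Linked.refl]⟩
  obtain ⟨⟨p, q⟩, hpqC, hmax⟩ := C.exists_max_image (fun e => (D e).card) hC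
  simp only [C, D, Finset.mem_filter, Finset.mem_univ, true_and] at hpqC
  obtain ⟨hpq, hφp, hw'p⟩ := hpqC
  refine ⟨p, q, hpq, hφp, ?_⟩
  obtain ⟨hpX, hqX⟩ := hTX _ _ hpq
  by_contra hφq
  have hφq' : Linked (T.erase s(p, q)) p (φ q) :=
    ((hT p hpX _ (hφ q hqX)).erase_or (q := q)).resolve_right hφq
  have hqw' : q ≠ w' := by
    rintro rfl
    exact hw'p (by rwa [hfw'] at hφq')
  obtain ⟨q', hqq', hnq'⟩ := exists_first_edge hb (hT q hqX w' hw') hqw'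
  have hneq : s(p, q) ≠ s(q, q') := by
    intro he
    rw [← he] at hnq'
    exact (((hT p hpX w' hw').erase_or (q := q)).resolve_left hw'p |> hnq')
  have hqp : Linked (T.erase s(q, q')) q p := by
    exact (Linked.edge (Finset.mem_erase.2 ⟨hneq, hpq⟩)).symm
  have hsub : ∀ z, Linked (T.erase s(p, q)) p z → Linked (T.erase s(q, q')) p z := by
    intro z hz
    refine (hz.closed
      (fun z => Linked (T.erase s(p, q)) p z ∧ Linked (T.erase s(q, q')) p z) ?_
      ⟨.refl _ _, .refl _ _⟩).2
    rintro a b hab ⟨h1, h2⟩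
    have h1b := h1.trans (.edge hab)
    refine ⟨h1b, h2.trans (.edge (Finset.mem_erase.2 ⟨?_, Finset.mem_of_mem_erase hab⟩))⟩
    intro he
    rcases Sym2.eq_iff.1 he with ⟨rfl, rfl⟩ | ⟨rfl, rfl⟩
    · exact hb _ _ hpq h1
    · exact hb _ _ hpq h1b
  have hlt : D (p, q) ⊂ D (q, q') := by
    rw [Finset.ssubset_iff_of_subset]
    · refine ⟨q, ?_, ?_⟩
      · simp [D, Linked.refl]
      · simpa [D] using hb _ _ hpq
    · intro z hz
      simp only [D, Finset.mem_filter, Finset.mem_univ, true_and] at hz ⊢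
      exact hqp.trans (hsub z hz)
  have := hmax (q, q') (by
    simp only [C, D, Finset.mem_filter, Finset.mem_univ, true_and]
    exact ⟨hqq', hqp.trans (hsub _ hφq'), hnq'⟩)
  exact absurd (Finset.card_lt_card hlt) (by simpa using this)

end Connectivity

/-! ### Laman graphs and their packings -/

section Laman

variable {V : Type} [DecidableEq V]

/-- The number of edges of `E` with both ends in `Y`. -/
def edgesIn (E : Finset (Sym2 V)) (Y : Finset V) : ℕ := (E ∩ Y.sym2).card

/-- `E` is the edge set of a Laman graph on the vertex set `X`: it has exactly `2|X| - 3` edges,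
and every `Y ⊆ X` with at least two vertices spans at most `2|Y| - 3` of them. -/
structure Laman (E : Finset (Sym2 V)) (X : Finset V) : Prop where
  sub : E ⊆ X.sym2
  loopless : ∀ a, s(a, a) ∉ E
  two_le : 2 ≤ X.card
  card_eq : E.card + 3 = 2 * X.card
  sparse : ∀ Y ⊆ X, 2 ≤ Y.card → edgesIn E Y + 3 ≤ 2 * Y.card

/-- The edges of `E` at the vertex `w`. -/
def edgesAt (E : Finset (Sym2 V)) (w : V) : Finset (Sym2 V) := E.filter (w ∈ ·)

/-- The edges of `E` not at the vertex `w`. -/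
def edgesOff (E : Finset (Sym2 V)) (w : V) : Finset (Sym2 V) := E.filter (w ∉ ·)

lemma edgesAt_card_add_edgesOff_card (E : Finset (Sym2 V)) (w : V) :
    (edgesAt E w).card + (edgesOff E w).card = E.card := by
  exact Finset.card_filter_add_card_filter_not (s := E) (fun e => w ∈ e)

lemma edgesOff_eq_inter {E : Finset (Sym2 V)} {X : Finset V} (hE : E ⊆ X.sym2) (w : V) :
    edgesOff E w = E ∩ (X.erase w).sym2 := by
  ext e
  simp only [edgesOff, Finset.mem_filter, Finset.mem_inter, Finset.mem_sym2_iff, Finset.mem_erase]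
  constructor
  · rintro ⟨h1, h2⟩
    exact ⟨h1, fun a ha => ⟨fun h => h2 (h ▸ ha), Finset.mem_sym2_iff.1 (hE h1) a ha⟩⟩
  · rintro ⟨h1, h2⟩
    exact ⟨h1, fun h => (h2 w h).1 rfl⟩

lemma Laman.two_le_edgesAt {E : Finset (Sym2 V)} {X : Finset V} (h : Laman E X) (h3 : 3 ≤ X.card)
    {w : V} (hw : w ∈ X) : 2 ≤ (edgesAt E w).card := by
  have h1 := edgesAt_card_add_edgesOff_card E w
  have h2 := h.sparse (X.erase w) (Finset.erase_subset _ _)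
    (by rw [Finset.card_erase_of_mem hw]; omega)
  rw [edgesIn, ← edgesOff_eq_inter h.sub w, Finset.card_erase_of_mem hw] at h2
  have := h.card_eq
  omega

lemma Laman.exists_edgesAt_le_three {E : Finset (Sym2 V)} {X : Finset V} (h : Laman E X) :
    ∃ w ∈ X, (edgesAt E w).card ≤ 3 := by
  by_contra! hcon
  have h1 : ∑ x ∈ X, (edgesAt E x).card = ∑ e ∈ E, (X.filter (fun x => x ∈ e)).card :=
    Finset.sum_card_bipartiteAbove_eq_sum_card_bipartiteBelow (fun x e => x ∈ e)
  have h2 : ∑ e ∈ E, (X.filter (fun x => x ∈ e)).card ≤ ∑ _e ∈ E, 2 := by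
    refine Finset.sum_le_sum fun e _ => ?_
    induction e with
    | h a b =>
      refine (Finset.card_le_card (t := {a, b}) ?_).trans Finset.card_le_two
      intro x hx
      simpa using (Finset.mem_filter.1 hx).2
  have h3 : ∑ _x ∈ X, 4 ≤ ∑ x ∈ X, (edgesAt E x).card := Finset.sum_le_sum fun x hx => hcon x hx
  have := h.card_eq
  simp only [Finset.sum_const, smul_eq_mul] at h2 h3
  omega

/-- Names for the neighbours of `w`. -/
lemma Laman.exists_nbrs {E : Finset (Sym2 V)} {X : Finset V} (h : Laman E X) (w : V) :
    ∃ N : Finset V, N ⊆ X.erase w ∧ N.card = (edgesAt E w).card ∧ ∀ y, y ∈ N ↔ s(w, y) ∈ E := by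
  have hN : edgesAt E w = (X.filter (fun y => s(w, y) ∈ E)).image (fun y => s(w, y)) := by
    ext e
    simp only [edgesAt, Finset.mem_filter, Finset.mem_image]
    constructor
    · rintro ⟨h1, h2⟩
      obtain ⟨y, rfl⟩ := Sym2.mem_iff_exists.1 h2
      exact ⟨y, ⟨(Finset.mk_mem_sym2_iff.1 (h.sub h1)).2, h1⟩, rfl⟩
    · rintro ⟨y, ⟨_, h2⟩, rfl⟩
      exact ⟨h2, Sym2.mem_mk_left _ _⟩
  refine ⟨X.filter (fun y => s(w, y) ∈ E), ?_, ?_, ?_⟩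
  · intro y hy
    obtain ⟨h1, h2⟩ := Finset.mem_filter.1 hy
    exact Finset.mem_erase.2 ⟨by rintro rfl; exact h.loopless _ h2, h1⟩
  · rw [hN, Finset.card_image_of_injective]
    intro a b hab
    exact Sym2.congr_right.1 hab
  · intro y
    simp only [Finset.mem_filter, and_iff_right_iff_imp]
    intro hy
    exact (Finset.mk_mem_sym2_iff.1 (h.sub hy)).2

lemma edgesIn_add_le (E : Finset (Sym2 V)) (Y Z : Finset V) :
    edgesIn E Y + edgesIn E Z ≤ edgesIn E (Y ∪ Z) + edgesIn E (Y ∩ Z) := by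
  unfold edgesIn
  rw [← Finset.card_union_add_card_inter]
  refine Nat.add_le_add (Finset.card_le_card ?_) (Finset.card_le_card ?_)
  · exact Finset.union_subset
      (Finset.inter_subset_inter_left (Finset.sym2_mono Finset.subset_union_left))
      (Finset.inter_subset_inter_left (Finset.sym2_mono Finset.subset_union_right))
  · intro e he
    simp only [Finset.mem_inter, Finset.mem_sym2_iff] at he ⊢
    exact ⟨he.1.1, fun a ha => ⟨he.1.2 a ha, he.2.2 a ha⟩⟩

lemma disjoint_edgesIn {E : Finset (Sym2 V)} (hE : ∀ a, s(a, a) ∉ E) {Y Z : Finset V}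
    (h : (Y ∩ Z).card ≤ 1) : Disjoint (E ∩ Y.sym2) (E ∩ Z.sym2) := by
  rw [Finset.disjoint_left]
  intro e h1 h2
  induction e with
  | h a b =>
    simp only [Finset.mem_inter, Finset.mk_mem_sym2_iff] at h1 h2
    have : a = b := Finset.card_le_one.1 h a (Finset.mem_inter.2 ⟨h1.2.1, h2.2.1⟩) b
      (Finset.mem_inter.2 ⟨h1.2.2, h2.2.2⟩)
    subst this
    exact hE _ h1.1

/-- If `ab` cannot be added to the sparse edge set `E`, then some tight set contains `a` and
`b`. -/
lemma exists_tight {E : Finset (Sym2 V)} {X : Finset V} (hE : E ⊆ X.sym2)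
    (hl : ∀ a, s(a, a) ∉ E) (hX : 2 ≤ X.card) (hc : E.card + 4 = 2 * X.card)
    (hs : ∀ Y ⊆ X, 2 ≤ Y.card → edgesIn E Y + 3 ≤ 2 * Y.card) {a b : V} (ha : a ∈ X) (hb : b ∈ X)
    (hab : a ≠ b) (hno : ¬ Laman (insert s(a, b) E) X) :
    ∃ Z ⊆ X, a ∈ Z ∧ b ∈ Z ∧ 2 * Z.card ≤ edgesIn E Z + 3 := by
  by_cases hmem : s(a, b) ∈ E
  · refine ⟨{a, b}, ?_, by simp, by simp, ?_⟩
    · intro x hx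
      rcases Finset.mem_insert.1 hx with rfl | hx
      · exact ha
      · exact Finset.mem_singleton.1 hx ▸ hb
    · rw [Finset.card_pair hab]
      have : 0 < edgesIn E {a, b} :=
        Finset.card_pos.2 ⟨s(a, b), by simp [hmem]⟩
      omega
  · by_contra! hcon
    refine hno ⟨?_, ?_, hX, ?_, ?_⟩
    · exact Finset.insert_subset (Finset.mk_mem_sym2_iff.2 ⟨ha, hb⟩) hE
    · intro c hc
      rcases Finset.mem_insert.1 hc with h | h
      · rcases Sym2.eq_iff.1 h with ⟨rfl, rfl⟩ | ⟨rfl, rfl⟩ <;> exact hab rfl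
      · exact hl c h
    · rw [Finset.card_insert_of_notMem hmem]; omega
    · intro Y hY hY2
      by_cases hin : a ∈ Y ∧ b ∈ Y
      · have h1 := hcon Y hY hin.1 hin.2
        have h2 : edgesIn (insert s(a, b) E) Y ≤ edgesIn E Y + 1 := by
          unfold edgesIn
          rw [Finset.insert_inter_of_mem (Finset.mk_mem_sym2_iff.2 hin)]
          exact Finset.card_insert_le _ _
        omega
      · have : edgesIn (insert s(a, b) E) Y = edgesIn E Y := by
          unfold edgesIn
          rw [Finset.insert_inter_of_notMem (fun h => hin (Finset.mk_mem_sym2_iff.1 h))]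
        rw [this]
        exact hs Y hY hY2

/-- The reverse Henneberg step: if no set containing `a`, `b` and `c` is tight, then one of the
edges `ab`, `ac`, `bc` can be added. Otherwise there are tight sets around all three pairs, and
their union is a tight set, since two tight sets with two common vertices have a tight union and
three tight sets meeting pairwise in single vertices have one too. -/
lemma exists_pair {E : Finset (Sym2 V)} {X : Finset V} (hE : E ⊆ X.sym2)
    (hl : ∀ a, s(a, a) ∉ E) (hX : 2 ≤ X.card) (hc : E.card + 4 = 2 * X.card)
    (hs : ∀ Y ⊆ X, 2 ≤ Y.card → edgesIn E Y + 3 ≤ 2 * Y.card) {a b c : V} (ha : a ∈ X)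
    (hb : b ∈ X) (hc' : c ∈ X) (hab : a ≠ b) (hac : a ≠ c) (hbc : b ≠ c)
    (h3 : ∀ U ⊆ X, a ∈ U → b ∈ U → c ∈ U → edgesIn E U + 4 ≤ 2 * U.card) :
    Laman (insert s(a, b) E) X ∨ Laman (insert s(a, c) E) X ∨ Laman (insert s(b, c) E) X := by
  by_contra! hno
  obtain ⟨Z1, hZ1, a1, b1, t1⟩ := exists_tight hE hl hX hc hs ha hb hab hno.1
  obtain ⟨Z2, hZ2, a2, c2, t2⟩ := exists_tight hE hl hX hc hs ha hc' hac hno.2.1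
  obtain ⟨Z3, hZ3, b3, c3, t3⟩ := exists_tight hE hl hX hc hs hb hc' hbc hno.2.2
  -- two of the tight sets that together cover `a`, `b`, `c` share at most one vertex
  have key : ∀ Y ⊆ X, ∀ Z ⊆ X, 2 * Y.card ≤ edgesIn E Y + 3 → 2 * Z.card ≤ edgesIn E Z + 3 →
      a ∈ Y ∪ Z → b ∈ Y ∪ Z → c ∈ Y ∪ Z → (Y ∩ Z).card ≤ 1 := by
    intro Y hY Z hZ tY tZ h1 h2 h3'
    by_contra! hlt
    have e1 := edgesIn_add_le E Y Z
    have e2 := Finset.card_union_add_card_inter Y Z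
    have e3 := hs (Y ∩ Z) (Finset.inter_subset_left.trans hY) hlt
    have e4 := h3 (Y ∪ Z) (Finset.union_subset hY hZ) h1 h2 h3'
    omega
  have k12 := key Z1 hZ1 Z2 hZ2 t1 t2 (by simp [a1]) (by simp [b1]) (by simp [c2])
  have k13 := key Z1 hZ1 Z3 hZ3 t1 t3 (by simp [a1]) (by simp [b1]) (by simp [c3])
  have k23 := key Z2 hZ2 Z3 hZ3 t2 t3 (by simp [a2]) (by simp [b3]) (by simp [c3])
  have d12 := disjoint_edgesIn hl k12
  have d13 := disjoint_edgesIn hl k13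
  have d23 := disjoint_edgesIn hl k23
  have hU := h3 (Z1 ∪ Z2 ∪ Z3) (Finset.union_subset (Finset.union_subset hZ1 hZ2) hZ3)
    (by simp [a1]) (by simp [b1]) (by simp [c2])
  have hsum : edgesIn E Z1 + edgesIn E Z2 + edgesIn E Z3 ≤ edgesIn E (Z1 ∪ Z2 ∪ Z3) := by
    unfold edgesIn
    rw [← Finset.card_union_of_disjoint d12, ← Finset.card_union_of_disjoint
      (Finset.disjoint_union_left.2 ⟨d13, d23⟩)]
    refine Finset.card_le_card (Finset.union_subset (Finset.union_subset ?_ ?_) ?_) <;>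
      refine Finset.inter_subset_inter_left (Finset.sym2_mono ?_) <;> intro x hx <;> simp [hx]
  have c1 := Finset.card_union_add_card_inter Z1 Z2
  have c2' := Finset.card_union_add_card_inter (Z1 ∪ Z2) Z3
  have p1 : 1 ≤ (Z1 ∩ Z2).card := Finset.card_pos.2 ⟨a, by simp [a1, a2]⟩
  have p2 : 2 ≤ ((Z1 ∪ Z2) ∩ Z3).card := by
    rw [← Finset.card_pair hbc]
    refine Finset.card_le_card ?_
    intro x hx
    rcases Finset.mem_insert.1 hx with rfl | hx
    · simp [b1, b3]
    · rw [Finset.mem_singleton.1 hx]; simp [c2, c3]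
  omega

/-- A partition of `E` into a connected spanning graph `T₁` on `X` and a graph `T₂` that connects
all vertices of `X` except `v`, which it avoids. -/
structure Packing (E : Finset (Sym2 V)) (X : Finset V) (v : V) (T₁ T₂ : Finset (Sym2 V)) :
    Prop where
  mem : v ∈ X
  union : T₁ ∪ T₂ = E
  disj : Disjoint T₁ T₂
  spans₁ : Spans T₁ X
  spans₂ : Spans T₂ (X.erase v)
  avoid : ∀ e ∈ T₂, v ∉ e

lemma Spans.attach {T T' : Finset (Sym2 V)} {X : Finset V} {w a : V} (h : Spans T X)
    (hT : T ⊆ T') (ha : a ∈ X) (hwa : s(w, a) ∈ T') : Spans T' (insert w X) := by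
  refine Spans.of_center (c := a) fun x hx => ?_
  rcases Finset.mem_insert.1 hx with rfl | hx
  · exact .edge hwa
  · exact (h x hx a ha).mono hT

/-- Replacing the edge `ab` by the path `a w b` keeps a graph connected. -/
lemma Spans.subdivide {T T' : Finset (Sym2 V)} {X : Finset V} {w a b : V} (h : Spans T X)
    (hT : T.erase s(a, b) ⊆ T') (ha : a ∈ X) (hwa : Linked T' w a) (hwb : Linked T' w b) :
    Spans T' (insert w X) := by
  refine Spans.of_center (c := a) fun x hx => ?_
  rcases Finset.mem_insert.1 hx with rfl | hx
  · exact hwa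
  · refine (h x hx a ha).of_edges fun p q hpq => ?_
    by_cases he : s(p, q) = s(a, b)
    · rcases Sym2.eq_iff.1 he with ⟨rfl, rfl⟩ | ⟨rfl, rfl⟩
      · exact hwa.symm.trans hwb
      · exact hwb.symm.trans hwa
    · exact .edge (hT (Finset.mem_erase.2 ⟨he, hpq⟩))

/-- A packing extends over a new vertex `w` of degree two: one of its edges joins each part, and
the one joining `T₂` must not lead to `v`. -/
lemma Packing.add_two {E : Finset (Sym2 V)} {X : Finset V} {v w a b : V}
    {T₁ T₂ : Finset (Sym2 V)} (h : Packing E X v T₁ T₂) (hE : ∀ e ∈ E, w ∉ e) (hw : w ∉ X)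
    (ha : a ∈ X) (hb : b ∈ X) (hab : a ≠ b) (hbv : b ≠ v) :
    Packing (insert s(w, a) (insert s(w, b) E)) (insert w X) v (insert s(w, a) T₁)
      (insert s(w, b) T₂) := by
  have hvw : v ≠ w := fun he => hw (he ▸ h.mem)
  have hwE : ∀ x, s(w, x) ∉ E := fun x hx => hE _ hx (Sym2.mem_mk_left _ _)
  have hne : s(w, a) ≠ s(w, b) := fun he => hab (Sym2.congr_right.1 he)
  have h1 : T₁ ⊆ E := h.union ▸ Finset.subset_union_left
  have h2 : T₂ ⊆ E := h.union ▸ Finset.subset_union_right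
  refine ⟨Finset.mem_insert_of_mem h.mem, ?_, ?_, ?_, ?_, ?_⟩
  · rw [← h.union]
    ext e
    simp only [Finset.mem_union, Finset.mem_insert]
    tauto
  · rw [Finset.disjoint_insert_left, Finset.disjoint_insert_right, Finset.mem_insert]
    exact ⟨fun hx => hx.elim hne fun hx => hwE _ (h2 hx), fun hx => hwE _ (h1 hx), h.disj⟩
  · exact h.spans₁.attach (Finset.subset_insert _ _) ha (Finset.mem_insert_self _ _)
  · rw [Finset.erase_insert_of_ne (Ne.symm hvw)]
    exact h.spans₂.attach (Finset.subset_insert _ _) (Finset.mem_erase.2 ⟨hbv, hb⟩)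
      (Finset.mem_insert_self _ _)
  · intro e he
    rcases Finset.mem_insert.1 he with rfl | he
    · rw [Sym2.mem_iff]; rintro (h | h)
      · exact hvw h
      · exact hbv h.symm
    · exact h.avoid e he

/-- A packing of `E + ab` gives one of the graph obtained from `E` by adding a vertex `w` with
neighbours `a`, `b`, `c`: two edges at `w` stand in for `ab` in its part, and the third attaches
`w` to the other part. If that other part is `T₂` and `c = v`, the roles of the edges are permuted
according to the side of `ab` in `T₁` on which `c` lies. -/
lemma Packing.add_three {E : Finset (Sym2 V)} {X : Finset V} {v w a b c : V}
    {T₁ T₂ : Finset (Sym2 V)} (h : Packing (insert s(a, b) E) X v T₁ T₂) (hE : ∀ e ∈ E, w ∉ e)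
    (hw : w ∉ X) (ha : a ∈ X) (hb : b ∈ X) (hc : c ∈ X) (hab : a ≠ b) (hac : a ≠ c)
    (hbc : b ≠ c) (hnot : s(a, b) ∉ E) :
    ∃ T₁' T₂', Packing (insert s(w, a) (insert s(w, b) (insert s(w, c) E))) (insert w X) v
      T₁' T₂' := by
  have hvw : v ≠ w := fun he => hw (he ▸ h.mem)
  have hwE : ∀ x, s(w, x) ∉ E := fun x hx => hE _ hx (Sym2.mem_mk_left _ _)
  have hinj : ∀ x y, s(w, x) = s(w, y) → x = y := fun x y he => Sym2.congr_right.1 he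
  have hmem : ∀ e, (e ∈ T₁ ∨ e ∈ T₂) ↔ (e = s(a, b) ∨ e ∈ E) := fun e => by
    rw [← Finset.mem_union, h.union, Finset.mem_insert]
  have hdis : ∀ e, e ∈ T₁ → e ∉ T₂ := fun e h1 h2 => Finset.disjoint_left.1 h.disj h1 h2
  have hwab : ∀ x, s(w, x) ≠ s(a, b) := by
    intro x he
    rcases Sym2.eq_iff.1 he with ⟨rfl, _⟩ | ⟨rfl, _⟩
    · exact hw ha
    · exact hw hb
  have hw1 : ∀ x, s(w, x) ∉ T₁ := fun x hx => by
    rcases (hmem _).1 (Or.inl hx) with h | h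
    · exact hwab x h
    · exact hwE x h
  have hw2 : ∀ x, s(w, x) ∉ T₂ := fun x hx => by
    rcases (hmem _).1 (Or.inr hx) with h | h
    · exact hwab x h
    · exact hwE x h
  have hX : (insert w X).erase v = insert w (X.erase v) :=
    Finset.erase_insert_of_ne (Ne.symm hvw)
  have hvin : v ∈ insert w X := Finset.mem_insert_of_mem h.mem
  have hav : ∀ x, x ≠ v → v ∉ s(w, x) := by
    intro x hx; rw [Sym2.mem_iff]; rintro (h | h)
    · exact hvw h
    · exact hx h.symm
  -- if `ab` lies in `T₁`, the edge `wx` goes to `T₂` for some `x ≠ v`, and the other two edges at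
  -- `w` replace `ab` in `T₁`
  by_cases h1 : s(a, b) ∈ T₁
  · have hgen : ∀ x y z : V, ({x, y, z} : Finset V) = {a, b, c} → x ≠ y → x ≠ z → y ≠ z → x ≠ v →
        x ∈ X →
        Linked (insert s(w, y) (insert s(w, z) (T₁.erase s(a, b)))) w a →
        Linked (insert s(w, y) (insert s(w, z) (T₁.erase s(a, b)))) w b →
        Packing (insert s(w, a) (insert s(w, b) (insert s(w, c) E))) (insert w X) v
          (insert s(w, y) (insert s(w, z) (T₁.erase s(a, b)))) (insert s(w, x) T₂) := by
      intro x y z hxyz hxy hxz hyz hxv hxX hla hlb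
      have hset : ∀ e, (e = s(w, x) ∨ e = s(w, y) ∨ e = s(w, z)) ↔
          (e = s(w, a) ∨ e = s(w, b) ∨ e = s(w, c)) := by
        intro e
        have h1 : e ∈ ({x, y, z} : Finset V).image (fun u => s(w, u)) ↔
            e ∈ ({a, b, c} : Finset V).image (fun u => s(w, u)) := by rw [hxyz]
        simpa only [Finset.mem_image, Finset.mem_insert, Finset.mem_singleton, exists_eq_or_imp,
          exists_eq_left, @eq_comm _ _ e] using h1
      refine ⟨hvin, ?_, ?_, ?_, ?_, ?_⟩
      · ext e
        by_cases he : e = s(a, b)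
        · subst he
          simp [(hwab _).symm, hdis _ h1, hnot]
        · have e1 := hset e
          have e2 := hmem e
          simp only [Finset.mem_union, Finset.mem_insert, Finset.mem_erase]
          clear * - e1 e2 he
          tauto
      · rw [Finset.disjoint_left]
        intro e he he2
        simp only [Finset.mem_insert, Finset.mem_erase] at he he2
        rcases he with rfl | rfl | ⟨_, he⟩ <;> rcases he2 with he2 | he2
        · exact hxy (hinj _ _ he2).symm
        · exact hw2 _ he2
        · exact hxz (hinj _ _ he2).symm
        · exact hw2 _ he2
        · exact hw1 _ (he2 ▸ he)
        · exact hdis e he he2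
      · refine h.spans₁.subdivide ?_ ha hla hlb
        exact (Finset.subset_insert _ _).trans (Finset.subset_insert _ _)
      · rw [hX]
        exact h.spans₂.attach (Finset.subset_insert _ _) (Finset.mem_erase.2 ⟨hxv, hxX⟩)
          (Finset.mem_insert_self _ _)
      · intro e he
        rcases Finset.mem_insert.1 he with rfl | he
        · exact hav x hxv
        · exact h.avoid e he
    by_cases hcv : c = v
    · subst hcv
      have hor : Linked (T₁.erase s(a, b)) a c ∨ Linked (T₁.erase s(a, b)) b c :=
        (h.spans₁ a ha c hc).erase_or
      have hsub : ∀ y z, T₁.erase s(a, b) ⊆ insert s(w, y) (insert s(w, z) (T₁.erase s(a, b))) :=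
        fun y z => (Finset.subset_insert _ _).trans (Finset.subset_insert _ _)
      rcases hor with hor | hor
      · refine ⟨_, _, hgen a b c (by ext; simp) hab hac hbc hac ha ?_ ?_⟩
        · exact (Linked.edge (by simp)).trans (hor.mono (hsub b c)).symm
        · exact .edge (by simp)
      · refine ⟨_, _, hgen b a c (by ext; simp; tauto) hab.symm hbc hac hbc hb ?_ ?_⟩
        · exact .edge (by simp)
        · exact (Linked.edge (by simp)).trans (hor.mono (hsub a c)).symm
    · refine ⟨_, _, hgen c a b (by ext; simp; tauto) hac.symm hbc.symm hab hcv hc ?_ ?_⟩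
      · exact .edge (by simp)
      · exact .edge (by simp)
  · have h2 : s(a, b) ∈ T₂ := ((hmem _).2 (Or.inl rfl)).resolve_left h1
    have hvab := h.avoid _ h2
    rw [Sym2.mem_iff, not_or] at hvab
    refine ⟨insert s(w, c) T₁, insert s(w, a) (insert s(w, b) (T₂.erase s(a, b))),
      hvin, ?_, ?_, ?_, ?_, ?_⟩
    · ext e
      by_cases he : e = s(a, b)
      · subst he
        simp [(hwab _).symm, h1, hnot]
      · have e2 := hmem e
        simp only [Finset.mem_union, Finset.mem_insert, Finset.mem_erase]
        clear * - e2 he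
        tauto
    · rw [Finset.disjoint_left]
      intro e he he2
      simp only [Finset.mem_insert, Finset.mem_erase] at he he2
      rcases he with rfl | he
      · rcases he2 with he2 | he2 | ⟨_, he2⟩
        · exact hac (hinj _ _ he2).symm
        · exact hbc (hinj _ _ he2).symm
        · exact hw2 _ he2
      · rcases he2 with rfl | rfl | ⟨_, he2⟩
        · exact hw1 _ he
        · exact hw1 _ he
        · exact hdis e he he2
    · exact h.spans₁.attach (Finset.subset_insert _ _) hc (Finset.mem_insert_self _ _)
    · rw [hX]
      refine h.spans₂.subdivide (a := a) (b := b) ?_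
        (Finset.mem_erase.2 ⟨Ne.symm hvab.1, ha⟩) (.edge (by simp)) (.edge (by simp))
      exact (Finset.subset_insert _ _).trans (Finset.subset_insert _ _)
    · intro e he
      simp only [Finset.mem_insert, Finset.mem_erase] at he
      rcases he with rfl | rfl | ⟨_, he⟩
      · exact hav a (Ne.symm hvab.1)
      · exact hav b (Ne.symm hvab.2)
      · exact h.avoid e he

/-- Every Laman graph has a packing, for some vertex `v`. The proof removes a vertex of degree
two or three, adding an edge between two of its neighbours in the latter case. -/
lemma Laman.exists_packing {E : Finset (Sym2 V)} {X : Finset V} (h : Laman E X) :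
    ∃ v T₁ T₂, Packing E X v T₁ T₂ := by
  induction hn : X.card generalizing E X with
  | zero => have := h.two_le; omega
  | succ n ih =>
    have h2 := h.two_le
    have hcE := h.card_eq
    by_cases hX2 : X.card = 2
    · obtain ⟨a, b, hab, rfl⟩ := Finset.card_eq_two.1 hX2
      obtain ⟨e, rfl⟩ := Finset.card_eq_one.1 (show E.card = 1 by omega)
      have he : e = s(a, b) := by
        have h1 := h.sub (Finset.mem_singleton_self e)
        have hl := h.loopless
        clear hcE
        induction e with
        | h p q =>
          simp only [Finset.mk_mem_sym2_iff, Finset.mem_insert, Finset.mem_singleton] at h1 hl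
          rcases h1 with ⟨rfl | rfl, rfl | rfl⟩
          · exact absurd rfl (hl _)
          · rfl
          · exact Sym2.eq_swap
          · exact absurd rfl (hl _)
      subst he
      refine ⟨a, {s(a, b)}, ∅, by simp, by simp, by simp, ?_, ?_, by simp⟩
      · refine Spans.of_center (c := a) fun x hx => ?_
        rcases Finset.mem_insert.1 hx with rfl | hx
        · exact .refl _ _
        · rw [Finset.mem_singleton.1 hx]
          exact (Linked.edge (by simp)).symm
      · refine Spans.of_center (c := b) fun x hx => ?_
        have : x = b := by
          simp only [Finset.mem_erase, Finset.mem_insert, Finset.mem_singleton] at hx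
          exact hx.2.resolve_left hx.1
        rw [this]; exact .refl _ _
    · have h3 : 3 ≤ X.card := by omega
      obtain ⟨w, hw, hw3⟩ := h.exists_edgesAt_le_three
      have hw2 := h.two_le_edgesAt h3 hw
      obtain ⟨N, hNX, hNc, hN⟩ := h.exists_nbrs w
      have hcard := edgesAt_card_add_edgesOff_card E w
      have hXe : (X.erase w).card + 1 = X.card := Finset.card_erase_add_one hw
      have hins : insert w (X.erase w) = X := Finset.insert_erase hw
      have hwX : w ∉ X.erase w := Finset.notMem_erase _ _
      have hoff : ∀ e ∈ edgesOff E w, w ∉ e := fun e he => (Finset.mem_filter.1 he).2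
      have hoffE : edgesOff E w ⊆ E := Finset.filter_subset _ _
      have hsubX : edgesOff E w ⊆ (X.erase w).sym2 := by
        rw [edgesOff_eq_inter h.sub]; exact Finset.inter_subset_right
      have hlo : ∀ a, s(a, a) ∉ edgesOff E w := fun a ha => h.loopless a (hoffE ha)
      have hsp : ∀ Y ⊆ X.erase w, 2 ≤ Y.card → edgesIn (edgesOff E w) Y + 3 ≤ 2 * Y.card := by
        intro Y hY hY2
        refine le_trans (Nat.add_le_add_right ?_ 3)
          (h.sparse Y (hY.trans (Finset.erase_subset _ _)) hY2)
        exact Finset.card_le_card (Finset.inter_subset_inter_right hoffE)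
      -- `E` is recovered from the edges off `w` and the neighbours of `w`
      have hrec : ∀ e, e ∈ E ↔ (e ∈ N.image (fun y => s(w, y)) ∨ e ∈ edgesOff E w) := by
        intro e
        simp only [Finset.mem_image, edgesOff, Finset.mem_filter]
        constructor
        · intro he
          by_cases hwe : w ∈ e
          · obtain ⟨y, rfl⟩ := Sym2.mem_iff_exists.1 hwe
            exact Or.inl ⟨y, (hN y).2 he, rfl⟩
          · exact Or.inr ⟨he, hwe⟩
        · rintro (⟨y, hy, rfl⟩ | he)
          · exact (hN y).1 hy
          · exact he.1
      obtain hd | hd : N.card = 2 ∨ N.card = 3 := by omega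
      · obtain ⟨a, b, hab, rfl⟩ := Finset.card_eq_two.1 hd
        have ha := hNX (show a ∈ ({a, b} : Finset V) by simp)
        have hb := hNX (show b ∈ ({a, b} : Finset V) by simp)
        have hL : Laman (edgesOff E w) (X.erase w) :=
          ⟨hsubX, hlo, by omega, by omega, hsp⟩
        obtain ⟨v, T₁, T₂, hP⟩ := ih hL (by omega)
        have hE1 : insert s(w, a) (insert s(w, b) (edgesOff E w)) = E := by
          ext e; rw [hrec e]; simp [or_assoc]
        have hE2 : insert s(w, b) (insert s(w, a) (edgesOff E w)) = E := by
          rw [Finset.insert_comm, hE1]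
        by_cases hbv : b = v
        · have := hP.add_two hoff hwX hb ha hab.symm (fun h => hab (h.trans hbv.symm))
          rw [hins, hE2] at this
          exact ⟨v, _, _, this⟩
        · have := hP.add_two hoff hwX ha hb hab hbv
          rw [hins, hE1] at this
          exact ⟨v, _, _, this⟩
      · obtain ⟨a, b, c, hab, hac, hbc, rfl⟩ := Finset.card_eq_three.1 hd
        have ha := hNX (show a ∈ ({a, b, c} : Finset V) by simp)
        have hb := hNX (show b ∈ ({a, b, c} : Finset V) by simp)
        have hc := hNX (show c ∈ ({a, b, c} : Finset V) by simp)
        have hE1 : insert s(w, a) (insert s(w, b) (insert s(w, c) (edgesOff E w))) = E := by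
          ext e; rw [hrec e]; simp [or_assoc]
        have hU : ∀ U ⊆ X.erase w, a ∈ U → b ∈ U → c ∈ U →
            edgesIn (edgesOff E w) U + 4 ≤ 2 * U.card := by
          intro U hUX haU hbU hcU
          have hwU : w ∉ U := fun hw => hwX (hUX hw)
          have hs := h.sparse (insert w U)
            (Finset.insert_subset hw (hUX.trans (Finset.erase_subset _ _)))
            (by rw [Finset.card_insert_of_notMem hwU]
                have := Finset.card_pos.2 ⟨a, haU⟩
                omega)
          rw [Finset.card_insert_of_notMem hwU] at hs
          have : edgesIn (edgesOff E w) U + 3 ≤ edgesIn E (insert w U) := by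
            unfold edgesIn
            rw [← hd, ← Finset.card_image_of_injective (f := fun y => s(w, y)) {a, b, c}
              (fun x y hxy => Sym2.congr_right.1 hxy), ← Finset.card_union_of_disjoint]
            · refine Finset.card_le_card ?_
              intro e he
              rcases Finset.mem_union.1 he with he | he
              · obtain ⟨h1, h2⟩ := Finset.mem_inter.1 he
                exact Finset.mem_inter.2
                  ⟨hoffE h1, Finset.sym2_mono (Finset.subset_insert _ _) h2⟩
              · refine Finset.mem_inter.2 ⟨(hrec e).2 (Or.inl he), ?_⟩
                obtain ⟨y, hy, rfl⟩ := Finset.mem_image.1 he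
                refine Finset.mk_mem_sym2_iff.2 ⟨Finset.mem_insert_self _ _, ?_⟩
                simp only [Finset.mem_insert, Finset.mem_singleton] at hy
                rcases hy with rfl | rfl | rfl <;> simp [*]
            · rw [Finset.disjoint_left]
              intro e he he2
              obtain ⟨y, _, rfl⟩ := Finset.mem_image.1 he2
              exact hoff _ (Finset.mem_inter.1 he).1 (Sym2.mem_mk_left _ _)
          omega
        have hfin : ∀ x y z : V, ({x, y, z} : Finset V) = {a, b, c} → x ≠ y → x ≠ z → y ≠ z →
            x ∈ X.erase w → y ∈ X.erase w → z ∈ X.erase w →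
            Laman (insert s(x, y) (edgesOff E w)) (X.erase w) →
            ∃ v T₁ T₂, Packing E X v T₁ T₂ := by
          intro x y z hxyz hxy hxz hyz hx hy hz hL
          obtain ⟨v, T₁, T₂, hP⟩ := ih hL (by omega)
          have hnot : s(x, y) ∉ edgesOff E w := by
            intro hmem
            have := hL.card_eq
            rw [Finset.insert_eq_of_mem hmem] at this
            omega
          obtain ⟨T₁', T₂', hP'⟩ := hP.add_three hoff hwX hx hy hz hxy hxz hyz hnot
          have hE2 : insert s(w, x) (insert s(w, y) (insert s(w, z) (edgesOff E w))) = E := by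
            ext e; rw [hrec e, ← hxyz]; simp [or_assoc]
          rw [hins, hE2] at hP'
          exact ⟨v, _, _, hP'⟩
        rcases exists_pair hsubX hlo (by omega) (by omega) hsp ha hb hc hab hac hbc hU with
          hL | hL | hL
        · exact hfin a b c rfl hab hac hbc ha hb hc hL
        · exact hfin a c b (by ext; simp; tauto) hac hab hbc.symm ha hc hb hL
        · exact hfin b c a (by ext; simp; tauto) hbc hab.symm hac.symm hb hc ha hL

end Laman

/-! ### Flows and connected joins -/

section Flows

variable {V : Type} [Fintype V] {A : Type} [AddCommGroup A]

/-- `g` is a flow with values in `A`, supported on the edge set `T`, with boundary `b`. -/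
structure IsFlow (T : Finset (Sym2 V)) (g : V → V → A) (b : V → A) : Prop where
  antisymm : ∀ u v, g u v = - g v u
  supp : ∀ u v, g u v ≠ 0 → s(u, v) ∈ T
  bdry : ∀ u, ∑ v, g u v = b u

lemma IsFlow.zero (T : Finset (Sym2 V)) : IsFlow T (0 : V → V → A) 0 :=
  ⟨by simp, by simp, by simp⟩

lemma IsFlow.add {T : Finset (Sym2 V)} {g g' : V → V → A} {b b' : V → A} (h : IsFlow T g b)
    (h' : IsFlow T g' b') : IsFlow T (g + g') (b + b') := by
  refine ⟨fun u v => ?_, fun u v huv => ?_, fun u => ?_⟩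
  · simp only [Pi.add_apply]; rw [h.antisymm u v, h'.antisymm u v]; abel
  · by_contra hT
    have h1 : g u v = 0 := by by_contra h1; exact hT (h.supp u v h1)
    have h2 : g' u v = 0 := by by_contra h1; exact hT (h'.supp u v h1)
    exact huv (by simp [h1, h2])
  · simp [Finset.sum_add_distrib, h.bdry, h'.bdry]

lemma IsFlow.neg {T : Finset (Sym2 V)} {g : V → V → A} {b : V → A} (h : IsFlow T g b) :
    IsFlow T (-g) (-b) := by
  refine ⟨fun u v => ?_, fun u v huv => h.supp u v (by simpa using huv), fun u => ?_⟩
  · simp only [Pi.neg_apply]; rw [h.antisymm u v]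
  · simp [h.bdry]

lemma IsFlow.mono {T T' : Finset (Sym2 V)} {g : V → V → A} {b : V → A} (h : IsFlow T g b)
    (hT : T ⊆ T') : IsFlow T' g b := ⟨h.antisymm, fun u v huv => hT (h.supp u v huv), h.bdry⟩

lemma IsFlow.eq_zero {T : Finset (Sym2 V)} {g : V → V → A} {b : V → A} (h : IsFlow T g b)
    {u v : V} (huv : s(u, v) ∉ T) : g u v = 0 := by
  by_contra h1; exact huv (h.supp u v h1)

/-- On a loopless graph the two ends of an edge cancel in the total boundary of a flow. -/
lemma IsFlow.sum_eq_zero {T : Finset (Sym2 V)} {g : V → V → A} {b : V → A} (h : IsFlow T g b)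
    (hT : ∀ a, s(a, a) ∉ T) : ∑ u, b u = 0 := by
  simp only [← h.bdry]
  rw [← Finset.sum_product']
  refine Finset.sum_involution (fun p _ => (p.2, p.1)) ?_ ?_ ?_ ?_
  · intro p _; rw [h.antisymm p.1 p.2]; simp
  · rintro ⟨u, v⟩ _ hne he
    have h1 : v = u := congrArg Prod.fst he
    subst h1
    exact hT _ (h.supp _ _ hne)
  · simp
  · simp

variable [DecidableEq V]

/-- The value `c` sent along the single edge from `a` to `b`. -/
def edgeFlow (a b : V) (c : A) : V → V → A := fun u v =>
  (if u = a ∧ v = b then c else 0) - (if u = b ∧ v = a then c else 0)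

lemma edgeFlow_isFlow (a b : V) (c : A) :
    IsFlow {s(a, b)} (edgeFlow a b c) (Pi.single a c - Pi.single b c) := by
  refine ⟨fun u v => ?_, fun u v huv => ?_, fun u => ?_⟩
  · simp only [edgeFlow, neg_sub, and_comm]
  · by_contra h
    simp only [Finset.mem_singleton, Sym2.eq_iff, not_or] at h
    exact huv (by simp only [edgeFlow, if_neg h.1, if_neg h.2, sub_zero])
  · simp only [edgeFlow, Finset.sum_sub_distrib, ite_and, Finset.sum_ite_irrel,
      Finset.sum_ite_eq', Finset.mem_univ, if_true, Finset.sum_const_zero, Pi.sub_apply,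
      Pi.single_apply]

lemma Linked.exists_flow {T : Finset (Sym2 V)} {x y : V} (h : Linked T x y) (c : A) :
    ∃ g : V → V → A, IsFlow T g (Pi.single x c - Pi.single y c) := by
  induction h with
  | rel a b hab =>
    exact ⟨_, (edgeFlow_isFlow a b c).mono (Finset.singleton_subset_iff.2 hab)⟩
  | refl a => exact ⟨0, by rw [sub_self]; exact .zero T⟩
  | symm a b _ ih =>
    obtain ⟨g, hg⟩ := ih
    exact ⟨-g, by rw [← neg_sub]; exact hg.neg⟩
  | trans a b d _ _ ih1 ih2 =>
    obtain ⟨g1, hg1⟩ := ih1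
    obtain ⟨g2, hg2⟩ := ih2
    refine ⟨g1 + g2, ?_⟩
    rw [← sub_add_sub_cancel _ (Pi.single b c) _]
    exact hg1.add hg2

/-- On a connected graph every zero-sum boundary is realised by a flow (possibly with zeros). -/
lemma Spans.exists_flow {T : Finset (Sym2 V)} {X : Finset V} (h : Spans T X) (b : V → A)
    (hb : ∀ u, u ∉ X → b u = 0) (hsum : ∑ u ∈ X, b u = 0) : ∃ g : V → V → A, IsFlow T g b := by
  rcases X.eq_empty_or_nonempty with rfl | ⟨r, hr⟩
  · exact ⟨0, by rw [show b = 0 from funext fun u => hb u (by simp)]; exact .zero T⟩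
  · have key : ∀ Y ⊆ X, ∃ g : V → V → A,
        IsFlow T g (fun u => (if u ∈ Y then b u else 0) - if u = r then ∑ x ∈ Y, b x else 0) := by
      intro Y
      induction Y using Finset.induction_on with
      | empty =>
        intro _
        refine ⟨0, ?_⟩
        convert IsFlow.zero (A := A) T using 1
        ext; simp
      | insert a Y ha ih =>
        intro hY
        obtain ⟨g, hg⟩ := ih ((Finset.subset_insert _ _).trans hY)
        obtain ⟨g', hg'⟩ := (h a (hY (Finset.mem_insert_self _ _)) r hr).exists_flow (b a)
        refine ⟨g + g', ?_⟩
        convert hg.add hg' using 1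
        ext u
        simp only [Pi.add_apply, Pi.sub_apply, Pi.single_apply, Finset.sum_insert ha,
          Finset.mem_insert]
        by_cases h1 : u = a
        · subst h1; simp only [ha, true_or, if_true, if_false]; split_ifs <;> abel
        · simp only [h1, false_or, if_false]; split_ifs <;> abel
    obtain ⟨g, hg⟩ := key X subset_rfl
    refine ⟨g, ?_⟩
    convert hg using 1
    ext u
    by_cases hu : u ∈ X
    · simp [hu, hsum]
    · simp [hu, hsum, hb u hu]

/-- The flow over `ℤ₂` with value `1` on the edges of `J`. -/
def ind (J : Finset (Sym2 V)) : V → V → ZMod 2 := fun u v => if s(u, v) ∈ J then 1 else 0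

lemma ind_isFlow (J : Finset (Sym2 V)) : IsFlow J (ind J) (fun u => ∑ v, ind J u v) := by
  refine ⟨fun u v => ?_, fun u v huv => ?_, fun u => rfl⟩
  · rw [ZMod.neg_eq_self_mod_two, ind, ind, Sym2.eq_swap]
  · by_contra h; exact huv (if_neg h)

lemma zmod_two_eq {a : ZMod 2} (h : a ≠ 0) : a = 1 := by revert h; revert a; decide

/-- A flow over `ℤ₂` is the indicator of its support. -/
lemma IsFlow.exists_ind {E : Finset (Sym2 V)} {j : V → V → ZMod 2} {γ : V → ZMod 2}
    (h : IsFlow E j γ) : ∃ J ⊆ E, (∀ u v, s(u, v) ∈ J ↔ j u v ≠ 0) ∧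
      ∀ u, ∑ v, ind J u v = γ u := by
  have hsw : ∀ u v, j u v = j v u := fun u v => by
    rw [h.antisymm u v, ZMod.neg_eq_self_mod_two]
  have hJ : ∀ u v, s(u, v) ∈ E.filter (fun e => ∃ a b, e = s(a, b) ∧ j a b ≠ 0) ↔ j u v ≠ 0 := by
    intro u v
    rw [Finset.mem_filter]
    constructor
    · rintro ⟨_, a, b, hab, hj⟩
      rcases Sym2.eq_iff.1 hab with ⟨rfl, rfl⟩ | ⟨rfl, rfl⟩
      · exact hj
      · rwa [hsw]
    · intro hj
      exact ⟨h.supp _ _ hj, u, v, rfl, hj⟩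
  refine ⟨_, Finset.filter_subset _ _, hJ, fun u => ?_⟩
  rw [← h.bdry u]
  refine Finset.sum_congr rfl fun v _ => ?_
  by_cases hj : j u v = 0
  · rw [ind, if_neg (fun h => (hJ u v).1 h hj), hj]
  · rw [ind, if_pos ((hJ u v).2 hj), zmod_two_eq hj]

/-- A connected graph with a packing in which `v` has degree at least two is collapsible in the
sense of Catlin: every even set is the set of odd-degree vertices of a connected spanning
subgraph `J`. The complement of `J` is first sought inside `T₁`; if it then contains all edges at
`v`, it is changed along a cycle through `v` and one edge of `T₂`. -/
lemma Packing.exists_connected_join {E : Finset (Sym2 V)} {X : Finset V} {v : V}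
    {T₁ T₂ : Finset (Sym2 V)} (h : Packing E X v T₁ T₂) (hEX : E ⊆ X.sym2)
    (hl : ∀ a, s(a, a) ∉ E) {y₁ y₂ : V} (hy : y₁ ≠ y₂) (hy₁ : s(v, y₁) ∈ E) (hy₂ : s(v, y₂) ∈ E)
    (γ : V → ZMod 2) (hγ : ∀ u, u ∉ X → γ u = 0) (hsum : ∑ u ∈ X, γ u = 0) :
    ∃ J ⊆ E, Spans J X ∧ ∀ u, ∑ w, ind J u w = γ u := by
  have hvX := h.mem
  have h1E : T₁ ⊆ E := h.union ▸ Finset.subset_union_left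
  have h2E : T₂ ⊆ E := h.union ▸ Finset.subset_union_right
  have hvy : ∀ y, s(v, y) ∈ E → s(v, y) ∈ T₁ ∧ y ∈ X.erase v := by
    intro y hy
    refine ⟨?_, Finset.mem_erase.2 ⟨?_, (Finset.mk_mem_sym2_iff.1 (hEX hy)).2⟩⟩
    · rw [← h.union, Finset.mem_union] at hy
      exact hy.resolve_right fun h2 => h.avoid _ h2 (Sym2.mem_mk_left _ _)
    · rintro rfl; exact hl _ hy
  -- `s` is supported on `T₁` and has the boundary of the complement of the desired `J`
  have hsE := ind_isFlow E
  have hbE : ∀ u, u ∉ X → ∑ w, ind E u w = 0 := by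
    intro u hu
    refine Finset.sum_eq_zero fun w _ => if_neg fun hw => hu ?_
    exact (Finset.mk_mem_sym2_iff.1 (hEX hw)).1
  have hsumE : ∑ u ∈ X, ∑ w, ind E u w = 0 := by
    rw [← hsE.sum_eq_zero hl]
    exact Finset.sum_subset (Finset.subset_univ _) fun u _ hu => hbE u hu
  obtain ⟨s, hs⟩ := h.spans₁.exists_flow (fun u => (∑ w, ind E u w) - γ u)
    (fun u hu => by simp [hbE u hu, hγ u hu]) (by rw [Finset.sum_sub_distrib, hsumE, hsum, sub_zero])
  -- it suffices to find such an `s` on `E` with connected zero set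
  suffices hmain : ∃ s' : V → V → ZMod 2, IsFlow E s' (fun u => (∑ w, ind E u w) - γ u) ∧
      ∀ x ∈ X, ∀ Z : Finset (Sym2 V), (∀ a b, s(a, b) ∈ E → s' a b = 0 → s(a, b) ∈ Z) →
        Linked Z x v by
    obtain ⟨s', hs', hconn⟩ := hmain
    have hj : IsFlow E (ind E + -s') γ := by
      convert hsE.add hs'.neg using 1
      ext u; simp
    obtain ⟨J, hJE, hJ, hJb⟩ := hj.exists_ind
    refine ⟨J, hJE, Spans.of_center (c := v) fun x hx => hconn x hx J ?_, hJb⟩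
    intro a b hab h0
    rw [hJ]
    simp [ind, hab, h0]
  by_cases hgood : ∃ y, s(v, y) ∈ E ∧ s v y = 0
  · obtain ⟨y, hyE, hy0⟩ := hgood
    refine ⟨s, hs.mono h1E, fun x hx Z hZ => ?_⟩
    have hyv : Linked Z y v := (Linked.edge (hZ _ _ hyE hy0)).symm
    by_cases hxv : x = v
    · rw [hxv]; exact .refl _ _
    · refine Linked.trans (Linked.mono (h.spans₂ x (Finset.mem_erase.2 ⟨hxv, hx⟩) y
        (hvy y hyE).2) ?_) hyv
      intro e he
      induction e with
      | h a b => exact hZ a b (h2E he) (hs.eq_zero (Finset.disjoint_right.1 h.disj he))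
  · push Not at hgood
    -- every vertex is joined, in `T₁` without `v`, to a neighbour `φ p` of `v`
    have hφex : ∀ p ∈ X.erase v, ∃ y, s(v, y) ∈ E ∧ Linked (edgesOff T₁ v) y p := by
      intro p hp
      refine ((h.spans₁ v hvX p (Finset.mem_of_mem_erase hp)).closed
        (fun z => z = v ∨ ∃ y, s(v, y) ∈ E ∧ Linked (edgesOff T₁ v) y z) ?_
        (Or.inl rfl)).resolve_left (Finset.ne_of_mem_erase hp)
      rintro a b hab (rfl | ⟨y, hyE, hya⟩)
      · exact Or.inr ⟨b, h1E hab, .refl _ _⟩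
      · by_cases hbv : b = v
        · exact Or.inl hbv
        · by_cases hav : a = v
          · subst hav
            exact Or.inr ⟨b, h1E hab, .refl _ _⟩
          · refine Or.inr ⟨y, hyE, hya.trans (.edge (Finset.mem_filter.2 ⟨hab, ?_⟩))⟩
            rw [Sym2.mem_iff]; rintro (h | h)
            · exact hav h.symm
            · exact hbv h.symm
    have hφex' : ∀ p, ∃ y, p ∈ X.erase v →
        s(v, y) ∈ E ∧ Linked (edgesOff T₁ v) y p ∧ (s(v, p) ∈ E → y = p) := by
      intro p
      by_cases hpE : s(v, p) ∈ E
      · exact ⟨p, fun _ => ⟨hpE, .refl _ _, fun _ => rfl⟩⟩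
      · by_cases hp : p ∈ X.erase v
        · obtain ⟨y, h1, h2⟩ := hφex p hp
          exact ⟨y, fun _ => ⟨h1, h2, fun h => absurd h hpE⟩⟩
        · exact ⟨p, fun h => absurd h hp⟩
    choose φ hφ using hφex'
    obtain ⟨T, hT2, hTs, hTb⟩ := exists_minimal_spans h.spans₂
    have hTX : ∀ a b, s(a, b) ∈ T → a ∈ X.erase v ∧ b ∈ X.erase v := by
      intro a b hab
      have h1 := Finset.mk_mem_sym2_iff.1 (hEX (h2E (hT2 hab)))
      have h2 := h.avoid _ (hT2 hab)
      rw [Sym2.mem_iff, not_or] at h2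
      exact ⟨Finset.mem_erase.2 ⟨Ne.symm h2.1, h1.1⟩, Finset.mem_erase.2 ⟨Ne.symm h2.2, h1.2⟩⟩
    obtain ⟨p, q, hpq, hp, hq⟩ := exists_separating_edge hTs hTX hTb φ
      (fun x hx => (hvy _ (hφ x hx).1).2) (hvy _ hy₁).2 (hvy _ hy₂).2 hy
      ((hφ _ (hvy _ hy₁).2).2.2 hy₁) ((hφ _ (hvy _ hy₂).2).2.2 hy₂)
    obtain ⟨hpX, hqX⟩ := hTX p q hpq
    have hpqb := hTb p q hpq
    obtain ⟨hφpE, hφpl, -⟩ := hφ p hpX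
    obtain ⟨hφqE, hφql, -⟩ := hφ q hqX
    have hφne : φ p ≠ φ q := fun he => hpqb (hp.trans (he ▸ hq.symm))
    -- the cycle `v, φ p, …, p, q, …, φ q, v`
    obtain ⟨c₁, hc₁⟩ := hφpl.exists_flow (1 : ZMod 2)
    obtain ⟨c₂, hc₂⟩ := hφql.symm.exists_flow (1 : ZMod 2)
    have hoffE : edgesOff T₁ v ⊆ E := (Finset.filter_subset _ _).trans h1E
    have hpqE : s(p, q) ∈ E := h2E (hT2 hpq)
    have hcyc := (((((edgeFlow_isFlow v (φ p) (1 : ZMod 2)).mono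
      (Finset.singleton_subset_iff.2 hφpE)).add (hc₁.mono hoffE)).add
      ((edgeFlow_isFlow p q (1 : ZMod 2)).mono (Finset.singleton_subset_iff.2 hpqE))).add
      (hc₂.mono hoffE)).add ((edgeFlow_isFlow (φ q) v (1 : ZMod 2)).mono
      (Finset.singleton_subset_iff.2 (by rw [Sym2.eq_swap]; exact hφqE)))
    have hs' := (hs.mono h1E).add hcyc
    have hvoff : ∀ y, s(v, y) ∉ edgesOff T₁ v := fun y hy =>
      (Finset.mem_filter.1 hy).2 (Sym2.mem_mk_left _ _)
    have hvp : v ≠ p := (Finset.ne_of_mem_erase hpX).symm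
    have hvq : v ≠ q := (Finset.ne_of_mem_erase hqX).symm
    have hvφp : v ≠ φ p := fun he => hl v (by rw [← he] at hφpE; exact hφpE)
    have hvφq : v ≠ φ q := fun he => hl v (by rw [← he] at hφqE; exact hφqE)
    refine ⟨_, by convert hs' using 1; ext u; simp only [Pi.add_apply, Pi.sub_apply]; ring, ?_⟩
    intro x hx Z hZ
    have hZp : Linked Z (φ p) v := by
      refine (Linked.edge (hZ v (φ p) hφpE ?_)).symm
      simp only [Pi.add_apply, hc₁.eq_zero (hvoff _), hc₂.eq_zero (hvoff _),
        zmod_two_eq (hgood _ hφpE), edgeFlow]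
      simp [hvp, hvq, hvφp, hvφq, hφne]
      decide
    have hZq : Linked Z (φ q) v := by
      refine (Linked.edge (hZ v (φ q) hφqE ?_)).symm
      simp only [Pi.add_apply, hc₁.eq_zero (hvoff _), hc₂.eq_zero (hvoff _),
        zmod_two_eq (hgood _ hφqE), edgeFlow]
      simp [hvp, hvq, hvφp, hvφq, hφne.symm]
      decide
    have hTZ : T.erase s(p, q) ⊆ Z := by
      intro e he
      induction e with
      | h a b =>
        obtain ⟨hne, hab⟩ := Finset.mem_erase.1 he
        have hab1 : s(a, b) ∉ T₁ := Finset.disjoint_right.1 h.disj (hT2 hab)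
        have hoff : s(a, b) ∉ edgesOff T₁ v := fun hm => hab1 (Finset.mem_filter.1 hm).1
        have hva : ∀ y, s(v, y) ∈ E → s(a, b) ∉ ({s(v, y)} : Finset (Sym2 V)) := by
          intro y hy he
          rw [Finset.mem_singleton] at he
          exact h.avoid _ (hT2 hab) (by rw [he]; exact Sym2.mem_mk_left _ _)
        have hz : edgeFlow (φ q) v (1 : ZMod 2) a b = 0 := by
          refine (edgeFlow_isFlow (φ q) v (1 : ZMod 2)).eq_zero ?_
          rw [Sym2.eq_swap (a := φ q)]
          exact hva _ hφqE
        refine hZ a b (h2E (hT2 hab)) ?_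
        simp only [Pi.add_apply, hs.eq_zero hab1, hc₁.eq_zero hoff, hc₂.eq_zero hoff,
          (edgeFlow_isFlow v (φ p) (1 : ZMod 2)).eq_zero (hva _ hφpE),
          hz,
          (edgeFlow_isFlow p q (1 : ZMod 2)).eq_zero (by simpa using hne), add_zero]
    by_cases hxv : x = v
    · rw [hxv]; exact .refl _ _
    · have hxX : x ∈ X.erase v := Finset.mem_erase.2 ⟨hxv, hx⟩
      rcases (hTs p hpX x hxX).erase_or (q := q) with hl | hl
      · exact ((hl.symm.trans hp).mono hTZ).trans hZp
      · exact ((hl.symm.trans hq).mono hTZ).trans hZq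

end Flows

/-! ### Nowhere-zero flows in Laman graphs -/

section Extension

variable {V : Type} [Fintype V] {A : Type} [AddCommGroup A]

lemma IsFlow.map {B : Type} [AddCommGroup B] {T : Finset (Sym2 V)} {g : V → V → A} {b : V → A}
    (h : IsFlow T g b) (φ : A →+ B) : IsFlow T (fun u v => φ (g u v)) (fun u => φ (b u)) := by
  refine ⟨fun u v => ?_, fun u v huv => h.supp u v fun h0 => huv ?_, fun u => ?_⟩
  · rw [h.antisymm u v, map_neg]
  · rw [h0, map_zero]
  · rw [← h.bdry u, map_sum]

/-- Any assignment of values to edges becomes antisymmetric once the edges are oriented. -/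
lemma exists_antisymm (val : Sym2 V → A) : ∃ g : V → V → A, (∀ u v, g u v = - g v u) ∧
    (∀ u, g u u = 0) ∧ ∀ u v, u ≠ v → g u v = val s(u, v) ∨ g u v = - val s(u, v) := by
  let e := Fintype.equivFin V
  refine ⟨fun u v => (if e u < e v then val s(u, v) else 0) - (if e v < e u then val s(u, v) else 0),
    fun u v => ?_, fun u => ?_, fun u v huv => ?_⟩
  · simp only [neg_sub, Sym2.eq_swap (a := u)]
  · simp
  · rcases lt_or_gt_of_ne (e.injective.ne huv) with h | h
    · exact Or.inl (by simp [h, h.not_gt])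
    · exact Or.inr (by simp [h, h.not_gt])

variable [DecidableEq V]

/-- Let `π : A → ℤ₂` be onto with nonzero kernel. Given a connected spanning subgraph `J` whose
odd-degree vertices are prescribed by `π ∘ b`, first send a lift `t` of `1` along the edges of `J`
and a nonzero `k ∈ ker π` along the other edges. The remaining boundary lies in `ker π` and is
corrected by a `ker π`-flow inside `J`, which does not affect the values modulo `ker π`. -/
lemma Spans.exists_nz_flow {J E : Finset (Sym2 V)} {Y : Finset V} (hJ : Spans J Y) (hJE : J ⊆ E)
    (hEY : E ⊆ Y.sym2) (hl : ∀ a, s(a, a) ∉ E) (π : A →+ ZMod 2) {t k : A} (ht : π t = 1)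
    (hk : π k = 0) (hk0 : k ≠ 0) (b : V → A) (hb : ∀ u, u ∉ Y → b u = 0)
    (hsum : ∑ u ∈ Y, b u = 0) (hJb : ∀ u, ∑ w, ind J u w = π (b u)) :
    ∃ g : V → V → A, IsFlow E g b ∧ ∀ u v, s(u, v) ∈ E → g u v ≠ 0 := by
  obtain ⟨g₀, hanti, hdiag, hval⟩ :=
    exists_antisymm (V := V) (fun e => if e ∈ J then t else if e ∈ E then k else 0)
  have hne : ∀ {u v : V}, s(u, v) ∈ E → u ≠ v := by rintro u _ h rfl; exact hl _ h
  have hg₀ : IsFlow E g₀ (fun u => ∑ v, g₀ u v) := by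
    refine ⟨hanti, fun u v huv => ?_, fun u => rfl⟩
    by_contra hE
    have hJ' : s(u, v) ∉ J := fun h => hE (hJE h)
    have h1 : u ≠ v := by rintro rfl; exact huv (hdiag u)
    exact huv (by simpa [hE, hJ'] using hval u v h1)
  have hπ : ∀ u v, π (g₀ u v) = ind J u v := by
    intro u v
    by_cases hJ' : s(u, v) ∈ J
    · rcases hval u v (hne (hJE hJ')) with h | h <;> rw [h, if_pos hJ', ind, if_pos hJ']
      · exact ht
      · rw [map_neg, ht]; decide
    · rw [ind, if_neg hJ']
      by_cases hE : s(u, v) ∈ E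
      · rcases hval u v (hne hE) with h | h <;> simp [h, hJ', hE, hk]
      · rw [hg₀.eq_zero hE, map_zero]
  have hker : ∀ u, b u - ∑ v, g₀ u v ∈ π.ker := by
    intro u
    rw [AddMonoidHom.mem_ker, map_sub, map_sum, ← hJb u, sub_eq_zero]
    exact Finset.sum_congr rfl fun v _ => (hπ u v).symm
  have hoff : ∀ u, u ∉ Y → ∑ v, g₀ u v = 0 := fun u hu => Finset.sum_eq_zero fun v _ =>
    hg₀.eq_zero fun h => hu (Finset.mk_mem_sym2_iff.1 (hEY h)).1
  have hsum₀ : ∑ u ∈ Y, ∑ v, g₀ u v = 0 := by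
    rw [← hg₀.sum_eq_zero hl]
    exact Finset.sum_subset (Finset.subset_univ _) fun u _ hu => hoff u hu
  obtain ⟨g₁, hg₁⟩ := hJ.exists_flow (fun u => (⟨_, hker u⟩ : π.ker))
    (fun u hu => Subtype.ext (by simp [hb u hu, hoff u hu]))
    (Subtype.ext (by
      rw [AddSubgroup.val_finsetSum, Finset.sum_sub_distrib, hsum, hsum₀, sub_zero]; rfl))
  refine ⟨g₀ + fun u v => (g₁ u v : A), ?_, fun u v huv => ?_⟩
  · convert hg₀.add ((hg₁.map π.ker.subtype).mono hJE) using 1 <;> (ext; simp)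
  · simp only [Pi.add_apply]
    by_cases hJ' : s(u, v) ∈ J
    · intro h0
      have h1 := congrArg π h0
      rw [map_add, hπ, ind, if_pos hJ', map_zero, (g₁ u v).2, add_zero] at h1
      exact one_ne_zero h1
    · rw [hg₁.eq_zero hJ']
      rcases hval u v (hne huv) with h | h <;> simp [h, hJ', huv, hk0]

lemma Laman.exists_nz_flow {E₁ E : Finset (Sym2 V)} {Y : Finset V} (hL : Laman E₁ Y)
    (h3 : 3 ≤ Y.card) (hE : E₁ ⊆ E) (hEY : E ⊆ Y.sym2) (hl : ∀ a, s(a, a) ∉ E) (π : A →+ ZMod 2)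
    {t k : A} (ht : π t = 1) (hk : π k = 0) (hk0 : k ≠ 0) (b : V → A)
    (hb : ∀ u, u ∉ Y → b u = 0) (hsum : ∑ u ∈ Y, b u = 0) :
    ∃ g : V → V → A, IsFlow E g b ∧ ∀ u v, s(u, v) ∈ E → g u v ≠ 0 := by
  obtain ⟨v, T₁, T₂, hP⟩ := hL.exists_packing
  obtain ⟨N, -, hNc, hN⟩ := hL.exists_nbrs v
  obtain ⟨y₁, hy₁, y₂, hy₂, hy⟩ := Finset.one_lt_card.1
    (show 1 < N.card by rw [hNc]; exact hL.two_le_edgesAt h3 hP.mem)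
  obtain ⟨J, hJE, hJ, hJb⟩ := hP.exists_connected_join hL.sub hL.loopless hy ((hN _).1 hy₁)
    ((hN _).1 hy₂) (fun u => π (b u)) (fun u hu => by rw [hb u hu, map_zero])
    (by rw [← map_sum, hsum, map_zero])
  exact hJ.exists_nz_flow (hJE.trans hE) hEY hl π ht hk hk0 b hb hsum hJb

/-- Both groups of order four map onto `ℤ₂` with nontrivial kernel. -/
lemma exists_hom (hA : Nonempty (A ≃+ (ZMod 2 × ZMod 2)) ∨ Nonempty (A ≃+ ZMod 4)) :
    ∃ (π : A →+ ZMod 2) (t k : A), π t = 1 ∧ π k = 0 ∧ k ≠ 0 := by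
  rcases hA with ⟨⟨e⟩⟩ | ⟨⟨e⟩⟩
  · refine ⟨(AddMonoidHom.fst _ _).comp e.toAddMonoidHom, e.symm (1, 0), e.symm (0, 1), ?_, ?_, ?_⟩
    · simp
    · simp
    · simp
  · refine ⟨(ZMod.castHom (show 2 ∣ 4 by norm_num) (ZMod 2)).toAddMonoidHom.comp e.toAddMonoidHom,
      e.symm 1, e.symm 2, ?_, ?_, ?_⟩
    · simp
    · simp; decide
    · simp; decide

end Extension

/-! ### Dense graphs contain Laman graphs -/

section Density

variable {V : Type} [DecidableEq V]

/-- A graph with at least `2n - 3` edges on `n ≥ 3` vertices contains a Laman graph on at least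
three vertices: `2|Y| - 3` edges inside a smallest set `Y` which is that dense. -/
lemma exists_laman {E : Finset (Sym2 V)} {X : Finset V} (hl : ∀ a, s(a, a) ∉ E)
    (h3 : 3 ≤ X.card) (hd : 2 * X.card ≤ edgesIn E X + 3) :
    ∃ Y E₁, E₁ ⊆ E ∧ Laman E₁ Y ∧ 3 ≤ Y.card := by
  obtain ⟨Y, hY, hmin⟩ := (X.powerset.filter
    fun Y => 3 ≤ Y.card ∧ 2 * Y.card ≤ edgesIn E Y + 3).exists_min_image Finset.card
    ⟨X, by simp [h3, hd]⟩
  simp only [Finset.mem_filter, Finset.mem_powerset] at hY hmin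
  obtain ⟨hYX, hY3, hYd⟩ := hY
  obtain ⟨E₁, hE₁, hc⟩ := Finset.exists_subset_card_eq
    (show 2 * Y.card - 3 ≤ (E ∩ Y.sym2).card by rw [edgesIn] at hYd; omega)
  have hE₁E : E₁ ⊆ E := hE₁.trans Finset.inter_subset_left
  refine ⟨Y, E₁, hE₁E, ⟨hE₁.trans Finset.inter_subset_right, fun a h => hl a (hE₁E h), by omega,
    by omega, fun Z hZY hZ2 => ?_⟩, hY3⟩
  by_cases hZ : Z.card = 2
  · obtain ⟨a, b, hab, rfl⟩ := Finset.card_eq_two.1 hZ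
    have : edgesIn E₁ {a, b} ≤ ({s(a, b)} : Finset (Sym2 V)).card := by
      refine Finset.card_le_card fun e he => ?_
      rw [Finset.mem_inter] at he
      obtain ⟨he, hes⟩ := he
      induction e with
      | h c d =>
        have hcd : c ≠ d := by rintro rfl; exact hl _ (hE₁E he)
        rw [Finset.mk_mem_sym2_iff] at hes
        simp only [Finset.mem_insert, Finset.mem_singleton] at hes ⊢
        rw [Sym2.eq_iff]
        grind
    rw [Finset.card_singleton] at this
    omega
  · by_cases hZeq : Z = Y
    · have : edgesIn E₁ Z ≤ E₁.card := Finset.card_le_card Finset.inter_subset_left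
      subst hZeq
      omega
    · have hlt : Z.card < Y.card :=
        Finset.card_lt_card (Finset.ssubset_iff_subset_ne.2 ⟨hZY, hZeq⟩)
      have h1 : edgesIn E₁ Z ≤ edgesIn E Z :=
        Finset.card_le_card (Finset.inter_subset_inter_right hE₁E)
      by_contra hcon
      have := hmin Z ⟨hZY.trans hYX, by omega, by omega⟩
      omega

end Density

/-! ### Contracting a vertex set -/

section Contraction

variable {V : Type} {A : Type} [AddCommGroup A]

/-- The partition of the vertex set whose only nontrivial part is `Y`. -/
def contract (Y : Finset V) : Setoid V where
  r x y := x = y ∨ x ∈ Y ∧ y ∈ Y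
  iseqv := ⟨fun _ => Or.inl rfl, by grind, by grind⟩

lemma partsConnected_contract {G : SimpleGraph V} {Y : Finset V} {E : Finset (Sym2 V)}
    (hE : Spans E Y) (hEY : E ⊆ Y.sym2) (hEG : ∀ e ∈ E, e ∈ G.edgeSet) :
    PartsConnected G (contract Y) := by
  intro x
  have hx : (contract Y).r x x := Or.inl rfl
  rw [SimpleGraph.connected_iff]
  refine ⟨?_, ⟨⟨x, hx⟩⟩⟩
  rintro ⟨a, ha⟩ ⟨b, hb⟩
  have hab : a = b ∨ a ∈ Y ∧ b ∈ Y := (contract Y).trans' ha ((contract Y).symm' hb)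
  rcases hab with rfl | ⟨haY, hbY⟩
  · exact SimpleGraph.Reachable.refl _
  · have hstep : ∀ c d, s(c, d) ∈ E →
        (∃ hc : (contract Y).r c x, (G.induce {v | (contract Y).r v x}).Reachable
          ⟨a, ha⟩ ⟨c, hc⟩) →
        ∃ hd : (contract Y).r d x, (G.induce {v | (contract Y).r v x}).Reachable
          ⟨a, ha⟩ ⟨d, hd⟩ := by
      rintro c d hcd ⟨hc, hac⟩
      obtain ⟨hcY, hdY⟩ := Finset.mk_mem_sym2_iff.1 (hEY hcd)
      have hd : (contract Y).r d x := (contract Y).trans' (Or.inr ⟨hdY, hcY⟩) hc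
      refine ⟨hd, hac.trans (SimpleGraph.Adj.reachable ?_)⟩
      exact hEG _ hcd
    exact ((hE a haY b hbY).closed _ hstep ⟨ha, SimpleGraph.Reachable.refl _⟩).2

lemma contract_r {Y : Finset V} {x y : V} : (contract Y).r x y ↔ x = y ∨ x ∈ Y ∧ y ∈ Y := Iff.rfl

variable [Fintype V]

/-- The only connected graph on two vertices is `K₂`. -/
lemma nonempty_iso_of_card_eq_two {G : SimpleGraph V} (hG : G.Connected)
    (h2 : Fintype.card V = 2) : Nonempty (G ≃g (⊤ : SimpleGraph (Fin 2))) := by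
  have e : V ≃ Fin 2 := Fintype.equivFinOfCardEq h2
  refine ⟨⟨e, fun {a b} => ?_⟩⟩
  rw [SimpleGraph.top_adj, e.injective.ne_iff]
  refine ⟨fun hab => ?_, fun h => h.ne⟩
  obtain ⟨w⟩ := hG.preconnected a b
  cases w with
  | nil => exact absurd rfl hab
  | @cons _ c _ h _ =>
    have hc : c = b := by
      have h3 := h.ne
      apply e.injective
      have h1 := e.injective.ne h3
      have h2 := e.injective.ne hab
      omega
    exact hc ▸ h

variable [DecidableEq V]

/-- If every zero-sum boundary on `Y` has a nowhere-zero flow inside `Y`, then a nowhere-zero flow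
of the contraction of `Y` extends to the whole graph. -/
lemma hasNZFlow_of_contract {G : SimpleGraph V} {β : V → A} {Y : Finset V} (hY : Y.Nonempty)
    {E : Finset (Sym2 V)} (hE : ∀ u v, s(u, v) ∈ E ↔ G.Adj u v ∧ u ∈ Y ∧ v ∈ Y)
    (hflow : ∀ b : V → A, (∀ u, u ∉ Y → b u = 0) → ∑ u ∈ Y, b u = 0 →
      ∃ g : V → V → A, IsFlow E g b ∧ ∀ u v, s(u, v) ∈ E → g u v ≠ 0)
    (hq : HasNZFlowQuot G β (contract Y)) : HasNZFlow G β := by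
  obtain ⟨f, hanti, hne, hsum⟩ := hq
  let F : V → V → A := fun u v => if G.Adj u v ∧ ¬ (contract Y).r u v then f u v else 0
  have hFsum : ∀ u, ∑ v ∈ Finset.univ.filter (fun v => G.Adj u v ∧ ¬ (contract Y).r u v), f u v
      = ∑ v, F u v := fun u => Finset.sum_filter _ _
  simp only [hFsum] at hsum
  have hFanti : ∀ u v, F u v = - F v u := by
    intro u v
    by_cases h : G.Adj u v ∧ ¬ (contract Y).r u v
    · have h' : G.Adj v u ∧ ¬ (contract Y).r v u :=
        ⟨h.1.symm, fun hr => h.2 ((contract Y).symm' hr)⟩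
      simp only [F, if_pos h, if_pos h', hanti u v h.1 h.2]
    · have h' : ¬ (G.Adj v u ∧ ¬ (contract Y).r v u) :=
        fun h' => h ⟨h'.1.symm, fun hr => h'.2 ((contract Y).symm' hr)⟩
      simp only [F, if_neg h, if_neg h', neg_zero]
  have hout : ∀ u, u ∉ Y → ∑ v, F u v = β u := by
    intro u hu
    have hpart : Finset.univ.filter (fun v => (contract Y).r v u) = {u} := by
      ext v; simp [contract_r, hu]
    simpa only [hpart, Finset.sum_singleton] using hsum u
  obtain ⟨y, hy⟩ := hY
  have hin : ∑ u ∈ Y, ∑ v, F u v = ∑ u ∈ Y, β u := by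
    have hpart : Finset.univ.filter (fun v => (contract Y).r v y) = Y := by
      ext v
      simp only [Finset.mem_filter, Finset.mem_univ, true_and, contract_r, hy, and_true]
      exact ⟨fun h => h.elim (fun h => h ▸ hy) id, Or.inr⟩
    simpa only [hpart] using hsum y
  obtain ⟨g, hg, hg0⟩ := hflow (fun u => if u ∈ Y then β u - ∑ v, F u v else 0)
    (fun u hu => if_neg hu) (by
      rw [Finset.sum_congr rfl fun u hu => if_pos hu, Finset.sum_sub_distrib, hin, sub_self])
  refine ⟨fun u v => F u v + g u v, fun u v _ => ?_, fun u v huv => ?_, fun u => ?_⟩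
  · simp only [hFanti u v, hg.antisymm u v]; abel
  · by_cases hr : (contract Y).r u v
    · have hFz : F u v = 0 := if_neg fun h => h.2 hr
      simp only [hFz, zero_add]
      exact hg0 u v ((hE u v).2 ⟨huv, hr.resolve_left huv.ne⟩)
    · have hgz : g u v = 0 := hg.eq_zero fun h => hr (Or.inr ((hE u v).1 h).2)
      simp only [hgz, add_zero, F, if_pos (And.intro huv hr)]
      exact hne u v huv hr
  · rw [Finset.sum_filter_of_ne (p := fun v => G.Adj u v), Finset.sum_add_distrib, hg.bdry]
    · by_cases hu : u ∈ Y
      · simp [hu]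
      · simp [hu, hout u hu]
    · intro v _ hv
      by_contra hadj
      refine hv ?_
      beta_reduce
      rw [hg.eq_zero fun h => hadj ((hE u v).1 h).1, add_zero]
      exact if_neg fun h => hadj h.1

/-- A one-vertex bordered graph has the empty nowhere-zero flow. -/
lemma hasNZFlow_of_subsingleton [Subsingleton V] {G : SimpleGraph V} {β : V → A}
    (hβ : IsBoundary G β) : HasNZFlow G β := by
  have hadj : ∀ u v, ¬ G.Adj u v := fun u v h => h.ne (Subsingleton.elim u v)
  refine ⟨0, fun u v h => absurd h (hadj u v), fun u v h => absurd h (hadj u v), fun u => ?_⟩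
  have h1 := hβ u
  have h2 : Finset.univ.filter (fun v => G.Reachable v u) = {u} := by
    ext v
    simp [Subsingleton.elim v u]
  rw [h2, Finset.sum_singleton] at h1
  rw [h1]
  simp

end Contraction

/-- For `A` the Klein four-group `ℤ₂ × ℤ₂` or the cyclic group `ℤ₄`, every flow-critical
`A`-bordered graph `(G, β)` with `G` not isomorphic to `K₂` satisfies `|E(G)| ≤ 2|V(G)| − 4`. -/
theorem flow_critical_bordered_density_four (A : Type) [AddCommGroup A]
    (hA : Nonempty (A ≃+ (ZMod 2 × ZMod 2)) ∨ Nonempty (A ≃+ ZMod 4))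
    (V : Type) [Fintype V] [DecidableEq V]
    (G : SimpleGraph V) (β : V → A) (hcrit : FlowCritical G β)
    (hK2 : ¬ Nonempty (G ≃g (⊤ : SimpleGraph (Fin 2)))) :
    (Nat.card G.edgeSet : ℤ) ≤ 2 * Fintype.card V - 4 := by
  obtain ⟨hβ, hconn, hno, hpart⟩ := hcrit
  by_contra hlt
  let E : Finset (Sym2 V) := Finset.univ.filter (fun e => e ∈ G.edgeSet)
  have hEG : ∀ e, e ∈ E ↔ e ∈ G.edgeSet := fun e => by simp [E]
  have hl : ∀ a, s(a, a) ∉ E := fun a h => ((hEG _).1 h : G.Adj a a).ne rfl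
  have hcard : Nat.card G.edgeSet = E.card := by
    rw [Nat.card_eq_fintype_card, Fintype.card_subtype]
  have hn1 : Fintype.card V ≠ 1 := by
    intro h1
    have : Subsingleton V := Fintype.card_le_one_iff_subsingleton.1 h1.le
    exact hno (hasNZFlow_of_subsingleton hβ)
  have hn2 : Fintype.card V ≠ 2 := fun h2 => hK2 (nonempty_iso_of_card_eq_two hconn h2)
  have hn0 : 0 < Fintype.card V := Fintype.card_pos_iff.2 hconn.nonempty
  have hd : 2 * (Finset.univ : Finset V).card ≤ edgesIn E Finset.univ + 3 := by
    rw [edgesIn, Finset.sym2_univ, Finset.inter_univ, Finset.card_univ]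
    omega
  obtain ⟨Y, E₁, hE₁, hL, hY3⟩ := exists_laman hl (by rw [Finset.card_univ]; omega) hd
  obtain ⟨v, T₁, T₂, hP⟩ := hL.exists_packing
  obtain ⟨a, ha, b, hb, hab⟩ := Finset.one_lt_card.1 (show 1 < Y.card by omega)
  obtain ⟨π, t, k, ht, hk, hk0⟩ := exists_hom hA
  have hsp : Spans E₁ Y := fun x hx y hy =>
    (hP.spans₁ x hx y hy).mono (hP.union ▸ Finset.subset_union_left)
  refine hno (hasNZFlow_of_contract (Y := Y) ⟨a, ha⟩ (E := E ∩ Y.sym2) (fun u v => ?_) ?_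
    (hpart _ (partsConnected_contract hsp hL.sub fun e he => (hEG e).1 (hE₁ he))
      ⟨a, b, hab, Or.inr ⟨ha, hb⟩⟩))
  · rw [Finset.mem_inter, Finset.mk_mem_sym2_iff, hEG, SimpleGraph.mem_edgeSet]
  · exact hL.exists_nz_flow hY3 (Finset.subset_inter hE₁ hL.sub) Finset.inter_subset_right
      (fun a h => hl a (Finset.mem_inter.1 h).1) π ht hk hk0
end
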